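/- arXiv:math/9503214 — 2 statements merged into one kernel-verified Lean document; each statement's English description precedes it below -/
import Mathlib

section
/- If V is a closed convex set in ℝⁿ with γₙ(V) ≥ 1/2 and M is a linear subspace of ℝⁿ of dimension m, then γₘ(V ∩ M) ≥ 1/2, where V ∩ M is viewed as a subset of M ≅ ℝᵐ with its standard Gaussian measure. -/
/-!
Averaging over the orthogonal complement of `M`, some pair of opposite slices of `V` parallel to `M`
has total Gaussian measure at least one, and by convexity the midpoints between the two slices lie
in the central slice `V ∩ M`. It remains to know that two sets whose Gaussian measures add up to
more than one have a set of midpoints of measure at least one half; the strictness is obtained by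
first thickening `V` slightly (`central_slice_of_lt`, `central_slice`).

The midpoint statement (`measure_midpoint`) is a case of Ehrhard's inequality. Write `Φ` for the
Gaussian distribution function (`gPhi`) and `Ψ` for its inverse (`gPsi`). The functional form, with
`γ` the Gaussian measure, says that if `Ψ (f x) + Ψ (g y) ≤ 2 Ψ (h ((x + y) / 2))` for all `x`, `y`,
then `Ψ (∫ f dγ) + Ψ (∫ g dγ) ≤ 2 Ψ (∫ h dγ)`. It is applied to Lipschitz approximations of
indicators.

On the line the functional inequality is proved with Borell's semigroup argument. If `u` solves the
heat equation, then `U = Ψ u` satisfies, in the scale `σ = √t`, the equation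
`∂U = σ (U'' - U U'²)`. For the three flows started at `f`, `g`, `h`, the defect
`H ((x + y) / 2) - F x / 2 - G y / 2` is nonnegative at time zero and stays so by a parabolic maximum
principle (`max_principle`); at `σ = 1` this is the claim (`ehrhard_smooth`). Lipschitz functions
follow by smoothing (`ehrhard_line`), and higher dimensions by integrating out one coordinate at a
time (`ehrhard_pi`).
-/

open MeasureTheory Real

/-- Standard Gaussian measure on ℝⁿ (as Euclidean space). -/
noncomputable def stdGaussian (n : ℕ) : Measure (EuclideanSpace ℝ (Fin n)) :=
  volume.withDensity fun x => ENNReal.ofReal ((2 * π) ^ (-(n : ℝ) / 2) * Real.exp (-‖x‖ ^ 2 / 2))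

/-- Standard Gaussian measure on ℝ. -/
noncomputable def gaussian1 : Measure ℝ :=
  volume.withDensity fun x => ENNReal.ofReal ((2 * π) ^ (-(1 : ℝ) / 2) * Real.exp (-x ^ 2 / 2))

section

open Set Filter Topology ProbabilityTheory

/-! ### The Gaussian distribution function and its inverse -/

/-- Density of the standard Gaussian law on the line. -/
noncomputable def gphi (x : ℝ) : ℝ := gaussianPDFReal 0 1 x

/-- Distribution function of the standard Gaussian law on the line. -/
noncomputable def gPhi (x : ℝ) : ℝ := cdf (gaussianReal 0 1) x

/-- Inverse of `gPhi`; only its values on `(0, 1)` are meaningful. -/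
noncomputable def gPsi : ℝ → ℝ := Function.invFun gPhi

lemma gphi_eq (x : ℝ) : gphi x = (√(2 * π))⁻¹ * exp (-x ^ 2 / 2) := by
  simp [gphi, gaussianPDFReal]

lemma gphi_pos (x : ℝ) : 0 < gphi x := gaussianPDFReal_pos _ _ _ (by norm_num)

lemma gphi_cont : Continuous gphi := by
  have : gphi = fun x => (√(2 * π))⁻¹ * exp (-x ^ 2 / 2) := funext gphi_eq
  rw [this]; fun_prop

lemma gphi_deriv (x : ℝ) : HasDerivAt gphi (-x * gphi x) x := by
  have h : gphi = fun x => (√(2 * π))⁻¹ * exp (-x ^ 2 / 2) := funext gphi_eq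
  have h2 : HasDerivAt (fun x : ℝ => -x ^ 2 / 2) (-x) x := by
    have := ((hasDerivAt_pow 2 x).neg).div_const 2
    exact this.congr_deriv (by norm_num; ring)
  rw [gphi_eq, h]
  exact ((h2.exp).const_mul ((√(2 * π))⁻¹)).congr_deriv (by ring)

lemma gphi_integrable : Integrable gphi := integrable_gaussianPDFReal 0 1

lemma gphi_le_of_abs {x B : ℝ} (h : |x| ≤ B) : gphi B ≤ gphi x := by
  rw [gphi_eq, gphi_eq]
  have : x ^ 2 ≤ B ^ 2 := sq_le_sq' (by linarith [abs_le.1 h]) (abs_le.1 h).2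
  gcongr

lemma gPhi_eq (x : ℝ) : gPhi x = ∫ t in Iic x, gphi t := by
  rw [gPhi, cdf_eq_real, measureReal_def, gaussianReal_apply_eq_integral _ (by norm_num),
    ENNReal.toReal_ofReal]
  · rfl
  · exact setIntegral_nonneg measurableSet_Iic (fun t _ => (gphi_pos t).le)

lemma gPhi_deriv (x : ℝ) : HasDerivAt gPhi (gphi x) x := by
  have h : gPhi = fun x => (∫ t in Iic 0, gphi t) + ∫ t in (0:ℝ)..x, gphi t := by
    ext y
    rw [gPhi_eq, ← intervalIntegral.integral_Iic_sub_Iic gphi_integrable.integrableOn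
      gphi_integrable.integrableOn]
    ring
  rw [h]
  exact (intervalIntegral.integral_hasDerivAt_right (gphi_cont.intervalIntegrable _ _)
    (gphi_cont.stronglyMeasurableAtFilter _ _) gphi_cont.continuousAt).const_add _

lemma gPhi_cont : Continuous gPhi :=
  continuous_iff_continuousAt.2 fun x => (gPhi_deriv x).continuousAt

lemma gPhi_strictMono : StrictMono gPhi :=
  strictMono_of_hasDerivAt_pos gPhi_deriv gphi_pos

lemma gPhi_pos (x : ℝ) : 0 < gPhi x :=
  (cdf_nonneg _ (x - 1)).trans_lt (gPhi_strictMono (by linarith : x - 1 < x))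

lemma gPhi_lt_one (x : ℝ) : gPhi x < 1 :=
  (gPhi_strictMono (by linarith : x < x + 1)).trans_le (cdf_le_one _ (x + 1))

lemma gPhi_range : range gPhi = Ioo 0 1 := by
  ext p
  constructor
  · rintro ⟨x, rfl⟩; exact ⟨gPhi_pos x, gPhi_lt_one x⟩
  · rintro ⟨h0, h1⟩
    have hb := (tendsto_cdf_atBot (gaussianReal 0 1)).eventually (gt_mem_nhds h0)
    have ht := (tendsto_cdf_atTop (gaussianReal 0 1)).eventually (lt_mem_nhds h1)
    obtain ⟨a, ha⟩ := hb.exists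
    obtain ⟨b, hb⟩ := ht.exists
    exact mem_range_of_exists_le_of_exists_ge gPhi_cont ⟨a, le_of_lt ha⟩ ⟨b, le_of_lt hb⟩

lemma gPhi_gPsi {p : ℝ} (hp : p ∈ Ioo (0:ℝ) 1) : gPhi (gPsi p) = p :=
  Function.invFun_eq (by rw [← gPhi_range] at hp; exact hp)

lemma gPsi_gPhi (x : ℝ) : gPsi (gPhi x) = x := Function.leftInverse_invFun gPhi_strictMono.injective x

lemma gPsi_le {p q : ℝ} (hp : p ∈ Ioo (0:ℝ) 1) (hq : q ∈ Ioo (0:ℝ) 1) (h : p ≤ q) :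
    gPsi p ≤ gPsi q := by
  rw [← gPhi_strictMono.le_iff_le, gPhi_gPsi hp, gPhi_gPsi hq]; exact h

lemma gPsi_contAt {p : ℝ} (hp : p ∈ Ioo (0:ℝ) 1) : ContinuousAt gPsi p := by
  have he : IsOpenEmbedding gPhi := ⟨gPhi_strictMono.isEmbedding_of_ordConnected
    (by rw [gPhi_range]; exact ordConnected_Ioo), by rw [gPhi_range]; exact isOpen_Ioo⟩
  rw [← gPhi_gPsi hp, he.continuousAt_iff.symm]
  have : gPsi ∘ gPhi = id := funext gPsi_gPhi
  rw [this]; exact continuousAt_id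

lemma gPsi_deriv {p : ℝ} (hp : p ∈ Ioo (0:ℝ) 1) : HasDerivAt gPsi (gphi (gPsi p))⁻¹ p := by
  refine HasDerivAt.of_local_left_inverse (gPsi_contAt hp) (gPhi_deriv _) (gphi_pos _).ne' ?_
  filter_upwards [isOpen_Ioo.mem_nhds hp] with q hq using gPhi_gPsi hq

lemma gPhi_neg (x : ℝ) : gPhi (-x) = 1 - gPhi x := by
  have hd : ∀ x, HasDerivAt (fun x => gPhi (-x) + gPhi x) 0 x := by
    intro x
    have := ((gPhi_deriv (-x)).comp x (hasDerivAt_neg x)).add (gPhi_deriv x)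
    exact this.congr_deriv (by rw [gphi_eq, gphi_eq]; simp)
  have hc : ∀ y, gPhi (-y) + gPhi y = gPhi (-x) + gPhi x := fun y =>
    is_const_of_deriv_eq_zero (fun x => (hd x).differentiableAt) (fun x => (hd x).deriv) y x
  have hl : Tendsto (fun y => gPhi (-y) + gPhi y) atTop (𝓝 (0 + 1)) :=
    ((tendsto_cdf_atBot (gaussianReal 0 1)).comp tendsto_neg_atTop_atBot).add
      (tendsto_cdf_atTop (gaussianReal 0 1))
  have := tendsto_nhds_unique hl (by simp_rw [hc]; exact tendsto_const_nhds)
  linarith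

lemma gPsi_add_nonneg {p q : ℝ} (hp : p ∈ Ioo (0:ℝ) 1) (hq : q ∈ Ioo (0:ℝ) 1) (h : 1 ≤ p + q) :
    0 ≤ gPsi p + gPsi q := by
  have : -gPsi q ≤ gPsi p := by
    rw [← gPhi_strictMono.le_iff_le, gPhi_neg, gPhi_gPsi hp, gPhi_gPsi hq]; linarith
  linarith

lemma gPhi_zero : gPhi 0 = 1 / 2 := by
  have := gPhi_neg 0
  simp at this; linarith

/-! ### The heat flow -/

/-- Heat flow at time `σ ^ 2`: the mean of `f (x + σ Z)` for a standard Gaussian variable `Z`. -/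
noncomputable def heat (f : ℝ → ℝ) (σ x : ℝ) : ℝ := ∫ z, f (x + σ * z) ∂gaussianReal 0 1

lemma integrable_bdd {f : ℝ → ℝ} (hf : Continuous f) {C : ℝ} (hC : ∀ x, |f x| ≤ C) (σ x : ℝ) :
    Integrable (fun z => f (x + σ * z)) (gaussianReal 0 1) :=
  Integrable.of_bound (by fun_prop) C (ae_of_all _ fun z => hC _)

lemma integrable_abs_gaussian : Integrable (fun z : ℝ => |z|) (gaussianReal 0 1) :=
  ((memLp_one_iff_integrable.1 (memLp_id_gaussianReal' 1 (by norm_num))) :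
    Integrable id (gaussianReal 0 1)).abs

lemma heat_le {f : ℝ → ℝ} (hf : Continuous f) {C b : ℝ} (hC : ∀ x, |f x| ≤ C)
    (hb : ∀ x, f x ≤ b) (σ x : ℝ) : heat f σ x ≤ b := by
  have := integral_mono (integrable_bdd hf hC σ x) (integrable_const b) (fun z => hb (x + σ * z))
  simpa [heat] using this

lemma le_heat {f : ℝ → ℝ} (hf : Continuous f) {C b : ℝ} (hC : ∀ x, |f x| ≤ C)
    (hb : ∀ x, b ≤ f x) (σ x : ℝ) : b ≤ heat f σ x := by
  have := integral_mono (integrable_const b) (integrable_bdd hf hC σ x) (fun z => hb (x + σ * z))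
  simpa [heat] using this

lemma heat_cont {f : ℝ → ℝ} (hf : Continuous f) {C : ℝ} (hC : ∀ x, |f x| ≤ C) :
    Continuous (fun p : ℝ × ℝ => heat f p.1 p.2) := by
  unfold heat
  refine continuous_of_dominated (bound := fun _ => C) (fun p => ?_) (fun p => ?_)
    (integrable_const C) ?_
  · exact (integrable_bdd hf hC _ _).1
  · exact ae_of_all _ fun z => hC _
  · exact ae_of_all _ fun z => by fun_prop

lemma heat_dx {f f₁ : ℝ → ℝ} (hf : ∀ x, HasDerivAt f (f₁ x) x) (hf₁ : Continuous f₁)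
    {C : ℝ} (hC : ∀ x, |f x| ≤ C) (hC₁ : ∀ x, |f₁ x| ≤ C) (σ x : ℝ) :
    HasDerivAt (heat f σ) (heat f₁ σ x) x := by
  have hfc : Continuous f := continuous_iff_continuousAt.2 fun x => (hf x).continuousAt
  refine (hasDerivAt_integral_of_dominated_loc_of_deriv_le (bound := fun _ => C)
    (F := fun x z => f (x + σ * z)) (F' := fun x z => f₁ (x + σ * z)) univ_mem
    (Eventually.of_forall fun y => (integrable_bdd hfc hC σ y).1)
    (integrable_bdd hfc hC σ x) (integrable_bdd hf₁ hC₁ σ x).1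
    (ae_of_all _ fun z y _ => hC₁ _) (integrable_const C)
    (ae_of_all _ fun z y _ => ?_)).2
  exact (hf (y + σ * z)).comp_add_const y (σ * z)

/-- Gaussian integration by parts. -/
lemma gaussian_ibp {g g' : ℝ → ℝ} (hg : ∀ x, HasDerivAt g (g' x) x) (hg' : Continuous g')
    {C : ℝ} (hC : ∀ x, |g x| ≤ C) (hC' : ∀ x, |g' x| ≤ C) :
    ∫ z, g z * z ∂gaussianReal 0 1 = ∫ z, g' z ∂gaussianReal 0 1 := by
  have hgc : Continuous g := continuous_iff_continuousAt.2 fun x => (hg x).continuousAt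
  have hid : Integrable (fun z => z * gphi z) := by
    have h := integrable_mul_exp_neg_mul_sq (b := 1 / 2) (by norm_num)
    refine (h.const_mul ((√(2 * π))⁻¹)).congr (ae_of_all _ fun z => ?_)
    simp only [gphi_eq]
    rw [show -z ^ 2 / 2 = -(1 / 2) * z ^ 2 by ring]; ring
  have key := integral_mul_deriv_eq_deriv_mul_of_integrable (u := g) (u' := g') (v := gphi)
    (v' := fun z => -z * gphi z) (fun x _ => hg x) (fun x _ => gphi_deriv x)
    (by
      have := (hid.neg).bdd_mul (c := C) hgc.aestronglyMeasurable (ae_of_all _ hC)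
      refine this.congr (ae_of_all _ fun z => ?_)
      simp)
    (gphi_integrable.bdd_mul (c := C) hg'.aestronglyMeasurable (ae_of_all _ hC'))
    (gphi_integrable.bdd_mul (c := C) hgc.aestronglyMeasurable (ae_of_all _ hC))
  rw [integral_gaussianReal_eq_integral_smul (by norm_num),
    integral_gaussianReal_eq_integral_smul (by norm_num)]
  have e1 : ∀ z, gaussianPDFReal 0 1 z • (g z * z) = -(g z * (-z * gphi z)) := by
    intro z; simp [gphi]; ring
  have e2 : ∀ z, gaussianPDFReal 0 1 z • g' z = g' z * gphi z := by
    intro z; simp [gphi]; ring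
  simp_rw [e1, e2]
  rw [integral_neg, key, neg_neg]

/-- In the scale `σ`, with `σ ^ 2` the time, the heat equation reads `∂_σ u = σ ∂²u / ∂x²`. -/
lemma heat_dσ {f f₁ f₂ : ℝ → ℝ} (hf : ∀ x, HasDerivAt f (f₁ x) x)
    (hf₁ : ∀ x, HasDerivAt f₁ (f₂ x) x) (hf₂ : Continuous f₂)
    {C : ℝ} (hC : ∀ x, |f x| ≤ C) (hC₁ : ∀ x, |f₁ x| ≤ C) (hC₂ : ∀ x, |f₂ x| ≤ C) (σ x : ℝ) :
    HasDerivAt (fun σ => heat f σ x) (σ * heat f₂ σ x) σ := by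
  have hfc : Continuous f := continuous_iff_continuousAt.2 fun x => (hf x).continuousAt
  have hfc₁ : Continuous f₁ := continuous_iff_continuousAt.2 fun x => (hf₁ x).continuousAt
  have h := (hasDerivAt_integral_of_dominated_loc_of_deriv_le (bound := fun z => C * |z|)
    (μ := gaussianReal 0 1) (x₀ := σ)
    (F := fun σ z => f (x + σ * z)) (F' := fun σ z => f₁ (x + σ * z) * z) univ_mem
    (Eventually.of_forall fun s => (integrable_bdd hfc hC s x).1)
    (integrable_bdd hfc hC σ x) (Continuous.aestronglyMeasurable (by fun_prop))
    (ae_of_all _ fun z y _ => ?_) (integrable_abs_gaussian.const_mul C)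
    (ae_of_all _ fun z y _ => ?_)).2
  · refine h.congr_deriv ?_
    have hd : ∀ z, HasDerivAt (fun z => f₁ (x + σ * z)) (σ * f₂ (x + σ * z)) z := fun z => by
      have h1 : HasDerivAt (fun z => x + σ * z) σ z := by
        simpa using ((hasDerivAt_id z).const_mul σ).const_add x
      exact ((hf₁ (x + σ * z)).comp z h1).congr_deriv (by ring)
    rw [gaussian_ibp hd (by fun_prop) (C := max C (|σ| * C)) (fun z => (hC₁ _).trans (le_max_left _ _))
      (fun z => ?_), integral_const_mul]
    · rfl
    · rw [abs_mul]
      exact (mul_le_mul_of_nonneg_left (hC₂ _) (abs_nonneg _)).trans (le_max_right _ _)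
  · rw [norm_mul]
    exact mul_le_mul_of_nonneg_right (hC₁ _) (abs_nonneg _)
  · have h1 : HasDerivAt (fun s => x + s * z) z y := by
      simpa using ((hasDerivAt_id y).mul_const z).const_add x
    exact (hf (x + y * z)).comp y h1

/-- Regularity and evolution equation satisfied by `U = gPsi (heat f)`: `U₁` and `U₂` are the first
two space derivatives, and in the time scale `σ` the equation reads `∂U = σ (U₂ - U U₁²)`. -/
structure IsEhrhardFlow (U U₁ U₂ : ℝ → ℝ → ℝ) (B P : ℝ) : Prop where
  cont : Continuous (fun p : ℝ × ℝ => U p.1 p.2)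
  bound : ∀ σ x, |U σ x| ≤ B
  bound₁ : ∀ σ x, |U₁ σ x| ≤ P
  dx : ∀ σ x, HasDerivAt (U σ) (U₁ σ x) x
  dxx : ∀ σ x, HasDerivAt (U₁ σ) (U₂ σ x) x
  dσ : ∀ σ x, HasDerivAt (fun σ => U σ x) (σ * (U₂ σ x - U σ x * U₁ σ x ^ 2)) σ

/-- The heat flow of a `C²` function with values in a compact part of `(0, 1)` is an Ehrhard flow in
the coordinate `gPsi`: the nonlinear term comes from `gphi' = -x gphi`. -/
lemma heat_flow {f f₁ f₂ : ℝ → ℝ} (hf : ∀ x, HasDerivAt f (f₁ x) x)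
    (hf₁ : ∀ x, HasDerivAt f₁ (f₂ x) x) (hf₂ : Continuous f₂)
    {C : ℝ} (hC₁ : ∀ x, |f₁ x| ≤ C) (hC₂ : ∀ x, |f₂ x| ≤ C)
    {a b : ℝ} (ha : 0 < a) (hb : b < 1) (hfa : ∀ x, a ≤ f x) (hfb : ∀ x, f x ≤ b) :
    ∃ U₁ U₂ B P, IsEhrhardFlow (fun σ x => gPsi (heat f σ x)) U₁ U₂ B P := by
  have hfc : Continuous f := continuous_iff_continuousAt.2 fun x => (hf x).continuousAt
  have hfc₁ : Continuous f₁ := continuous_iff_continuousAt.2 fun x => (hf₁ x).continuousAt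
  have hC0 : 0 ≤ C := (abs_nonneg _).trans (hC₁ 0)
  have hC : ∀ x, |f x| ≤ 1 := fun x => abs_le.2 ⟨by linarith [hfa x], by linarith [hfb x]⟩
  have hD : ∀ x, |f x| ≤ 1 + C := fun x => (hC x).trans (by linarith)
  have hD₁ : ∀ x, |f₁ x| ≤ 1 + C := fun x => (hC₁ x).trans (by linarith)
  have hD₂ : ∀ x, |f₂ x| ≤ 1 + C := fun x => (hC₂ x).trans (by linarith)
  have hha := le_heat hfc hC hfa
  have hhb := heat_le hfc hC hfb
  have hI : ∀ σ x, heat f σ x ∈ Ioo (0:ℝ) 1 := fun σ x =>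
    ⟨ha.trans_le (hha σ x), (hhb σ x).trans_lt hb⟩
  have hab : a ≤ b := (hfa 0).trans (hfb 0)
  have haI : a ∈ Ioo (0:ℝ) 1 := ⟨ha, by linarith⟩
  have hbI : b ∈ Ioo (0:ℝ) 1 := ⟨by linarith, hb⟩
  set B := max |gPsi a| |gPsi b| with hB
  have hbd : ∀ σ x, |gPsi (heat f σ x)| ≤ B := fun σ x =>
    abs_le_max_abs_abs (gPsi_le haI (hI σ x) (hha σ x)) (gPsi_le (hI σ x) hbI (hhb σ x))
  have hdx : ∀ σ x, HasDerivAt (fun x => gPsi (heat f σ x))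
      (heat f₁ σ x / gphi (gPsi (heat f σ x))) x := fun σ x =>
    ((gPsi_deriv (hI σ x)).comp x (heat_dx hf hfc₁ hD hD₁ σ x)).congr_deriv (by
      rw [div_eq_inv_mul])
  refine ⟨fun σ x => heat f₁ σ x / gphi (gPsi (heat f σ x)),
    fun σ x => heat f₂ σ x / gphi (gPsi (heat f σ x)) + gPsi (heat f σ x) *
      (heat f₁ σ x / gphi (gPsi (heat f σ x))) ^ 2, B, C / gphi B, ?_, hbd, ?_, hdx, ?_, ?_⟩
  · refine continuous_iff_continuousAt.2 fun p => ?_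
    exact (gPsi_contAt (hI p.1 p.2)).comp (f := fun p : ℝ × ℝ => heat f p.1 p.2)
      (heat_cont hfc hC).continuousAt
  · intro σ x
    rw [abs_div, abs_of_pos (gphi_pos _)]
    have h1 : |heat f₁ σ x| ≤ C := abs_le.2
      ⟨le_heat hfc₁ hC₁ (fun x => (abs_le.1 (hC₁ x)).1) σ x,
        heat_le hfc₁ hC₁ (fun x => (abs_le.1 (hC₁ x)).2) σ x⟩
    exact div_le_div₀ hC0 h1 (gphi_pos _) (gphi_le_of_abs (hbd σ x))
  · intro σ x
    have h1 := (gphi_deriv (gPsi (heat f σ x))).comp x (hdx σ x)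
    have hne := (gphi_pos (gPsi (heat f σ x))).ne'
    refine ((heat_dx hf₁ hf₂ hD₁ hD₂ σ x).div h1 hne).congr_deriv ?_
    simp only [Function.comp]
    field_simp
    ring
  · intro σ x
    have hne := (gphi_pos (gPsi (heat f σ x))).ne'
    refine ((gPsi_deriv (hI σ x)).comp (h := fun σ => heat f σ x) σ
      (heat_dσ hf hf₁ hf₂ hD hD₁ hD₂ σ x)).congr_deriv ?_
    ring

/-! ### The maximum principle -/

lemma second_deriv_nonneg {b b₁ : ℝ → ℝ} {c s₀ : ℝ} (hb : ∀ s, HasDerivAt b (b₁ s) s)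
    (hb₁ : HasDerivAt b₁ c s₀) (hmin : IsLocalMin b s₀) : 0 ≤ c := by
  by_contra! hc
  have hd : deriv b = b₁ := funext fun s => (hb s).deriv
  have hmax : IsLocalMax b s₀ := isLocalMax_of_deriv_deriv_neg (by rw [hd, hb₁.deriv]; exact hc)
    (by rw [hmin.deriv_eq_zero]) (hb s₀).continuousAt
  -- A point that is both a local minimum and a local maximum has `b` constant nearby.
  have hconst : b =ᶠ[𝓝 s₀] fun _ => b s₀ := by
    filter_upwards [hmin, hmax] with s h1 h2 using le_antisymm h2 h1
  have h0 : b₁ =ᶠ[𝓝 s₀] fun _ => 0 := by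
    rw [← hd]
    filter_upwards [hconst.eventuallyEq_nhds] with s hs
    rw [hs.deriv_eq, deriv_const]
  have := hb₁.congr_of_eventuallyEq h0.symm
  have := this.unique (hasDerivAt_const s₀ (0:ℝ))
  linarith

lemma deriv_nonpos_of_left_min {c : ℝ → ℝ} {c' t₀ : ℝ} (ht : 0 < t₀) (hc : HasDerivAt c c' t₀)
    (hmin : ∀ t, 0 ≤ t → t ≤ t₀ → c t₀ ≤ c t) : c' ≤ 0 := by
  have h := (hasDerivWithinAt_iff_tendsto_slope' (s := Iio t₀) (by simp)).1 hc.hasDerivWithinAt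
  refine le_of_tendsto h ?_
  filter_upwards [self_mem_nhdsWithin, mem_nhdsWithin_of_mem_nhds (lt_mem_nhds ht)] with t h1 h2
  rw [slope_def_field]
  exact div_nonpos_of_nonneg_of_nonpos (by linarith [hmin t h2.le (le_of_lt h1)])
    (by linarith [mem_Iio.1 h1])

lemma IsEhrhardFlow.mono {U U₁ U₂ : ℝ → ℝ → ℝ} {B P B' P' : ℝ} (h : IsEhrhardFlow U U₁ U₂ B P)
    (hB : B ≤ B') (hP : P ≤ P') : IsEhrhardFlow U U₁ U₂ B' P' :=
  ⟨h.cont, fun σ x => (h.bound σ x).trans hB, fun σ x => (h.bound₁ σ x).trans hP, h.dx, h.dxx, h.dσ⟩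

/-- The contribution of the quadratic penalty to the gradient terms is `O(q)`. -/
lemma penalty_bound {B P q p x F : ℝ} (hB : 0 ≤ B) (hP : 0 ≤ P) (hq : 0 < q) (hq1 : q ≤ 1)
    (hp : |p| ≤ P) (hF : |F| ≤ B) (hx : q ^ 2 * x ^ 2 ≤ 4 * B) :
    -F * (2 * p * (q ^ 2 * x) + 2 * q ^ 4 * x ^ 2) ≤ q * (B * (2 * P * (1 + 4 * B) + 8 * B)) := by
  have h1 : |q * x| ≤ 1 + 4 * B := by
    refine abs_le_of_sq_le_sq ?_ (by positivity)
    nlinarith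
  have h2 : |2 * p * (q ^ 2 * x) + 2 * q ^ 4 * x ^ 2| ≤ q * (2 * P * (1 + 4 * B) + 8 * B) := by
    have e1 : |2 * p * (q ^ 2 * x)| ≤ q * (2 * P * (1 + 4 * B)) := by
      have : 2 * p * (q ^ 2 * x) = q * (2 * (p * (q * x))) := by ring
      rw [this, abs_mul, abs_of_pos hq, abs_mul, abs_mul, abs_two]
      have := mul_le_mul hp h1 (abs_nonneg _) hP
      nlinarith
    have e2 : |2 * q ^ 4 * x ^ 2| ≤ q * (8 * B) := by
      rw [abs_of_nonneg (by positivity)]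
      have h3 : q ^ 2 * (q ^ 2 * x ^ 2) ≤ q ^ 2 * (4 * B) := by gcongr
      have h4 : q ^ 2 * (4 * B) ≤ q * (4 * B) := by
        have : q ^ 2 ≤ q := by nlinarith
        gcongr
      nlinarith
    refine (abs_add_le _ _).trans ?_
    linarith
  calc -F * (2 * p * (q ^ 2 * x) + 2 * q ^ 4 * x ^ 2)
      ≤ |-F * (2 * p * (q ^ 2 * x) + 2 * q ^ 4 * x ^ 2)| := le_abs_self _
    _ = |F| * |2 * p * (q ^ 2 * x) + 2 * q ^ 4 * x ^ 2| := by rw [abs_mul, abs_neg]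
    _ ≤ B * (q * (2 * P * (1 + 4 * B) + 8 * B)) := mul_le_mul hF h2 (abs_nonneg _) hB
    _ = _ := by ring

/-- Parabolic maximum principle for the midpoint defect of three flows. At an interior negative
minimum of the defect the three gradients agree, the second derivative along the diagonal is
nonnegative, and the evolution equation then forces the time derivative of the defect to be
nonnegative. Adding `κ σ² / 2` makes this contradict minimality up to the given time, and adding
`q² (x² + y²) / 2` makes the minimum attained at the cost of errors of order `q`. -/
lemma max_principle {F F₁ F₂ G G₁ G₂ H H₁ H₂ : ℝ → ℝ → ℝ} {B P : ℝ}
    (hF : IsEhrhardFlow F F₁ F₂ B P) (hG : IsEhrhardFlow G G₁ G₂ B P)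
    (hH : IsEhrhardFlow H H₁ H₂ B P)
    (h0 : ∀ x y, F 0 x + G 0 y ≤ 2 * H 0 ((x + y) / 2)) (σ : ℝ) (hσ0 : 0 ≤ σ) (hσ1 : σ ≤ 1)
    (x y : ℝ) : F σ x + G σ y ≤ 2 * H σ ((x + y) / 2) := by
  by_contra! hneg
  have hB : 0 ≤ B := (abs_nonneg _).trans (hF.bound 0 0)
  have hP : 0 ≤ P := (abs_nonneg _).trans (hF.bound₁ 0 0)
  set κ := F σ x / 2 + G σ y / 2 - H σ ((x + y) / 2) with hκ
  have hκ0 : 0 < κ := by linarith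
  set K := 2 + 2 * (B * (2 * P * (1 + 4 * B) + 8 * B)) with hK
  have hK0 : 0 < K := by positivity
  set S := x ^ 2 + y ^ 2 with hS
  have hS0 : 0 ≤ S := by positivity
  obtain ⟨q, hq0, hq1, hqκ⟩ : ∃ q : ℝ, 0 < q ∧ q ≤ 1 ∧ q * (K + S + 1) ≤ κ := by
    refine ⟨min 1 (κ / (K + S + 1)), lt_min one_pos (by positivity), min_le_left _ _, ?_⟩
    have : min 1 (κ / (K + S + 1)) ≤ κ / (K + S + 1) := min_le_right _ _
    rwa [le_div_iff₀ (by positivity)] at this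
  have hq2 : q ^ 2 ≤ q := by nlinarith
  have hqS : q ^ 2 * S < κ := by nlinarith [mul_le_mul_of_nonneg_right hq2 hS0, mul_pos hq0 hK0]
  let W : ℝ × ℝ × ℝ → ℝ := fun r => H r.1 ((r.2.1 + r.2.2) / 2) - F r.1 r.2.1 / 2 - G r.1 r.2.2 / 2
    + κ * r.1 ^ 2 / 2 + q ^ 2 * (r.2.1 ^ 2 + r.2.2 ^ 2) / 2
  have hWdef : ∀ s x y, W (s, x, y) = H s ((x + y) / 2) - F s x / 2 - G s y / 2
    + κ * s ^ 2 / 2 + q ^ 2 * (x ^ 2 + y ^ 2) / 2 := fun _ _ _ => rfl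
  have hWcont : Continuous W := by
    have c1 : Continuous fun r : ℝ × ℝ × ℝ => H r.1 ((r.2.1 + r.2.2) / 2) :=
      hH.cont.comp (f := fun r : ℝ × ℝ × ℝ => (r.1, (r.2.1 + r.2.2) / 2)) (by fun_prop)
    have c2 : Continuous fun r : ℝ × ℝ × ℝ => F r.1 r.2.1 :=
      hF.cont.comp (f := fun r : ℝ × ℝ × ℝ => (r.1, r.2.1)) (by fun_prop)
    have c3 : Continuous fun r : ℝ × ℝ × ℝ => G r.1 r.2.2 :=
      hG.cont.comp (f := fun r : ℝ × ℝ × ℝ => (r.1, r.2.2)) (by fun_prop)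
    exact (((c1.sub (c2.div_const 2)).sub (c3.div_const 2)).add (by fun_prop)).add (by fun_prop)
  have hWneg : W (σ, x, y) < 0 := by
    rw [hWdef]
    have : κ * σ ^ 2 ≤ κ := by
      have : σ ^ 2 ≤ 1 := by nlinarith
      nlinarith
    have h1 : H σ ((x + y) / 2) - F σ x / 2 - G σ y / 2 = -κ := by rw [hκ]; ring
    rw [h1, ← hS]; linarith
  have hWlow : ∀ s x y, W (s, x, y) < 0 → q ^ 2 * (x ^ 2 + y ^ 2) ≤ 4 * B := by
    intro s x y hw
    rw [hWdef] at hw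
    have h1 := abs_le.1 (hH.bound s ((x + y) / 2))
    have h2 := abs_le.1 (hF.bound s x)
    have h3 := abs_le.1 (hG.bound s y)
    have : 0 ≤ κ * s ^ 2 := by positivity
    linarith
  have hWx : ∀ x : ℝ, q ^ 2 * x ^ 2 ≤ 4 * B → |x| ≤ (1 + 4 * B) / q := by
    intro x hx
    rw [le_div_iff₀ hq0]
    refine le_of_sq_le_sq (?_ : (|x| * q) ^ 2 ≤ _) (by positivity) |>.trans le_rfl
    rw [mul_pow, sq_abs]; nlinarith
  set R := (1 + 4 * B) / q with hR
  have hmem : ∀ s x y, 0 ≤ s → s ≤ 1 → W (s, x, y) < 0 →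
      (s, x, y) ∈ Icc (0:ℝ) 1 ×ˢ (Icc (-R) R ×ˢ Icc (-R) R) := by
    intro s x y h1 h2 hw
    have := hWlow s x y hw
    have hx := abs_le.1 (hWx x (by nlinarith [mul_nonneg (sq_nonneg q) (sq_nonneg y)]))
    have hy := abs_le.1 (hWx y (by nlinarith [mul_nonneg (sq_nonneg q) (sq_nonneg x)]))
    exact ⟨⟨h1, h2⟩, hx, hy⟩
  obtain ⟨⟨s, u, v⟩, hmemm, hmin⟩ := (isCompact_Icc.prod (isCompact_Icc.prod isCompact_Icc)).exists_isMinOn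
    ⟨_, hmem σ x y hσ0 hσ1 hWneg⟩ hWcont.continuousOn
  have hs0 : 0 ≤ s := hmemm.1.1
  have hs1 : s ≤ 1 := hmemm.1.2
  have hW0 : W (s, u, v) < 0 := (hmin (hmem σ x y hσ0 hσ1 hWneg)).trans_lt hWneg
  have hglob : ∀ s' u' v', 0 ≤ s' → s' ≤ 1 → W (s, u, v) ≤ W (s', u', v') := by
    intro s' u' v' h1 h2
    by_cases hw : W (s', u', v') < 0
    · exact hmin (hmem s' u' v' h1 h2 hw)
    · linarith
  have hspos : 0 < s := by
    rcases hs0.eq_or_lt with h | h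
    · exfalso
      rw [hWdef, ← h] at hW0
      have := h0 u v
      have : 0 ≤ q ^ 2 * (u ^ 2 + v ^ 2) := by positivity
      linarith
    · exact h
  have hD0 : H s ((u + v) / 2) - F s u / 2 - G s v / 2 < 0 := by
    rw [hWdef] at hW0
    have : 0 ≤ q ^ 2 * (u ^ 2 + v ^ 2) := by positivity
    have : 0 ≤ κ * s ^ 2 := by positivity
    linarith
  -- Stationarity in each space variable.
  have hdu : F₁ s u = H₁ s ((u + v) / 2) + 2 * q ^ 2 * u := by
    have hd : HasDerivAt (fun a => W (s, a, v))
        (H₁ s ((u + v) / 2) / 2 - F₁ s u / 2 + q ^ 2 * u) u := by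
      have i1 : HasDerivAt (fun a : ℝ => (a + v) / 2) (1 / 2) u :=
        ((hasDerivAt_id u).add_const v).div_const 2
      have a1 := (hH.dx s ((u + v) / 2)).comp u i1
      have a2 := (hF.dx s u).div_const 2
      have a3 := (((hasDerivAt_pow 2 u).add_const (v ^ 2)).const_mul (q ^ 2)).div_const 2
      exact ((((a1.sub a2).sub_const (G s v / 2)).add_const (κ * s ^ 2 / 2)).add a3).congr_deriv
        (by norm_num; ring)
    have := (IsLocalMin.hasDerivAt_eq_zero
      (Eventually.of_forall fun a => hglob s a v hs0 hs1) hd)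
    linarith
  have hdv : G₁ s v = H₁ s ((u + v) / 2) + 2 * q ^ 2 * v := by
    have hd : HasDerivAt (fun a => W (s, u, a))
        (H₁ s ((u + v) / 2) / 2 - G₁ s v / 2 + q ^ 2 * v) v := by
      have i1 : HasDerivAt (fun a : ℝ => (u + a) / 2) (1 / 2) v :=
        ((hasDerivAt_id v).const_add u).div_const 2
      have a1 := (hH.dx s ((u + v) / 2)).comp v i1
      have a2 := (hG.dx s v).div_const 2
      have a3 := (((hasDerivAt_pow 2 v).const_add (u ^ 2)).const_mul (q ^ 2)).div_const 2
      exact ((((a1.sub_const (F s u / 2)).sub a2).add_const (κ * s ^ 2 / 2)).add a3).congr_deriv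
        (by norm_num; ring)
    have := (IsLocalMin.hasDerivAt_eq_zero
      (Eventually.of_forall fun a => hglob s u a hs0 hs1) hd)
    linarith
  -- Second-order condition along the diagonal.
  have hsec : 0 ≤ H₂ s ((u + v) / 2) - F₂ s u / 2 - G₂ s v / 2 + 2 * q ^ 2 := by
    have i1 : ∀ a : ℝ, HasDerivAt (fun a : ℝ => (u + a + (v + a)) / 2) 1 a := fun a =>
      ((((hasDerivAt_id a).const_add u).add ((hasDerivAt_id a).const_add v)).div_const 2).congr_deriv
        (by norm_num)
    have i2 : ∀ c a : ℝ, HasDerivAt (fun a : ℝ => c + a) 1 a := fun c a =>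
      (hasDerivAt_id a).const_add c
    have hm : ((u + 0 + (v + 0)) / 2) = (u + v) / 2 := by ring
    refine second_deriv_nonneg (s₀ := 0) (b := fun a => W (s, u + a, v + a))
      (b₁ := fun a => H₁ s ((u + a + (v + a)) / 2) - F₁ s (u + a) / 2 - G₁ s (v + a) / 2
        + q ^ 2 * ((u + a) + (v + a))) ?_ ?_ ?_
    · intro a
      have a1 := (hH.dx s ((u + a + (v + a)) / 2)).comp a (i1 a)
      have a2 := ((hF.dx s (u + a)).comp a (i2 u a)).div_const 2
      have a3 := ((hG.dx s (v + a)).comp a (i2 v a)).div_const 2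
      have a4 := ((((i2 u a).pow 2).add ((i2 v a).pow 2)).const_mul (q ^ 2)).div_const 2
      exact ((((a1.sub a2).sub a3).add_const (κ * s ^ 2 / 2)).add a4).congr_deriv
        (by norm_num; ring)
    · have a1 := (hH.dxx s ((u + 0 + (v + 0)) / 2)).comp 0 (i1 0)
      have a2 := ((hF.dxx s (u + 0)).comp 0 (i2 u 0)).div_const 2
      have a3 := ((hG.dxx s (v + 0)).comp 0 (i2 v 0)).div_const 2
      have a4 := ((i2 u 0).add (i2 v 0)).const_mul (q ^ 2)
      exact (((a1.sub a2).sub a3).add a4).congr_deriv (by rw [hm]; simp; ring)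
    · refine Eventually.of_forall fun a => ?_
      simpa using hglob s (u + a) (v + a) hs0 hs1
  -- The time derivative is nonpositive; the common factor `s > 0` has been divided out.
  have htime : H₂ s ((u + v) / 2) - H s ((u + v) / 2) * H₁ s ((u + v) / 2) ^ 2
      - (F₂ s u - F s u * F₁ s u ^ 2) / 2 - (G₂ s v - G s v * G₁ s v ^ 2) / 2 + κ ≤ 0 := by
    have hd := ((((hH.dσ s ((u + v) / 2)).sub ((hF.dσ s u).div_const 2)).sub
      ((hG.dσ s v).div_const 2)).add (((hasDerivAt_pow 2 s).const_mul κ).div_const 2)).add_const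
      (q ^ 2 * (u ^ 2 + v ^ 2) / 2)
    have := deriv_nonpos_of_left_min hspos hd (fun t ht ht' => hglob t u v ht (ht'.trans hs1))
    refine le_of_mul_le_mul_left (le_of_eq_of_le ?_ (this.trans_eq (mul_zero s).symm)) hspos
    norm_num
    ring
  -- Replacing the gradients of `F` and `G` by that of `H`, the remaining quadratic term is
  -- `p² (H - F / 2 - G / 2) ≤ 0`, so `κ` is bounded by the penalty errors, against the choice of `q`.
  have hqq := hWlow s u v hW0
  rw [mul_add] at hqq
  have hu : q ^ 2 * u ^ 2 ≤ 4 * B := by linarith [mul_nonneg (sq_nonneg q) (sq_nonneg v)]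
  have hv : q ^ 2 * v ^ 2 ≤ 4 * B := by linarith [mul_nonneg (sq_nonneg q) (sq_nonneg u)]
  have b1 := penalty_bound hB hP hq0 hq1 (hH.bound₁ s ((u + v) / 2)) (hF.bound s u) hu
  have b2 := penalty_bound hB hP hq0 hq1 (hH.bound₁ s ((u + v) / 2)) (hG.bound s v) hv
  have hp2 : H₁ s ((u + v) / 2) ^ 2 * (H s ((u + v) / 2) - F s u / 2 - G s v / 2) ≤ 0 :=
    mul_nonpos_of_nonneg_of_nonpos (sq_nonneg _) hD0.le
  rw [hdu, hdv] at htime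
  generalize H₁ s ((u + v) / 2) = p at *
  have hfin : κ ≤ q * K := by
    rw [hK]; linarith
  have : 0 < q * (S + 1) := by positivity
  linarith

/-! ### The functional midpoint inequality -/

/-- Functional midpoint inequality on the line, smooth case: the heat flow is the identity at `σ = 0`
and gives the Gaussian mean at `σ = 1`, `x = 0`. -/
lemma ehrhard_smooth {f f₁ f₂ g g₁ g₂ h h₁ h₂ : ℝ → ℝ} {C a b : ℝ} (ha : 0 < a) (hb : b < 1)
    (hf : ∀ x, HasDerivAt f (f₁ x) x) (hf₁ : ∀ x, HasDerivAt f₁ (f₂ x) x) (hf₂ : Continuous f₂)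
    (bf₁ : ∀ x, |f₁ x| ≤ C) (bf₂ : ∀ x, |f₂ x| ≤ C) (bf : ∀ x, f x ∈ Icc a b)
    (hg : ∀ x, HasDerivAt g (g₁ x) x) (hg₁ : ∀ x, HasDerivAt g₁ (g₂ x) x) (hg₂ : Continuous g₂)
    (bg₁ : ∀ x, |g₁ x| ≤ C) (bg₂ : ∀ x, |g₂ x| ≤ C) (bg : ∀ x, g x ∈ Icc a b)
    (hh : ∀ x, HasDerivAt h (h₁ x) x) (hh₁ : ∀ x, HasDerivAt h₁ (h₂ x) x) (hh₂ : Continuous h₂)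
    (bh₁ : ∀ x, |h₁ x| ≤ C) (bh₂ : ∀ x, |h₂ x| ≤ C) (bh : ∀ x, h x ∈ Icc a b)
    (hmid : ∀ x y, gPsi (f x) + gPsi (g y) ≤ 2 * gPsi (h ((x + y) / 2))) :
    gPsi (∫ z, f z ∂gaussianReal 0 1) + gPsi (∫ z, g z ∂gaussianReal 0 1)
      ≤ 2 * gPsi (∫ z, h z ∂gaussianReal 0 1) := by
  obtain ⟨F₁, F₂, B, P, hF⟩ := heat_flow hf hf₁ hf₂ bf₁ bf₂ ha hb (fun x => (bf x).1) fun x => (bf x).2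
  obtain ⟨G₁, G₂, B', P', hG⟩ := heat_flow hg hg₁ hg₂ bg₁ bg₂ ha hb (fun x => (bg x).1) fun x => (bg x).2
  obtain ⟨H₁, H₂, B'', P'', hH⟩ := heat_flow hh hh₁ hh₂ bh₁ bh₂ ha hb (fun x => (bh x).1) fun x => (bh x).2
  set B₀ := max B (max B' B'')
  set P₀ := max P (max P' P'')
  have := max_principle (B := B₀) (P := P₀) (hF.mono (le_max_left _ _) (le_max_left _ _))
    (hG.mono ((le_max_left _ _).trans (le_max_right _ _)) ((le_max_left _ _).trans (le_max_right _ _)))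
    (hH.mono ((le_max_right _ _).trans (le_max_right _ _)) ((le_max_right _ _).trans (le_max_right _ _)))
    (fun x y => by simpa [heat] using hmid x y) 1 zero_le_one le_rfl 0 0
  simpa [heat] using this

/-- Moving average of `f` over `[x, x + ε]`. -/
noncomputable def avg (ε : ℝ) (f : ℝ → ℝ) (x : ℝ) : ℝ := ε⁻¹ * ∫ y in x..(x + ε), f y

lemma avg_deriv {f : ℝ → ℝ} (hf : Continuous f) (ε x : ℝ) :
    HasDerivAt (avg ε f) (ε⁻¹ * (f (x + ε) - f x)) x := by
  have h : avg ε f = fun x => ε⁻¹ * ((∫ y in (0:ℝ)..(x + ε), f y) - ∫ y in (0:ℝ)..x, f y) := by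
    ext x
    rw [avg, intervalIntegral.integral_interval_sub_left (hf.intervalIntegrable _ _)
      (hf.intervalIntegrable _ _)]
  have hd : ∀ x, HasDerivAt (fun x => ∫ y in (0:ℝ)..x, f y) (f x) x := fun x =>
    intervalIntegral.integral_hasDerivAt_right (hf.intervalIntegrable _ _)
      (hf.stronglyMeasurableAtFilter _ _) hf.continuousAt
  rw [h]
  exact (((hd (x + ε)).comp_add_const x ε).sub (hd x)).const_mul ε⁻¹

lemma avg_mem {f : ℝ → ℝ} (hf : Continuous f) {ε : ℝ} (hε : 0 < ε) {a b x : ℝ}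
    (h : ∀ y ∈ Icc x (x + ε), f y ∈ Icc a b) : avg ε f x ∈ Icc a b := by
  have hx : x ≤ x + ε := by linarith
  have h1 := intervalIntegral.integral_mono_on hx (intervalIntegrable_const (μ := volume) (c := a))
    (hf.intervalIntegrable _ _) (fun y hy => (h y hy).1)
  have h2 := intervalIntegral.integral_mono_on hx (hf.intervalIntegrable _ _)
    (intervalIntegrable_const (μ := volume) (c := b)) (fun y hy => (h y hy).2)
  rw [intervalIntegral.integral_const, smul_eq_mul, add_sub_cancel_left] at h1 h2
  rw [avg, inv_mul_eq_div]
  exact ⟨by rw [le_div_iff₀ hε]; linarith, by rw [div_le_iff₀ hε]; linarith⟩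

lemma avg_near {f : ℝ → ℝ} {L : ℝ} (hL : 0 ≤ L) (hf : ∀ x y, |f x - f y| ≤ L * |x - y|)
    (hfc : Continuous f) {ε : ℝ} (hε : 0 < ε) (x : ℝ) : |avg ε f x - f x| ≤ L * ε := by
  have := avg_mem hfc hε (x := x) (a := f x - L * ε) (b := f x + L * ε) (fun y hy => by
    have h1 := hf y x
    rw [abs_of_nonneg (by linarith [hy.1] : 0 ≤ y - x)] at h1
    have h2 : L * (y - x) ≤ L * ε := mul_le_mul_of_nonneg_left (by linarith [hy.2]) hL
    have h3 := abs_le.1 h1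
    constructor <;> linarith)
  rw [abs_le]; constructor <;> linarith [this.1, this.2]

lemma continuous_of_lip {f : ℝ → ℝ} {L : ℝ} (hL : 0 ≤ L)
    (hf : ∀ x y, |f x - f y| ≤ L * |x - y|) : Continuous f :=
  (LipschitzWith.of_dist_le_mul (K := L.toNNReal) fun x y => by
    rw [Real.coe_toNNReal _ hL]; exact hf x y).continuous

/-- A Lipschitz function is a uniform limit of `C²` functions with bounded derivatives and the same
range, namely of its iterated moving averages. -/
lemma exists_smooth {f : ℝ → ℝ} {L : ℝ} (hL : 0 ≤ L) (hf : ∀ x y, |f x - f y| ≤ L * |x - y|)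
    {a b : ℝ} (hab : ∀ x, f x ∈ Icc a b) {η : ℝ} (hη : 0 < η) :
    ∃ g g₁ g₂ : ℝ → ℝ, ∃ C, (∀ x, HasDerivAt g (g₁ x) x) ∧ (∀ x, HasDerivAt g₁ (g₂ x) x) ∧
      Continuous g₂ ∧ (∀ x, |g₁ x| ≤ C) ∧ (∀ x, |g₂ x| ≤ C) ∧ (∀ x, g x ∈ Icc a b) ∧
      ∀ x, |g x - f x| ≤ η := by
  have hfc := continuous_of_lip hL hf
  set ε := η / (2 * L + 1) with hε'
  have hε : 0 < ε := by positivity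
  have hεη : 2 * (L * ε) ≤ η := by
    have : ε * (2 * L + 1) = η := by rw [hε']; field_simp
    nlinarith
  have hd := avg_deriv hfc ε
  have hac : Continuous (avg ε f) := continuous_iff_continuousAt.2 fun x => (hd x).continuousAt
  have hdb : ∀ x, ‖ε⁻¹ * (f (x + ε) - f x)‖ ≤ L := fun x => by
    rw [norm_mul, norm_inv, Real.norm_eq_abs, Real.norm_eq_abs, abs_of_pos hε, inv_mul_eq_div,
      div_le_iff₀ hε]
    have := hf (x + ε) x
    rwa [add_sub_cancel_left, abs_of_pos hε] at this
  have hal : ∀ x y, |avg ε f x - avg ε f y| ≤ L * |x - y| := fun x y =>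
    Convex.norm_image_sub_le_of_norm_hasDerivWithin_le (s := univ)
      (fun z _ => (hd z).hasDerivWithinAt) (fun z _ => hdb z) convex_univ (mem_univ y) (mem_univ x)
  have hmem : ∀ x, avg ε f x ∈ Icc a b := fun x => avg_mem hfc hε fun y _ => hab y
  refine ⟨avg ε (avg ε f), fun x => ε⁻¹ * (avg ε f (x + ε) - avg ε f x),
    fun x => ε⁻¹ * (ε⁻¹ * (f (x + ε + ε) - f (x + ε)) - ε⁻¹ * (f (x + ε) - f x)),
    max L (ε⁻¹ * (2 * L)), avg_deriv hac ε, fun x => ?_, by fun_prop, fun x => ?_, fun x => ?_,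
    fun x => avg_mem hac hε fun y _ => hmem y, fun x => ?_⟩
  · exact (((hd (x + ε)).comp_add_const x ε).sub (hd x)).const_mul ε⁻¹
  · refine le_max_of_le_left ?_
    rw [abs_mul, abs_of_pos (inv_pos.2 hε), inv_mul_eq_div, div_le_iff₀ hε]
    have := hal (x + ε) x
    rwa [add_sub_cancel_left, abs_of_pos hε] at this
  · refine le_max_of_le_right ?_
    rw [abs_mul, abs_of_pos (inv_pos.2 hε)]
    refine mul_le_mul_of_nonneg_left ?_ (inv_pos.2 hε).le
    refine (abs_sub _ _).trans ?_
    have h1 := hdb (x + ε)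
    have h2 := hdb x
    rw [Real.norm_eq_abs] at h1 h2
    linarith
  · have h1 := abs_le.1 (avg_near hL hal hac hε x)
    have h2 := abs_le.1 (avg_near hL hf hfc hε x)
    rw [abs_le]; constructor <;> linarith

lemma integral_mem_Icc {α : Type*} [MeasurableSpace α] {μ : Measure α} [IsProbabilityMeasure μ]
    {f : α → ℝ} (hf : AEStronglyMeasurable f μ) {a b : ℝ} (h : ∀ x, f x ∈ Icc a b) :
    ∫ x, f x ∂μ ∈ Icc a b := by
  have hi : Integrable f μ := Integrable.of_bound hf (max |a| |b|)
    (ae_of_all _ fun x => abs_le_max_abs_abs (h x).1 (h x).2)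
  have h1 := integral_mono (integrable_const a) hi fun x => (h x).1
  have h2 := integral_mono hi (integrable_const b) fun x => (h x).2
  simp at h1 h2
  exact ⟨h1, h2⟩

/-- Functional midpoint inequality on the line, Lipschitz case. The smooth approximations of `f`, `g`
are lowered and that of `h` is raised, so that the pointwise hypothesis survives. -/
lemma ehrhard_line {f g h : ℝ → ℝ} {L a b : ℝ} (hL : 0 ≤ L) (ha : 0 < a) (hb : b < 1)
    (lf : ∀ x y, |f x - f y| ≤ L * |x - y|) (lg : ∀ x y, |g x - g y| ≤ L * |x - y|)
    (lh : ∀ x y, |h x - h y| ≤ L * |x - y|)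
    (bf : ∀ x, f x ∈ Icc a b) (bg : ∀ x, g x ∈ Icc a b) (bh : ∀ x, h x ∈ Icc a b)
    (hmid : ∀ x y, gPsi (f x) + gPsi (g y) ≤ 2 * gPsi (h ((x + y) / 2))) :
    gPsi (∫ z, f z ∂gaussianReal 0 1) + gPsi (∫ z, g z ∂gaussianReal 0 1)
      ≤ 2 * gPsi (∫ z, h z ∂gaussianReal 0 1) := by
  have hab : a ≤ b := (bf 0).1.trans (bf 0).2
  have cf := continuous_of_lip hL lf
  have cg := continuous_of_lip hL lg
  have ch := continuous_of_lip hL lh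
  have mf := integral_mem_Icc (μ := gaussianReal 0 1) cf.aestronglyMeasurable bf
  have mg := integral_mem_Icc (μ := gaussianReal 0 1) cg.aestronglyMeasurable bg
  have mh := integral_mem_Icc (μ := gaussianReal 0 1) ch.aestronglyMeasurable bh
  have hint : ∀ {k : ℝ → ℝ} {a b : ℝ}, Continuous k → (∀ x, k x ∈ Icc a b) →
      Integrable k (gaussianReal 0 1) := fun {k a b} hk hk' =>
    Integrable.of_bound hk.aestronglyMeasurable (max |a| |b|)
      (ae_of_all _ fun x => abs_le_max_abs_abs (hk' x).1 (hk' x).2)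
  have key : ∀ᶠ η in 𝓝[>] (0:ℝ), gPsi ((∫ z, f z ∂gaussianReal 0 1) - 2 * η)
      + gPsi ((∫ z, g z ∂gaussianReal 0 1) - 2 * η)
      ≤ 2 * gPsi ((∫ z, h z ∂gaussianReal 0 1) + 2 * η) := by
    have e1 : ∀ᶠ η in 𝓝[>] (0:ℝ), η < a / 2 :=
      mem_nhdsWithin_of_mem_nhds (gt_mem_nhds (by linarith))
    have e2 : ∀ᶠ η in 𝓝[>] (0:ℝ), η < (1 - b) / 2 :=
      mem_nhdsWithin_of_mem_nhds (gt_mem_nhds (by linarith))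
    filter_upwards [e1, e2, self_mem_nhdsWithin] with η hη1 hη2 hη
    have hη : 0 < η := hη
    obtain ⟨f', f₁, f₂, C, df, df₁, cf₂, b1, b2, b3, b4⟩ := exists_smooth hL lf bf hη
    obtain ⟨g', g₁, g₂, C', dg, dg₁, cg₂, c1, c2, c3, c4⟩ := exists_smooth hL lg bg hη
    obtain ⟨h', h₁, h₂, C'', dh, dh₁, ch₂, d1, d2, d3, d4⟩ := exists_smooth hL lh bh hη
    have cf' : Continuous f' := continuous_iff_continuousAt.2 fun x => (df x).continuousAt
    have cg' : Continuous g' := continuous_iff_continuousAt.2 fun x => (dg x).continuousAt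
    have ch' : Continuous h' := continuous_iff_continuousAt.2 fun x => (dh x).continuousAt
    set D := max C (max C' C'')
    have m1 : C ≤ D := le_max_left _ _
    have m2 : C' ≤ D := (le_max_left _ _).trans (le_max_right _ _)
    have m3 : C'' ≤ D := (le_max_right _ _).trans (le_max_right _ _)
    have rf : ∀ x, f' x - η ∈ Icc (a - η) (b + η) := fun x =>
      ⟨by linarith [(b3 x).1], by linarith [(b3 x).2]⟩
    have rg : ∀ x, g' x - η ∈ Icc (a - η) (b + η) := fun x =>
      ⟨by linarith [(c3 x).1], by linarith [(c3 x).2]⟩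
    have rh : ∀ x, h' x + η ∈ Icc (a - η) (b + η) := fun x =>
      ⟨by linarith [(d3 x).1], by linarith [(d3 x).2]⟩
    have sub : ∀ {p}, p ∈ Icc (a - η) (b + η) → p ∈ Ioo (0:ℝ) 1 := fun hp =>
      ⟨by linarith [hp.1], by linarith [hp.2]⟩
    have sub' : ∀ {p}, p ∈ Icc a b → p ∈ Ioo (0:ℝ) 1 := fun hp =>
      ⟨by linarith [hp.1], by linarith [hp.2]⟩
    have main := ehrhard_smooth (f := fun x => f' x - η) (g := fun x => g' x - η)
      (h := fun x => h' x + η) (C := D) (by linarith : 0 < a - η) (by linarith : b + η < 1)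
      (fun x => (df x).sub_const η) df₁ cf₂ (fun x => (b1 x).trans m1) (fun x => (b2 x).trans m1) rf
      (fun x => (dg x).sub_const η) dg₁ cg₂ (fun x => (c1 x).trans m2) (fun x => (c2 x).trans m2) rg
      (fun x => (dh x).add_const η) dh₁ ch₂ (fun x => (d1 x).trans m3) (fun x => (d2 x).trans m3) rh
      (fun x y => by
        have i1 := gPsi_le (sub (rf x)) (sub' (bf x)) (by linarith [abs_le.1 (b4 x)])
        have i2 := gPsi_le (sub (rg y)) (sub' (bg y)) (by linarith [abs_le.1 (c4 y)])
        have i3 := gPsi_le (sub' (bh ((x + y) / 2))) (sub (rh ((x + y) / 2)))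
          (by linarith [abs_le.1 (d4 ((x + y) / 2))])
        linarith [hmid x y])
    have sub2 : ∀ {p}, p ∈ Icc (a - 2 * η) (b + 2 * η) → p ∈ Ioo (0:ℝ) 1 := fun hp =>
      ⟨by linarith [hp.1], by linarith [hp.2]⟩
    have pf : ∫ x, (f' x - η) ∂gaussianReal 0 1 ∈ Icc (a - η) (b + η) :=
      integral_mem_Icc (μ := gaussianReal 0 1) (cf'.sub continuous_const).aestronglyMeasurable rf
    have pg : ∫ x, (g' x - η) ∂gaussianReal 0 1 ∈ Icc (a - η) (b + η) :=
      integral_mem_Icc (μ := gaussianReal 0 1) (cg'.sub continuous_const).aestronglyMeasurable rg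
    have ph := integral_mem_Icc (μ := gaussianReal 0 1) (ch'.add_const η).aestronglyMeasurable rh
    have q1 : (∫ z, f z ∂gaussianReal 0 1) - 2 * η ≤ ∫ z, (f' z - η) ∂gaussianReal 0 1 := by
      have := integral_mono ((hint cf bf).sub (integrable_const (2 * η)))
        (hint (cf'.sub continuous_const) rf) (fun x => show f x - 2 * η ≤ f' x - η by
          linarith [abs_le.1 (b4 x)])
      simpa [integral_sub (hint cf bf) (integrable_const (2 * η))] using this
    have q2 : (∫ z, g z ∂gaussianReal 0 1) - 2 * η ≤ ∫ z, (g' z - η) ∂gaussianReal 0 1 := by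
      have := integral_mono ((hint cg bg).sub (integrable_const (2 * η)))
        (hint (cg'.sub continuous_const) rg) (fun x => show g x - 2 * η ≤ g' x - η by
          linarith [abs_le.1 (c4 x)])
      simpa [integral_sub (hint cg bg) (integrable_const (2 * η))] using this
    have q3 : ∫ z, (h' z + η) ∂gaussianReal 0 1 ≤ (∫ z, h z ∂gaussianReal 0 1) + 2 * η := by
      have := integral_mono (hint (ch'.add_const η) rh) ((hint ch bh).add (integrable_const (2 * η)))
        (fun x => show h' x + η ≤ h x + 2 * η by linarith [abs_le.1 (d4 x)])
      simpa [integral_add (hint ch bh) (integrable_const (2 * η))] using this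
    have i1 := gPsi_le (sub2 ⟨by linarith [mf.1], by linarith [mf.2]⟩) (sub pf) q1
    have i2 := gPsi_le (sub2 ⟨by linarith [mg.1], by linarith [mg.2]⟩) (sub pg) q2
    have i3 := gPsi_le (sub ph) (sub2 ⟨by linarith [mh.1], by linarith [mh.2]⟩) q3
    linarith
  have lim : ∀ {p : ℝ} (c : ℝ), p ∈ Icc a b →
      Tendsto (fun η => gPsi (p + c * η)) (𝓝[>] 0) (𝓝 (gPsi p)) := fun {p} c hp => by
    have h1 : ContinuousAt (fun η => gPsi (p + c * η)) 0 := by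
      refine ContinuousAt.comp (g := gPsi) ?_ (by fun_prop)
      rw [mul_zero, add_zero]
      exact gPsi_contAt ⟨by linarith [hp.1], by linarith [hp.2]⟩
    have := h1.tendsto.mono_left (nhdsWithin_le_nhds (s := Ioi 0))
    simpa using this
  refine le_of_tendsto_of_tendsto ((lim (-2) mf).add (lim (-2) mg)) ((lim 2 mh).const_mul 2) ?_
  filter_upwards [key] with η hη
  simpa [sub_eq_add_neg] using hη

/-- The standard Gaussian measure in coordinates. -/
noncomputable abbrev gpi (n : ℕ) : Measure (Fin n → ℝ) := Measure.pi fun _ => gaussianReal 0 1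

lemma dist_cons_tail_le (n : ℕ) (s : ℝ) (x y : Fin n → ℝ) :
    dist (Fin.cons s x : Fin (n + 1) → ℝ) (Fin.cons s y) ≤ dist x y := by
  refine (dist_pi_le_iff dist_nonneg).2 fun i => ?_
  refine Fin.cases ?_ (fun j => ?_) i
  · simp
  · simpa using dist_le_pi_dist x y j

lemma dist_cons_head_le (n : ℕ) (s t : ℝ) (x : Fin n → ℝ) :
    dist (Fin.cons s x : Fin (n + 1) → ℝ) (Fin.cons t x) ≤ dist s t := by
  refine (dist_pi_le_iff dist_nonneg).2 fun i => ?_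
  refine Fin.cases ?_ (fun j => ?_) i
  · simp
  · simp

lemma integral_gpi_succ (n : ℕ) {f : (Fin (n + 1) → ℝ) → ℝ} (hf : Integrable f (gpi (n + 1))) :
    ∫ x, f x ∂gpi (n + 1) = ∫ x, ∫ s, f (Fin.cons s x) ∂gaussianReal 0 1 ∂gpi n := by
  have mp := (measurePreserving_piFinSuccAbove (fun _ : Fin (n + 1) => gaussianReal 0 1) 0).symm
  have e : ∀ p : ℝ × (Fin n → ℝ), (MeasurableEquiv.piFinSuccAbove (fun _ : Fin (n + 1) => ℝ) 0).symm p
      = Fin.cons p.1 p.2 := fun p => by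
    simp [MeasurableEquiv.piFinSuccAbove, Fin.insertNthEquiv]
  rw [← mp.integral_comp (MeasurableEquiv.measurableEmbedding _) f, integral_prod_symm]
  · simp_rw [e]
  · exact (mp.integrable_comp_emb (MeasurableEquiv.measurableEmbedding _)).2 hf

/-- Functional midpoint inequality in every dimension: the class of Lipschitz functions with values
in a compact part of `(0, 1)` is stable under integrating out one coordinate, so the one-dimensional
case can be applied to one coordinate at a time. -/
lemma ehrhard_pi (n : ℕ) : ∀ {f g h : (Fin n → ℝ) → ℝ} {L a b : ℝ}, 0 ≤ L → 0 < a → b < 1 →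
    (∀ x y, |f x - f y| ≤ L * dist x y) → (∀ x y, |g x - g y| ≤ L * dist x y) →
    (∀ x y, |h x - h y| ≤ L * dist x y) →
    (∀ x, f x ∈ Icc a b) → (∀ x, g x ∈ Icc a b) → (∀ x, h x ∈ Icc a b) →
    (∀ x y, gPsi (f x) + gPsi (g y) ≤ 2 * gPsi (h ((2:ℝ)⁻¹ • (x + y)))) →
    gPsi (∫ z, f z ∂gpi n) + gPsi (∫ z, g z ∂gpi n) ≤ 2 * gPsi (∫ z, h z ∂gpi n) := by
  induction n with
  | zero =>
    intro f g h L a b hL ha hb lf lg lh bf bg bh hmid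
    have e : ∀ k : (Fin 0 → ℝ) → ℝ, ∫ z, k z ∂gpi 0 = k default := fun k => by
      rw [gpi, Measure.pi_of_empty _ default, integral_dirac]
    rw [e, e, e]
    have := hmid default default
    rwa [Subsingleton.elim ((2:ℝ)⁻¹ • (default + default) : Fin 0 → ℝ) default] at this
  | succ n ih =>
    intro f g h L a b hL ha hb lf lg lh bf bg bh hmid
    have cont : ∀ {k : (Fin (n + 1) → ℝ) → ℝ}, (∀ x y, |k x - k y| ≤ L * dist x y) →
        Continuous k := fun {k} hk =>
      (LipschitzWith.of_dist_le_mul (K := L.toNNReal) fun x y => by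
        rw [Real.coe_toNNReal _ hL]; exact hk x y).continuous
    have int : ∀ {k : (Fin (n + 1) → ℝ) → ℝ}, (∀ x y, |k x - k y| ≤ L * dist x y) →
        (∀ x, k x ∈ Icc a b) → Integrable k (gpi (n + 1)) := fun {k} hk hk' =>
      Integrable.of_bound (cont hk).aestronglyMeasurable (max |a| |b|)
        (ae_of_all _ fun x => abs_le_max_abs_abs (hk' x).1 (hk' x).2)
    have fib : ∀ {k : (Fin (n + 1) → ℝ) → ℝ}, (∀ x y, |k x - k y| ≤ L * dist x y) → ∀ x s t,
        |k (Fin.cons s x) - k (Fin.cons t x)| ≤ L * |s - t| := fun {k} hk x s t =>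
      (hk _ _).trans (mul_le_mul_of_nonneg_left (dist_cons_head_le n s t x) hL)
    have fibc : ∀ {k : (Fin (n + 1) → ℝ) → ℝ}, (∀ x y, |k x - k y| ≤ L * dist x y) → ∀ x,
        Continuous fun s : ℝ => k (Fin.cons s x) := fun {k} hk x => continuous_of_lip hL (fib hk x)
    have fibi : ∀ {k : (Fin (n + 1) → ℝ) → ℝ}, (∀ x y, |k x - k y| ≤ L * dist x y) →
        (∀ x, k x ∈ Icc a b) → ∀ x, Integrable (fun s => k (Fin.cons s x)) (gaussianReal 0 1) :=
      fun {k} hk hk' x => Integrable.of_bound (fibc hk x).aestronglyMeasurable (max |a| |b|)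
        (ae_of_all _ fun s => abs_le_max_abs_abs (hk' _).1 (hk' _).2)
    have lip : ∀ {k : (Fin (n + 1) → ℝ) → ℝ}, (∀ x y, |k x - k y| ≤ L * dist x y) →
        (∀ x, k x ∈ Icc a b) → ∀ x y, |(∫ s, k (Fin.cons s x) ∂gaussianReal 0 1)
          - ∫ s, k (Fin.cons s y) ∂gaussianReal 0 1| ≤ L * dist x y := fun {k} hk hk' x y => by
      rw [← integral_sub (fibi hk hk' x) (fibi hk hk' y)]
      have := norm_integral_le_of_norm_le_const (μ := gaussianReal 0 1) (C := L * dist x y)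
        (f := fun s => k (Fin.cons s x) - k (Fin.cons s y)) (ae_of_all _ fun s =>
          (hk _ _).trans (mul_le_mul_of_nonneg_left (dist_cons_tail_le n s x y) hL))
      simpa using this
    rw [integral_gpi_succ n (int lf bf), integral_gpi_succ n (int lg bg),
      integral_gpi_succ n (int lh bh)]
    refine ih hL ha hb (lip lf bf) (lip lg bg) (lip lh bh)
      (fun x => integral_mem_Icc (fibc lf x).aestronglyMeasurable fun _ => bf _)
      (fun x => integral_mem_Icc (fibc lg x).aestronglyMeasurable fun _ => bg _)
      (fun x => integral_mem_Icc (fibc lh x).aestronglyMeasurable fun _ => bh _) fun x y => ?_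
    refine ehrhard_line hL ha hb (fib lf x) (fib lg y) (fib lh _) (fun _ => bf _) (fun _ => bg _)
      (fun _ => bh _) fun s t => ?_
    have := hmid (Fin.cons s x) (Fin.cons t y)
    have e : (2:ℝ)⁻¹ • ((Fin.cons s x : Fin (n + 1) → ℝ) + Fin.cons t y)
        = Fin.cons ((s + t) / 2) ((2:ℝ)⁻¹ • (x + y)) := by
      ext i
      refine Fin.cases ?_ (fun j => ?_) i
      · simp; ring
      · simp; ring
    rwa [e] at this

/-! ### Midpoints of sets -/

lemma plateau_lip {n : ℕ} {S : Set (Fin n → ℝ)} {θ u v t : ℝ} (hθ : 0 < θ) (hu : 0 ≤ v - u)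
    (hv : v - u ≤ 1) (x y : Fin n → ℝ) :
    |(u + (v - u) * max 0 (min 1 (t - Metric.infDist x S / θ)))
      - (u + (v - u) * max 0 (min 1 (t - Metric.infDist y S / θ)))| ≤ θ⁻¹ * dist x y := by
  have h1 : |Metric.infDist x S - Metric.infDist y S| ≤ dist x y := by
    have := (Metric.lipschitz_infDist_pt S).dist_le_mul x y
    simpa [Real.dist_eq] using this
  have h2 := abs_max_sub_max_le_abs (min 1 (t - Metric.infDist x S / θ))
    (min 1 (t - Metric.infDist y S / θ)) 0
  have h3 := abs_min_sub_min_le_max 1 (t - Metric.infDist x S / θ) 1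
    (t - Metric.infDist y S / θ)
  rw [sub_self, abs_zero, max_eq_right (abs_nonneg _)] at h3
  rw [max_comm _ 0, max_comm _ 0] at h2
  have h4 : |t - Metric.infDist x S / θ - (t - Metric.infDist y S / θ)| ≤ θ⁻¹ * dist x y := by
    have : t - Metric.infDist x S / θ - (t - Metric.infDist y S / θ)
        = -(θ⁻¹ * (Metric.infDist x S - Metric.infDist y S)) := by field_simp; ring
    rw [this, abs_neg, abs_mul, abs_of_pos (inv_pos.2 hθ)]
    exact mul_le_mul_of_nonneg_left h1 (inv_pos.2 hθ).le
  have h5 := h2.trans (h3.trans h4)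
  rw [add_sub_add_left_eq_sub, ← mul_sub, abs_mul, abs_of_nonneg hu]
  exact (mul_le_of_le_one_left (abs_nonneg _) hv).trans h5

lemma plateau_mem (s : ℝ) : 0 ≤ max 0 (min 1 s) ∧ max 0 (min 1 s) ≤ 1 :=
  ⟨le_max_left _ _, max_le zero_le_one (min_le_left _ _)⟩

/-- Quantitative form of `measure_midpoint`, with Lipschitz plateau functions in place of
indicators. The functions attached to `A` and `B` take a base value `δ` far below the base value `η`
attached to `C`; it is tuned so that `gPsi δ + gPsi M = 2 * gPsi η`. -/
lemma measure_midpoint_approx {n : ℕ} {A B C : Set (Fin n → ℝ)} (mA : MeasurableSet A)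
    (mB : MeasurableSet B) (hA : A.Nonempty) (hB : B.Nonempty)
    (hC : ∀ x ∈ A, ∀ y ∈ B, (2:ℝ)⁻¹ • (x + y) ∈ C) {M η θ : ℝ} (hM : M < 1)
    (hAB : 1 ≤ M * ((gpi n).real A + (gpi n).real B)) (hη : 0 < η) (hηM : η ≤ M) (hθ : 0 < θ) :
    1 / 2 ≤ η + (gpi n).real (Metric.cthickening (2 * θ) C) := by
  have hM0 : 0 < M := hη.trans_le hηM
  have hC' : C.Nonempty := ⟨_, hC _ hA.some_mem _ hB.some_mem⟩
  set δ := gPhi (2 * gPsi η - gPsi M) with hδ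
  have δ0 : 0 < δ := gPhi_pos _
  have δΨ : gPsi δ = 2 * gPsi η - gPsi M := gPsi_gPhi _
  have hΨ : gPsi η ≤ gPsi M := gPsi_le ⟨hη, hηM.trans_lt hM⟩ ⟨hM0, hM⟩ hηM
  have δη : δ ≤ η := by
    rw [← gPhi_gPsi (p := η) ⟨hη, hηM.trans_lt hM⟩]
    exact gPhi_strictMono.monotone (by linarith)
  have δM := δη.trans hηM
  set χ : Set (Fin n → ℝ) → ℝ → (Fin n → ℝ) → ℝ := fun S t x =>
    max 0 (min 1 (t - Metric.infDist x S / θ)) with hχ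
  have pl : ∀ S t x, 0 ≤ χ S t x ∧ χ S t x ≤ 1 := fun S t x => plateau_mem _
  have rng : ∀ {u : ℝ}, δ ≤ u → u ≤ M → ∀ S t x, u + (M - u) * χ S t x ∈ Icc u M := by
    intro u h1 h2 S t x
    have := pl S t x
    constructor <;> nlinarith
  have lip : ∀ {u : ℝ}, δ ≤ u → u ≤ M → ∀ S t x y,
      |(u + (M - u) * χ S t x) - (u + (M - u) * χ S t y)| ≤ θ⁻¹ * dist x y := fun h1 h2 S t x y =>
    plateau_lip hθ (by linarith) (by linarith) x y
  -- The plateau function equals `1` within distance `(t - 1) * θ` of `S` and vanishes beyond `t * θ`.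
  have near : ∀ {S : Set (Fin n → ℝ)} {t x}, S.Nonempty → 0 < χ S t x →
      ∃ s ∈ S, dist x s < t * θ := by
    intro S t x hS h
    have h1 : 0 < t - Metric.infDist x S / θ := by
      by_contra! h'
      have : χ S t x = 0 := max_eq_left ((min_le_right _ _).trans h')
      linarith
    refine (Metric.infDist_lt_iff hS).1 ?_
    rw [sub_pos, div_lt_iff₀ hθ] at h1
    exact h1
  have sub : ∀ {p}, p ∈ Icc δ M → p ∈ Ioo (0:ℝ) 1 := fun h => ⟨δ0.trans_le h.1, h.2.trans_lt hM⟩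
  have main := ehrhard_pi n (f := fun x => δ + (M - δ) * χ A 1 x)
    (g := fun x => δ + (M - δ) * χ B 1 x) (h := fun x => η + (M - η) * χ C 2 x)
    (inv_pos.2 hθ).le δ0 hM (lip le_rfl δM A 1) (lip le_rfl δM B 1) (lip δη hηM C 2)
    (rng le_rfl δM A 1) (rng le_rfl δM B 1)
    (fun x => ⟨δη.trans (rng δη hηM C 2 x).1, (rng δη hηM C 2 x).2⟩) (by
      intro x y
      have rx := rng le_rfl δM A 1 x
      have ry := rng le_rfl δM B 1 y
      have rz := rng δη hηM C 2 ((2:ℝ)⁻¹ • (x + y))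
      have bx := gPsi_le (sub rx) ⟨hM0, hM⟩ rx.2
      have b_y := gPsi_le (sub ry) ⟨hM0, hM⟩ ry.2
      have bz := gPsi_le ⟨hη, hηM.trans_lt hM⟩ (sub ⟨δη.trans rz.1, rz.2⟩) rz.1
      rcases (pl A 1 x).1.eq_or_lt with h0 | hx
      · simp only [← h0, mul_zero, add_zero, δΨ] at *
        linarith
      rcases (pl B 1 y).1.eq_or_lt with h0 | hy
      · simp only [← h0, mul_zero, add_zero, δΨ] at *
        linarith
      obtain ⟨a, ha, hxa⟩ := near hA hx
      obtain ⟨b, hb, hyb⟩ := near hB hy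
      have hd : Metric.infDist ((2:ℝ)⁻¹ • (x + y)) C ≤ θ := by
        refine (Metric.infDist_le_dist_of_mem (hC a ha b hb)).trans ?_
        rw [dist_smul₀]
        have := dist_add_add_le x y a b
        rw [Real.norm_of_nonneg (by norm_num)]
        linarith
      have h1 : χ C 2 ((2:ℝ)⁻¹ • (x + y)) = 1 := by
        have : Metric.infDist ((2:ℝ)⁻¹ • (x + y)) C / θ ≤ 1 := (div_le_one hθ).2 hd
        simp only [hχ]
        rw [min_eq_left (by linarith), max_eq_right zero_le_one]
      simp only [h1]
      rw [show η + (M - η) * 1 = M by ring]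
      linarith)
  have cont : ∀ u S t, Continuous fun x => u + (M - u) * χ S t x := by
    intro u S t
    have := Metric.continuous_infDist_pt S
    simp only [hχ]
    fun_prop
  have int : ∀ {u : ℝ}, δ ≤ u → u ≤ M → ∀ S t,
      Integrable (fun x => u + (M - u) * χ S t x) (gpi n) := fun {u} h1 h2 S t =>
    Integrable.of_bound (cont u S t).aestronglyMeasurable (max |u| |M|)
      (ae_of_all _ fun x => abs_le_max_abs_abs (rng h1 h2 S t x).1 (rng h1 h2 S t x).2)
  have low : ∀ {S : Set (Fin n → ℝ)}, MeasurableSet S →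
      M * (gpi n).real S ≤ ∫ x, (δ + (M - δ) * χ S 1 x) ∂gpi n := by
    intro S mS
    have e : M * (gpi n).real S = ∫ x, S.indicator (fun _ => M) x ∂gpi n := by
      rw [integral_indicator_const _ mS, smul_eq_mul, mul_comm]
    rw [e]
    refine integral_mono ((integrable_const M).indicator mS) (int le_rfl δM S 1) fun x => ?_
    by_cases hx : x ∈ S
    · have : χ S 1 x = 1 := by simp [hχ, Metric.infDist_zero_of_mem hx]
      simp [hx, this]
    · simp only [indicator_of_notMem hx]
      exact δ0.le.trans (rng le_rfl δM S 1 x).1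
  have up : ∫ x, (η + (M - η) * χ C 2 x) ∂gpi n
      ≤ η + (gpi n).real (Metric.cthickening (2 * θ) C) := by
    have mC : MeasurableSet (Metric.cthickening (2 * θ) C) := Metric.isClosed_cthickening.measurableSet
    have e : η + (gpi n).real (Metric.cthickening (2 * θ) C)
        = ∫ x, (η + (Metric.cthickening (2 * θ) C).indicator (fun _ => (1:ℝ)) x) ∂gpi n := by
      rw [integral_add (integrable_const _) ((integrable_const _).indicator mC),
        integral_indicator_const _ mC]
      simp
    rw [e]
    refine integral_mono (int δη hηM C 2) ((integrable_const _).add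
      ((integrable_const (1:ℝ)).indicator mC)) fun x => ?_
    rcases (pl C 2 x).1.eq_or_lt with h0 | hx
    · simp only [← h0, mul_zero]
      exact add_le_add_right (indicator_nonneg (fun _ _ => zero_le_one) _) _
    · obtain ⟨c, hc, hxc⟩ := near hC' hx
      simp only [indicator_of_mem (Metric.mem_cthickening_of_dist_le x c _ C hc hxc.le)]
      have := (pl C 2 x)
      nlinarith
  have mem : ∀ {u : ℝ}, δ ≤ u → u ≤ M → ∀ S t,
      ∫ x, (u + (M - u) * χ S t x) ∂gpi n ∈ Icc u M := fun {u} h1 h2 S t =>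
    integral_mem_Icc (cont u S t).aestronglyMeasurable (rng h1 h2 S t)
  have hs := gPsi_add_nonneg (sub (mem le_rfl δM A 1)) (sub (mem le_rfl δM B 1))
    (by have := low mA; have := low mB; linarith)
  have hmem := mem δη hηM C 2
  have h0 : 0 ≤ gPsi (∫ x, (η + (M - η) * χ C 2 x) ∂gpi n) := by linarith
  have := gPhi_strictMono.monotone h0
  rw [gPhi_zero, gPhi_gPsi (sub ⟨δη.trans hmem.1, hmem.2⟩)] at this
  exact this.trans up

/-- If two sets have Gaussian measures adding up to more than one, then any closed set containing
all midpoints between them has measure at least one half. -/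
lemma measure_midpoint {n : ℕ} {A B C : Set (Fin n → ℝ)} (mA : MeasurableSet A)
    (mB : MeasurableSet B) (hC : ∀ x ∈ A, ∀ y ∈ B, (2:ℝ)⁻¹ • (x + y) ∈ C) (cC : IsClosed C)
    (hAB : 1 < (gpi n).real A + (gpi n).real B) : 1 / 2 ≤ (gpi n).real C := by
  have hA1 : (gpi n).real A ≤ 1 := measureReal_le_one
  have hB1 : (gpi n).real B ≤ 1 := measureReal_le_one
  have hA : A.Nonempty := by
    by_contra h
    rw [not_nonempty_iff_eq_empty] at h
    rw [h, measureReal_empty] at hAB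
    linarith
  have hB : B.Nonempty := by
    by_contra h
    rw [not_nonempty_iff_eq_empty] at h
    rw [h, measureReal_empty] at hAB
    linarith
  set s := (gpi n).real A + (gpi n).real B
  have h1 : ∀ θ > 0, 1 / 2 ≤ (gpi n).real (Metric.cthickening (2 * θ) C) := by
    intro θ hθ
    refine le_of_forall_pos_le_add fun η hη => ?_
    have := measure_midpoint_approx mA mB hA hB hC (M := s⁻¹) (η := min η s⁻¹) (θ := θ)
      (inv_lt_one_of_one_lt₀ hAB) (by rw [inv_mul_cancel₀ (by linarith)])
      (lt_min hη (inv_pos.2 (by linarith))) (min_le_right _ _) hθ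
    have := min_le_left η s⁻¹
    linarith
  have h2 := tendsto_measure_cthickening_of_isClosed (μ := gpi n) (s := C)
    ⟨1, zero_lt_one, measure_ne_top _ _⟩ cC
  have h3 : Tendsto (fun r => (gpi n).real (Metric.cthickening r C)) (𝓝[>] 0)
      (𝓝 ((gpi n).real C)) :=
    ((ENNReal.tendsto_toReal (measure_ne_top _ _)).comp h2).mono_left nhdsWithin_le_nhds
  refine ge_of_tendsto h3 ?_
  filter_upwards [self_mem_nhdsWithin] with r hr
  have := h1 (r / 2) (half_pos hr)
  rwa [mul_div_cancel₀ r two_ne_zero] at this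

/-! ### The standard Gaussian measure on a Euclidean space -/

lemma gauss_density_integral (n : ℕ) (t : EuclideanSpace ℝ (Fin n)) :
    ∫ x : EuclideanSpace ℝ (Fin n), (((2 * π) ^ (-(n : ℝ) / 2) * Real.exp (-‖x‖ ^ 2 / 2) : ℝ) : ℂ)
      * Complex.exp (inner ℝ x t * Complex.I) = Complex.exp (-‖t‖ ^ 2 / 2) := by
  have h := GaussianFourier.integral_cexp_neg_mul_sq_norm_add (V := EuclideanSpace ℝ (Fin n))
    (b := 1 / 2) (by norm_num) Complex.I t
  have e : ∀ x : EuclideanSpace ℝ (Fin n),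
      (((2 * π) ^ (-(n : ℝ) / 2) * Real.exp (-‖x‖ ^ 2 / 2) : ℝ) : ℂ)
      * Complex.exp (inner ℝ x t * Complex.I) = (((2 * π) ^ (-(n : ℝ) / 2) : ℝ) : ℂ)
        * Complex.exp (-(1 / 2) * ‖x‖ ^ 2 + Complex.I * inner ℝ t x) := by
    intro x
    rw [Complex.ofReal_mul, Complex.ofReal_exp, mul_assoc, ← Complex.exp_add,
      real_inner_comm x t]
    congr 2
    push_cast
    ring
  simp_rw [e]
  rw [integral_const_mul, h, ← mul_assoc]
  have e2 : (((2 * π) ^ (-(n : ℝ) / 2) : ℝ) : ℂ)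
      * ((π : ℂ) / (1 / 2)) ^ ((Module.finrank ℝ (EuclideanSpace ℝ (Fin n)) : ℂ) / 2) = 1 := by
    have : ((π : ℂ) / (1 / 2)) = ((2 * π : ℝ) : ℂ) := by push_cast; ring
    rw [this, finrank_euclideanSpace_fin, Complex.ofReal_cpow (by positivity), ← Complex.cpow_add _ _
      (by exact_mod_cast (by positivity : (2 * π : ℝ) ≠ 0))]
    push_cast
    rw [neg_div, neg_add_cancel, Complex.cpow_zero]
  rw [e2, one_mul, Complex.I_sq]
  congr 1
  ring

/-- The measure given by the explicit density is the law of a vector of independent standard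
Gaussian coordinates: the characteristic functions agree. -/
lemma stdGaussian_eq (n : ℕ) :
    _root_.stdGaussian n = ProbabilityTheory.stdGaussian (EuclideanSpace ℝ (Fin n)) := by
  set ρ : EuclideanSpace ℝ (Fin n) → ℝ := fun x =>
    (2 * π) ^ (-(n : ℝ) / 2) * Real.exp (-‖x‖ ^ 2 / 2) with hρ
  have ρ0 : ∀ x, 0 ≤ ρ x := fun x => by positivity
  have ρm : Measurable ρ := by fun_prop
  have ρi : Integrable ρ := by
    -- Otherwise the integral computed at `t = 0` would have the junk value `0` instead of `1`.
    by_contra hi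
    have h1 := gauss_density_integral n 0
    simp only [inner_zero_right, Complex.ofReal_zero, zero_mul, Complex.exp_zero, mul_one] at h1
    rw [integral_complex_ofReal, integral_undef hi] at h1
    simp at h1
  have e : _root_.stdGaussian n = volume.withDensity fun x => ENNReal.ofReal (ρ x) := rfl
  have fin : IsFiniteMeasure (_root_.stdGaussian n) := by
    rw [e]
    exact isFiniteMeasure_withDensity_ofReal ρi.2
  apply Measure.ext_of_charFun
  ext t
  rw [charFun_stdGaussian, charFun_apply, e,
    integral_withDensity_eq_integral_toReal_smul (by fun_prop) (by simp),
    ← gauss_density_integral n t]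
  refine integral_congr_ae (ae_of_all _ fun x => ?_)
  beta_reduce
  rw [ENNReal.toReal_ofReal (ρ0 x), Complex.real_smul]

section Euclidean

variable {E : Type*} [NormedAddCommGroup E] [InnerProductSpace ℝ E] [FiniteDimensional ℝ E]

lemma continuous_basis_sum :
    Continuous fun x : Fin (Module.finrank ℝ E) → ℝ => ∑ i, x i • stdOrthonormalBasis ℝ E i := by
  fun_prop

variable [MeasurableSpace E] [BorelSpace E]

instance instOpenPosStd : (ProbabilityTheory.stdGaussian E).IsOpenPosMeasure := by
  have : (gaussianReal 0 1).IsOpenPosMeasure :=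
    (gaussianReal_absolutelyContinuous' 0 one_ne_zero).isOpenPosMeasure
  unfold ProbabilityTheory.stdGaussian
  refine continuous_basis_sum.isOpenPosMeasure_map fun v =>
    ⟨fun i => (stdOrthonormalBasis ℝ E).repr v i, (stdOrthonormalBasis ℝ E).sum_repr v⟩

lemma measure_midpoint_std {A B C : Set E} (mA : MeasurableSet A) (mB : MeasurableSet B)
    (hC : ∀ x ∈ A, ∀ y ∈ B, (2:ℝ)⁻¹ • (x + y) ∈ C) (cC : IsClosed C)
    (hAB : 1 < (ProbabilityTheory.stdGaussian E).real A
      + (ProbabilityTheory.stdGaussian E).real B) :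
    1 / 2 ≤ (ProbabilityTheory.stdGaussian E).real C := by
  have hT := continuous_basis_sum (E := E)
  set T := fun x : Fin (Module.finrank ℝ E) → ℝ => ∑ i, x i • stdOrthonormalBasis ℝ E i with T_def
  have e : ∀ {S : Set E}, MeasurableSet S →
      (ProbabilityTheory.stdGaussian E).real S = (gpi _).real (T ⁻¹' S) := fun mS =>
    map_measureReal_apply hT.measurable mS
  rw [e mA, e mB] at hAB
  rw [e cC.measurableSet]
  refine measure_midpoint (hT.measurable mA) (hT.measurable mB) (fun x hx y hy => ?_)
    (cC.preimage hT) hAB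
  have := hC _ hx _ hy
  have eT : T ((2:ℝ)⁻¹ • (x + y)) = (2:ℝ)⁻¹ • (T x + T y) := by
    simp only [T_def, ← Finset.sum_add_distrib, Finset.smul_sum, Pi.smul_apply, Pi.add_apply,
      smul_eq_mul, mul_smul, add_smul]
  rwa [← eT] at this

/-- The Gaussian law on `E` is the law of the sum of independent Gaussian vectors in `M` and in its
orthogonal complement. -/
lemma stdGaussian_map_add (M : Submodule ℝ E) :
    ((ProbabilityTheory.stdGaussian M).prod (ProbabilityTheory.stdGaussian Mᗮ)).map
      (fun p => (p.1 : E) + p.2) = ProbabilityTheory.stdGaussian E := by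
  have e : (fun p : M × Mᗮ => (p.1 : E) + p.2)
      = (fun p : E × E => p.1 + p.2) ∘ Prod.map (M.subtypeL) (Mᗮ.subtypeL) := rfl
  have cf : ∀ (N : Submodule ℝ E) (t : E),
      charFun ((ProbabilityTheory.stdGaussian N).map N.subtypeL) t
        = Complex.exp (-‖N.orthogonalProjectionOnto t‖ ^ 2 / 2) := by
    intro N t
    rw [← charFun_stdGaussian, charFun_apply, charFun_apply,
      integral_map (by fun_prop) (by fun_prop)]
    refine integral_congr_ae (ae_of_all _ fun x => ?_)
    simp only [Submodule.subtypeL_apply]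
    rw [Submodule.inner_orthogonalProjectionOnto_eq_of_mem_left]
  have m1 : Measurable M.subtypeL := M.subtypeL.continuous.measurable
  have m2 : Measurable Mᗮ.subtypeL := Mᗮ.subtypeL.continuous.measurable
  rw [e, ← Measure.map_map (by fun_prop) (by fun_prop), ← Measure.map_prod_map _ _ m1 m2]
  have := Measure.isProbabilityMeasure_map (μ := ProbabilityTheory.stdGaussian M) m1.aemeasurable
  have := Measure.isProbabilityMeasure_map (μ := ProbabilityTheory.stdGaussian Mᗮ) m2.aemeasurable
  apply Measure.ext_of_charFun
  ext t
  rw [charFun_map_add_prod_eq_mul, Pi.mul_apply, cf, cf, charFun_stdGaussian, ← Complex.exp_add]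
  have := M.norm_sq_eq_add_norm_sq_projection t
  have h2 : (‖t‖ : ℂ) ^ 2 = (‖M.orthogonalProjectionOnto t‖ : ℂ) ^ 2
      + (‖Mᗮ.orthogonalProjectionOnto t‖ : ℂ) ^ 2 := by exact_mod_cast this
  rw [h2]
  congr 1
  ring

/-- Fubini's theorem for the slices of `V` parallel to `M`. -/
lemma stdGaussian_slice (M : Submodule ℝ E) {V : Set E} (mV : MeasurableSet V) :
    ProbabilityTheory.stdGaussian E V = ∫⁻ y, ProbabilityTheory.stdGaussian M
      {x : M | (x : E) + y ∈ V} ∂ProbabilityTheory.stdGaussian Mᗮ := by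
  have m : Measurable fun p : M × Mᗮ => (p.1 : E) + p.2 := by fun_prop
  rw [← stdGaussian_map_add M, Measure.map_apply m mV, Measure.prod_apply_symm (m mV)]
  rfl

/-! ### Central slices of convex sets -/

/-- The case of measure strictly above one half. Averaging over the orthogonal complement yields
opposite parallel slices of `V` with total measure greater than one; by convexity their midpoints
lie in the central slice. -/
lemma central_slice_of_lt (M : Submodule ℝ E) {V : Set E} (cV : IsClosed V) (hV : Convex ℝ V)
    (h : 1 / 2 < ProbabilityTheory.stdGaussian E V) :
    1 / 2 ≤ (ProbabilityTheory.stdGaussian M).real (Subtype.val ⁻¹' V) := by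
  set S : Mᗮ → Set M := fun y => {x : M | (x : E) + y ∈ V} with hS
  have cS : ∀ y, IsClosed (S y) := fun y =>
    cV.preimage (continuous_subtype_val.add continuous_const)
  set f : Mᗮ → ENNReal := fun y => ProbabilityTheory.stdGaussian M (S y) with hf
  have m : Measurable fun p : M × Mᗮ => (p.1 : E) + p.2 := by fun_prop
  have mf : Measurable f := measurable_measure_prodMk_right (m cV.measurableSet)
  obtain ⟨y, hy⟩ : ∃ y, 1 < f y + f (-y) := by
    by_contra! hcon
    have h1 : ∫⁻ y, (f y + f (-y)) ∂ProbabilityTheory.stdGaussian Mᗮ ≤ 1 := by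
      refine (lintegral_mono hcon).trans ?_
      simp
    have h2 : ∫⁻ y, f (-y) ∂ProbabilityTheory.stdGaussian Mᗮ
        = ∫⁻ y, f y ∂ProbabilityTheory.stdGaussian Mᗮ := by
      have := stdGaussian_map (LinearIsometryEquiv.neg ℝ (E := Mᗮ))
      conv_rhs => rw [← this]
      rw [lintegral_map mf (LinearIsometryEquiv.continuous _).measurable]
      rfl
    rw [lintegral_add_left mf, h2, ← stdGaussian_slice M cV.measurableSet] at h1
    have h3 := ENNReal.add_lt_add h h
    rw [ENNReal.add_halves] at h3
    exact absurd h1 (not_le.2 h3)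
  refine measure_midpoint_std (cS y).measurableSet (cS (-y)).measurableSet (fun a ha b hb => ?_)
    (cV.preimage continuous_subtype_val) ?_
  · have := hV ha hb (by norm_num : (0:ℝ) ≤ 2⁻¹) (by norm_num : (0:ℝ) ≤ 2⁻¹) (by norm_num)
    simp only [mem_preimage, Submodule.coe_smul, Submodule.coe_add]
    convert this using 1
    simp only [Submodule.coe_neg]
    module
  · rw [← ENNReal.toReal_one]
    unfold Measure.real
    rw [← ENNReal.toReal_add (measure_ne_top _ _) (measure_ne_top _ _)]
    exact (ENNReal.toReal_lt_toReal ENNReal.one_ne_top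
      (ENNReal.add_ne_top.2 ⟨measure_ne_top _ _, measure_ne_top _ _⟩)).2 hy

/-- Thickening a proper set `V` strictly increases its measure, which reduces the claim to
`central_slice_of_lt`. -/
lemma central_slice (M : Submodule ℝ E) {V : Set E} (cV : IsClosed V) (hV : Convex ℝ V)
    (h : 1 / 2 ≤ ProbabilityTheory.stdGaussian E V) :
    1 / 2 ≤ ProbabilityTheory.stdGaussian M (Subtype.val ⁻¹' V) := by
  have hne : V.Nonempty := by
    rw [nonempty_iff_ne_empty]
    rintro rfl
    simp at h
  by_cases hu : V = univ
  · subst hu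
    simp
  have hthick : ∀ ε > 0, 1 / 2 < ProbabilityTheory.stdGaussian E (Metric.cthickening ε V) := by
    intro ε hε
    set U := Metric.thickening ε V \ V with hU
    have oU : IsOpen U := Metric.isOpen_thickening.sdiff cV
    have nU : U.Nonempty := by
      by_contra hn
      rw [not_nonempty_iff_eq_empty, hU, sdiff_eq_empty] at hn
      have : V = Metric.thickening ε V := (Metric.self_subset_thickening hε V).antisymm hn
      have hc : IsClopen V := ⟨cV, this ▸ Metric.isOpen_thickening⟩
      rcases isClopen_iff.1 hc with h1 | h1
      · exact hne.ne_empty h1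
      · exact hu h1
    have hpos := oU.measure_pos (ProbabilityTheory.stdGaussian E) nU
    have hsub : V ∪ U ⊆ Metric.cthickening ε V := union_subset (Metric.self_subset_cthickening V)
      (sdiff_subset.trans (Metric.thickening_subset_cthickening ε V))
    refine lt_of_lt_of_le ?_ (measure_mono hsub)
    rw [measure_union disjoint_sdiff_right oU.measurableSet]
    refine h.trans_lt ?_
    exact ENNReal.lt_add_right (measure_ne_top _ _) hpos.ne'
  have h1 := fun ε (hε : 0 < ε) => central_slice_of_lt M Metric.isClosed_cthickening
    (hV.cthickening ε) (hthick ε hε)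
  set μ := (ProbabilityTheory.stdGaussian M).map Subtype.val with hμ
  have mv : Measurable (Subtype.val : M → E) := measurable_subtype_coe
  have : IsProbabilityMeasure μ := Measure.isProbabilityMeasure_map mv.aemeasurable
  have h2 := tendsto_measure_cthickening_of_isClosed (μ := μ) (s := V)
    ⟨1, zero_lt_one, measure_ne_top _ _⟩ cV
  have h3 := h2.mono_left (nhdsWithin_le_nhds (s := Ioi 0))
  rw [← Measure.map_apply mv cV.measurableSet]
  refine ge_of_tendsto h3 ?_
  filter_upwards [self_mem_nhdsWithin] with ε hε
  have := h1 ε hε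
  rw [hμ, Measure.map_apply mv Metric.isClosed_cthickening.measurableSet,
    ← ENNReal.ofReal_toReal (measure_ne_top _ _)]
  refine le_trans (le_of_eq ?_) (ENNReal.ofReal_le_ofReal this)
  rw [ENNReal.ofReal_div_of_pos two_pos]
  simp

end Euclidean
end

theorem stmt_1 (n m : ℕ) (V : Set (EuclideanSpace ℝ (Fin n)))
    (hVclosed : IsClosed V) (hVconv : Convex ℝ V) (hV : stdGaussian n V ≥ 1 / 2)
    (M : Submodule ℝ (EuclideanSpace ℝ (Fin n))) (hM : Module.finrank ℝ M = m)
    (e : M ≃ₗᵢ[ℝ] EuclideanSpace ℝ (Fin m)) :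
    stdGaussian m (e '' (Subtype.val ⁻¹' V)) ≥ 1 / 2 := by
  rw [stdGaussian_eq] at hV ⊢
  have mS : MeasurableSet (e '' (Subtype.val ⁻¹' V)) :=
    (e.toHomeomorph.isClosedMap _ (hVclosed.preimage continuous_subtype_val)).measurableSet
  rw [← ProbabilityTheory.stdGaussian_map e, Measure.map_apply e.continuous.measurable mS,
    Set.preimage_image_eq _ e.injective]
  exact central_slice M hVclosed hVconv hV
end

section
/- Let V be a closed convex set in ℝⁿ with γₙ(V) ≥ 1/2, let θ be the positive number with γ₁([−θ/2, θ/2]) = 1/2, and let L be a lattice in ℝⁿ generated by n linearly independent vectors each of Euclidean norm at most θ. Then for every a ∈ ℝⁿ, the coset a + L intersects V, i.e., (a + L) ∩ V ≠ ∅. -/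
/-!
The proof is an induction on the dimension in the coordinates of the Gram-Schmidt basis of the
lattice vectors, in which the lattice is triangular with diagonal entries of size at most `θ`.
Call a point `y` of the base `ℝⁿ⁻¹` heavy if the section `V_y ⊆ ℝ` has Gaussian measure at least
`1 / 2`. If the heavy points form a closed convex set `W` of Gaussian measure at least `1 / 2`, then
the induction hypothesis gives a lattice translate whose base point lies in `W`, and the remaining
vector, which is parallel to the fibers, is handled in dimension one: a closed interval that misses
an arithmetic progression of step at most `θ` is shorter than `θ`, so it has measure less than
`1 / 2` (`exists_int_of_half`).

The measure of `W` is bounded below with Ehrhard's inequality, in the following form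
(`half_le_of_one_lt`, `half_le_of_one_le`): if `(A + B) / 2 ⊆ C` and `γ(A) + γ(B) ≥ 1`, with `A` and
`B` of positive measure, then `γ(C) ≥ 1 / 2`. On the fibers it says that a point with fiber measure
at least `t` and a point with fiber measure at least `1 - t` have a heavy midpoint. Hence `W` is
closed under midpoints, and if `γ(W) < 1 / 2`, then on the base the sets `{γ(V_y) ≥ t}` and
`{γ(V_y) ≥ 1 - t}` have total measure at most `1` for every `t`. Integrating over `t` gives
`γ(V) < 1 / 2` (`half_le_heavy`).

Ehrhard's inequality itself is proved in Borell's functional form at the midpoint: if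
`a x + b y ≤ 2 c ((x + y) / 2)`, then
`Ψ (∫ Φ ∘ a) + Ψ (∫ Φ ∘ b) ≤ 2 Ψ (∫ Φ ∘ c)`, where `Ψ` is the inverse of the Gaussian distribution
function `Φ`. On the line, running the heat flow on `Φ ∘ a` and applying `Ψ` turns `a` into a
solution of `∂A/∂r = r (A'' - A A' ^ 2)`, and the midpoint domination is preserved by this equation
thanks to a maximum principle (`flow_comparison`). The inequality tensorizes (`Ehr.prod`), and sets
are reached by taking truncated distance functions for `a`, `b`, `c`.
-/

open MeasureTheory Real

namespace LatticeEhrhard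

open Filter Topology ProbabilityTheory Set

/-! ### The Gaussian distribution function and its inverse -/

/-- The standard Gaussian measure on the line. -/
noncomputable abbrev gam : Measure ℝ := gaussianReal 0 1

/-- The standard Gaussian density on the line. -/
noncomputable def phi (x : ℝ) : ℝ := gaussianPDFReal 0 1 x

/-- The standard Gaussian distribution function. -/
noncomputable def Phi (x : ℝ) : ℝ := cdf gam x

/-- The Gaussian quantile function, meaningful on the open interval `(0, 1)` only. -/
noncomputable def Psi : ℝ → ℝ := Function.invFun Phi

lemma phi_eq (x : ℝ) : phi x = (√(2 * π))⁻¹ * Real.exp (-x ^ 2 / 2) := by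
  simp [phi, gaussianPDFReal]

lemma phi_pos (x : ℝ) : 0 < phi x := gaussianPDFReal_pos 0 1 x one_ne_zero

lemma hasDerivAt_phi (x : ℝ) : HasDerivAt phi (-x * phi x) x := by
  have h : phi = fun x => (√(2 * π))⁻¹ * Real.exp (-x ^ 2 / 2) := funext phi_eq
  rw [phi_eq, h]
  have h1 : HasDerivAt (fun x : ℝ => -x ^ 2 / 2) (-x) x := by
    have := ((hasDerivAt_pow 2 x).fun_neg).div_const 2
    refine this.congr_deriv ?_
    simp
    ring
  refine ((h1.exp).const_mul (√(2 * π))⁻¹).congr_deriv ?_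
  ring

lemma continuous_phi : Continuous phi :=
  continuous_iff_continuousAt.2 fun x => (hasDerivAt_phi x).continuousAt

lemma integrable_phi : Integrable phi := integrable_gaussianPDFReal 0 1

lemma Phi_eq (x : ℝ) : Phi x = ∫ t in Iic x, phi t := by
  rw [Phi, cdf_eq_real, measureReal_def, gaussianReal_apply_eq_integral 0 one_ne_zero,
    ENNReal.toReal_ofReal]
  · rfl
  · exact setIntegral_nonneg measurableSet_Iic fun t _ => (phi_pos t).le

lemma hasDerivAt_Phi (x : ℝ) : HasDerivAt Phi (phi x) x := by
  have h : Phi = fun y => Phi 0 + ∫ t in (0 : ℝ)..y, phi t := by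
    funext y
    rw [← intervalIntegral.integral_Iic_sub_Iic integrable_phi.integrableOn
      integrable_phi.integrableOn, ← Phi_eq, ← Phi_eq]
    ring
  rw [h]
  exact (intervalIntegral.integral_hasDerivAt_right (integrable_phi.intervalIntegrable)
    (continuous_phi.stronglyMeasurableAtFilter _ _) continuous_phi.continuousAt).const_add _

lemma continuous_Phi : Continuous Phi :=
  continuous_iff_continuousAt.2 fun x => (hasDerivAt_Phi x).continuousAt

lemma Phi_strictMono : StrictMono Phi :=
  strictMono_of_hasDerivAt_pos hasDerivAt_Phi phi_pos

lemma tendsto_Phi_atTop : Tendsto Phi atTop (𝓝 1) := tendsto_cdf_atTop gam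

lemma tendsto_Phi_atBot : Tendsto Phi atBot (𝓝 0) := tendsto_cdf_atBot gam

lemma Phi_pos (x : ℝ) : 0 < Phi x :=
  (cdf_nonneg gam (x - 1)).trans_lt (Phi_strictMono (by linarith))

lemma Phi_lt_one (x : ℝ) : Phi x < 1 :=
  (Phi_strictMono (show x < x + 1 by linarith)).trans_le (cdf_le_one gam (x + 1))

lemma Phi_neg (x : ℝ) : Phi (-x) = 1 - Phi x := by
  have h : ∀ y, HasDerivAt (fun y => Phi y + Phi (-y)) 0 y := fun y => by
    have h1 := (hasDerivAt_Phi (-y)).comp y (hasDerivAt_neg y)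
    refine ((hasDerivAt_Phi y).add h1).congr_deriv ?_
    simp [phi_eq]
  have h2 : ∀ y, Phi y + Phi (-y) = Phi x + Phi (-x) := fun y =>
    is_const_of_deriv_eq_zero (fun z => (h z).differentiableAt) (fun z => (h z).deriv) y x
  have h3 : Tendsto (fun y => Phi y + Phi (-y)) atTop (𝓝 (1 + 0)) :=
    tendsto_Phi_atTop.add (tendsto_Phi_atBot.comp tendsto_neg_atTop_atBot)
  simp only [h2] at h3
  have := tendsto_nhds_unique h3 tendsto_const_nhds
  linarith

lemma Phi_zero : Phi 0 = 1 / 2 := by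
  have := Phi_neg 0
  simp at this
  linarith

lemma exists_Phi_eq {p : ℝ} (h0 : 0 < p) (h1 : p < 1) : ∃ x, Phi x = p := by
  obtain ⟨x, hx⟩ := (tendsto_Phi_atBot.eventually_lt_const h0).exists
  obtain ⟨y, hy⟩ := (tendsto_Phi_atTop.eventually_const_lt h1).exists
  exact mem_range_of_exists_le_of_exists_ge continuous_Phi ⟨x, hx.le⟩ ⟨y, hy.le⟩

lemma Phi_Psi {p : ℝ} (h0 : 0 < p) (h1 : p < 1) : Phi (Psi p) = p :=
  Function.invFun_eq (exists_Phi_eq h0 h1)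

lemma Psi_Phi (x : ℝ) : Psi (Phi x) = x :=
  Function.leftInverse_invFun Phi_strictMono.injective x

lemma range_Phi : range Phi = Ioo 0 1 := by
  ext p
  constructor
  · rintro ⟨x, rfl⟩
    exact ⟨Phi_pos x, Phi_lt_one x⟩
  · rintro ⟨h0, h1⟩
    exact exists_Phi_eq h0 h1

lemma continuousAt_Psi {p : ℝ} (h0 : 0 < p) (h1 : p < 1) : ContinuousAt Psi p := by
  have he := Phi_strictMono.isEmbedding_of_ordConnected (by rw [range_Phi]; exact ordConnected_Ioo)
  rw [ContinuousAt, he.tendsto_nhds_iff, Phi_Psi h0 h1]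
  refine tendsto_id.congr' ?_
  filter_upwards [Ioo_mem_nhds h0 h1] with q hq
  exact (Phi_Psi hq.1 hq.2).symm

lemma hasDerivAt_Psi {p : ℝ} (h0 : 0 < p) (h1 : p < 1) :
    HasDerivAt Psi (phi (Psi p))⁻¹ p := by
  refine HasDerivAt.of_local_left_inverse (continuousAt_Psi h0 h1) (hasDerivAt_Phi _)
    (phi_pos _).ne' ?_
  filter_upwards [Ioo_mem_nhds h0 h1] with q hq
  exact Phi_Psi hq.1 hq.2

lemma Psi_le_Psi {p q : ℝ} (hp : 0 < p) (hpq : p ≤ q) (hq : q < 1) : Psi p ≤ Psi q := by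
  rwa [← Phi_strictMono.le_iff_le, Phi_Psi hp (hpq.trans_lt hq), Phi_Psi (hp.trans_le hpq) hq]

/-! ### The heat semigroup on the line -/

/-- The heat semigroup at time `r ^ 2`, that is `x ↦ 𝔼 w (x + r Z)` with `Z` standard Gaussian;
parametrizing by `r` keeps everything smooth at `r = 0`. -/
noncomputable def heat (w : ℝ → ℝ) (r x : ℝ) : ℝ := ∫ z, w (x + r * z) ∂gam

lemma integrable_of_bdd {X : Type*} [MeasurableSpace X] {μ : Measure X} [IsFiniteMeasure μ]
    {f : X → ℝ} {M : ℝ} (hf : AEStronglyMeasurable f μ) (hM : ∀ x, |f x| ≤ M) :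
    Integrable f μ :=
  Integrable.of_bound hf M (Eventually.of_forall hM)

lemma integrable_abs_gam : Integrable (fun z : ℝ => |z|) gam :=
  (memLp_one_iff_integrable.1 (memLp_id_gaussianReal 1)).abs

/-- A function with two derivatives, all bounded by `M`, the second one continuous. -/
structure C2b (w w1 w2 : ℝ → ℝ) (M : ℝ) : Prop where
  d1 : ∀ x, HasDerivAt w (w1 x) x
  d2 : ∀ x, HasDerivAt w1 (w2 x) x
  c2 : Continuous w2
  b0 : ∀ x, |w x| ≤ M
  b1 : ∀ x, |w1 x| ≤ M
  b2 : ∀ x, |w2 x| ≤ M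

namespace C2b

variable {w w1 w2 : ℝ → ℝ} {M : ℝ}

lemma c0 (h : C2b w w1 w2 M) : Continuous w :=
  continuous_iff_continuousAt.2 fun x => (h.d1 x).continuousAt

lemma c1 (h : C2b w w1 w2 M) : Continuous w1 :=
  continuous_iff_continuousAt.2 fun x => (h.d2 x).continuousAt

lemma M_nonneg (h : C2b w w1 w2 M) : 0 ≤ M := (abs_nonneg _).trans (h.b0 0)

end C2b

lemma continuous_heat {w : ℝ → ℝ} {M : ℝ} (hc : Continuous w) (hM : ∀ x, |w x| ≤ M) :
    Continuous fun p : ℝ × ℝ => heat w p.1 p.2 := by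
  unfold heat
  refine continuous_of_dominated (bound := fun _ => M) (fun p => ?_)
    (fun p => Eventually.of_forall fun z => hM _) (integrable_const M)
    (Eventually.of_forall fun z => by fun_prop)
  exact (by fun_prop : Continuous fun z => w (p.2 + p.1 * z)).aestronglyMeasurable

lemma abs_heat_le {w : ℝ → ℝ} {M : ℝ} (hM : ∀ x, |w x| ≤ M) (r x : ℝ) : |heat w r x| ≤ M := by
  have := norm_integral_le_of_norm_le_const (μ := gam) (f := fun z => w (x + r * z)) (C := M)
    (Eventually.of_forall fun z => hM _)
  simpa [heat] using this

lemma le_heat {w : ℝ → ℝ} {m M : ℝ} (hc : Continuous w) (hM : ∀ x, |w x| ≤ M)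
    (hm : ∀ x, m ≤ w x) (r x : ℝ) : m ≤ heat w r x := by
  have h : ∫ _ : ℝ, m ∂gam ≤ heat w r x := by
    refine integral_mono (integrable_const m) (integrable_of_bdd (M := M) ?_ fun z => hM _)
      fun z => hm _
    exact (by fun_prop : Continuous fun z => w (x + r * z)).aestronglyMeasurable
  simpa using h

lemma heat_le {w : ℝ → ℝ} {m M : ℝ} (hc : Continuous w) (hM : ∀ x, |w x| ≤ M)
    (hm : ∀ x, w x ≤ m) (r x : ℝ) : heat w r x ≤ m := by
  have h : heat w r x ≤ ∫ _ : ℝ, m ∂gam := by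
    refine integral_mono (integrable_of_bdd (M := M) ?_ fun z => hM _) (integrable_const m)
      fun z => hm _
    exact (by fun_prop : Continuous fun z => w (x + r * z)).aestronglyMeasurable
  simpa using h

lemma heat_zero (w : ℝ → ℝ) (x : ℝ) : heat w 0 x = w x := by simp [heat]

lemma hasDerivAt_heat {w w1 : ℝ → ℝ} {M : ℝ} (hd : ∀ x, HasDerivAt w (w1 x) x)
    (hc1 : Continuous w1) (h0 : ∀ x, |w x| ≤ M) (h1 : ∀ x, |w1 x| ≤ M) (r x : ℝ) :
    HasDerivAt (heat w r) (heat w1 r x) x := by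
  have hc : Continuous w := continuous_iff_continuousAt.2 fun x => (hd x).continuousAt
  refine (hasDerivAt_integral_of_dominated_loc_of_deriv_le (μ := gam) (𝕜 := ℝ)
    (F := fun x z => w (x + r * z)) (F' := fun x z => w1 (x + r * z)) (bound := fun _ => M)
    (x₀ := x) univ_mem ?_ ?_ ?_ ?_ (integrable_const M) ?_).2
  · exact Eventually.of_forall fun y =>
      (by fun_prop : Continuous fun z => w (y + r * z)).aestronglyMeasurable
  · exact integrable_of_bdd
      (by fun_prop : Continuous fun z => w (x + r * z)).aestronglyMeasurable fun z => h0 _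
  · exact (by fun_prop : Continuous fun z => w1 (x + r * z)).aestronglyMeasurable
  · exact Eventually.of_forall fun z y _ => h1 _
  · exact Eventually.of_forall fun z y _ => (hd _).comp_add_const y (r * z)

/-- Gaussian integration by parts. -/
lemma stein {g g1 : ℝ → ℝ} {M : ℝ} (hd : ∀ x, HasDerivAt g (g1 x) x)
    (hc1 : Continuous g1) (h0 : ∀ x, |g x| ≤ M) (h1 : ∀ x, |g1 x| ≤ M) :
    ∫ z, g z * z ∂gam = ∫ z, g1 z ∂gam := by
  have hc : Continuous g := continuous_iff_continuousAt.2 fun x => (hd x).continuousAt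
  have hi : ∀ f : ℝ → ℝ, Integrable f gam → Integrable (fun z => phi z * f z) := by
    intro f hf
    rw [gam, gaussianReal_of_var_ne_zero _ one_ne_zero,
      integrable_withDensity_iff_integrable_smul' (measurable_gaussianPDF _ _)
      (ae_of_all _ fun _ ↦ gaussianPDF_lt_top)] at hf
    simpa [phi] using hf
  rw [integral_gaussianReal_eq_integral_smul one_ne_zero,
    integral_gaussianReal_eq_integral_smul one_ne_zero]
  have hgz : Integrable (fun z => g z * z) gam := by
    refine Integrable.mono' (integrable_abs_gam.const_mul M)
      (by fun_prop : Continuous fun z => g z * z).aestronglyMeasurable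
      (Eventually.of_forall fun z => ?_)
    rw [Real.norm_eq_abs, abs_mul]
    exact mul_le_mul_of_nonneg_right (h0 z) (abs_nonneg z)
  have := integral_mul_deriv_eq_deriv_mul_of_integrable (u := phi) (v := g)
    (u' := fun z => -z * phi z) (v' := g1) (fun x _ => hasDerivAt_phi x) (fun x _ => hd x)
    (hi _ (integrable_of_bdd hc1.aestronglyMeasurable h1))
    ((hi _ hgz).neg.congr (Eventually.of_forall fun z => by simp; ring))
    (hi _ (integrable_of_bdd hc.aestronglyMeasurable h0))
  simp only [smul_eq_mul]
  change _ = ∫ x, phi x * g1 x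
  rw [this, ← integral_neg]
  refine integral_congr_ae (Eventually.of_forall fun z => ?_)
  simp [phi]
  ring

/-- The heat equation in the parameter `r`, from integration by parts under the integral. -/
lemma hasDerivAt_heat_time {w w1 w2 : ℝ → ℝ} {M : ℝ} (h : C2b w w1 w2 M) (r x : ℝ) :
    HasDerivAt (fun r => heat w r x) (r * heat w2 r x) r := by
  have hc := h.c0
  have hc1 := h.c1
  have hc2 := h.c2
  have key : HasDerivAt (fun r => heat w r x) (∫ z, w1 (x + r * z) * z ∂gam) r := by
    refine (hasDerivAt_integral_of_dominated_loc_of_deriv_le (μ := gam) (𝕜 := ℝ)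
      (F := fun r z => w (x + r * z)) (F' := fun r z => w1 (x + r * z) * z)
      (bound := fun z => M * |z|)
      (x₀ := r) univ_mem ?_ ?_ ?_ ?_ (integrable_abs_gam.const_mul M) ?_).2
    · exact Eventually.of_forall fun y =>
        (by fun_prop : Continuous fun z => w (x + y * z)).aestronglyMeasurable
    · exact integrable_of_bdd
        (by fun_prop : Continuous fun z => w (x + r * z)).aestronglyMeasurable fun z => h.b0 _
    · exact (by fun_prop : Continuous fun z => w1 (x + r * z) * z).aestronglyMeasurable
    · refine Eventually.of_forall fun z y _ => ?_
      rw [Real.norm_eq_abs, abs_mul]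
      exact mul_le_mul_of_nonneg_right (h.b1 _) (abs_nonneg z)
    · refine Eventually.of_forall fun z y _ => ?_
      have h1 : HasDerivAt (fun r => x + r * z) z y := by
        simpa using ((hasDerivAt_id y).mul_const z).const_add x
      exact (h.d1 _).comp y h1
  convert key using 1
  have hM := h.M_nonneg
  have h1 : ∀ z, HasDerivAt (fun z => w1 (x + r * z)) (r * w2 (x + r * z)) z := by
    intro z
    have h1 : HasDerivAt (fun z => x + r * z) r z := by
      simpa using ((hasDerivAt_id z).const_mul r).const_add x
    exact ((h.d2 _).comp z h1).congr_deriv (mul_comm _ _)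
  rw [stein (M := M * (1 + |r|)) h1 (by fun_prop), integral_const_mul]
  · rfl
  · intro z
    have := h.b1 (x + r * z)
    nlinarith [abs_nonneg r, mul_nonneg hM (abs_nonneg r)]
  · intro z
    rw [abs_mul]
    have := h.b2 (x + r * z)
    nlinarith [abs_nonneg r]

/-! ### Borell's maximum principle -/

/-- A solution `A` of `∂A/∂r = r (A'' - A A' ^ 2)`, with its two space derivatives `A1` and `A2`,
such that `A` and `A1` are bounded by `G`. The equation is that of `Psi (heat w r x)`. -/
structure Flow (A A1 A2 : ℝ → ℝ → ℝ) (G : ℝ) : Prop where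
  cont : Continuous fun p : ℝ × ℝ => A p.1 p.2
  b0 : ∀ r x, |A r x| ≤ G
  b1 : ∀ r x, |A1 r x| ≤ G
  d1 : ∀ r x, HasDerivAt (A r) (A1 r x) x
  d2 : ∀ r x, HasDerivAt (A1 r) (A2 r x) x
  dr : ∀ r x, HasDerivAt (fun r => A r x) (r * (A2 r x - A r x * A1 r x ^ 2)) r

lemma Flow.mono {A A1 A2 : ℝ → ℝ → ℝ} {G G' : ℝ} (h : Flow A A1 A2 G) (hG : G ≤ G') :
    Flow A A1 A2 G' :=
  ⟨h.cont, fun r x => (h.b0 r x).trans hG, fun r x => (h.b1 r x).trans hG, h.d1, h.d2, h.dr⟩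

lemma second_deriv_nonneg {h h' : ℝ → ℝ} {c : ℝ} (hd : ∀ x, HasDerivAt h (h' x) x)
    (hc : HasDerivAt h' c 0) (hmin : ∀ x, h 0 ≤ h x) : 0 ≤ c := by
  by_contra! hneg
  have h0 : h' 0 = 0 := IsLocalMin.hasDerivAt_eq_zero (Eventually.of_forall hmin) (hd 0)
  have hs := hc.tendsto_slope_zero_right
  simp only [zero_add, h0, sub_zero, smul_eq_mul] at hs
  obtain ⟨δ, hδ, hδ'⟩ := mem_nhdsGT_iff_exists_Ioo_subset.1 (hs.eventually_lt_const hneg)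
  have hanti : StrictAntiOn h (Icc 0 (δ / 2)) := by
    refine strictAntiOn_of_deriv_neg (convex_Icc _ _)
      (fun x _ => (hd x).continuousAt.continuousWithinAt) fun x hx => ?_
    rw [interior_Icc] at hx
    rw [(hd x).deriv]
    have hx' : x⁻¹ * h' x < 0 := hδ' ⟨hx.1, by linarith [hx.2, hx.1]⟩
    have := mul_neg_of_pos_of_neg hx.1 hx'
    rwa [mul_inv_cancel_left₀ hx.1.ne'] at this
  have hδ0 : (0 : ℝ) < δ := hδ
  have := hanti ⟨le_rfl, by linarith⟩ ⟨by linarith, le_rfl⟩ (by linarith : (0 : ℝ) < δ / 2)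
  exact absurd (hmin (δ / 2)) (not_le.2 this)

lemma deriv_nonpos_of_left_min {h : ℝ → ℝ} {c r : ℝ} (hr : 0 < r) (hd : HasDerivAt h c r)
    (hmin : ∀ x, 0 ≤ x → x ≤ r → h r ≤ h x) : c ≤ 0 := by
  have hs := hd.tendsto_slope_zero_left
  refine le_of_tendsto hs ?_
  filter_upwards [Ioo_mem_nhdsLT (show -r < 0 by linarith)] with x hx
  have := hmin (r + x) (by linarith [hx.1]) (by linarith [hx.2])
  exact mul_nonpos_of_nonpos_of_nonneg (inv_nonpos.2 hx.2.le) (by linarith)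

/-- The algebra at a negative minimum of `C r ((s + t) / 2) - A r s / 2 - B r t / 2` penalized by
`d (1 + s ^ 2 + t ^ 2)`, with `d = ε e ^ (κ r)` and `κ = 5 + 8 G ^ 2`: the first-order conditions
`hs`, `ht`, the second-order condition `h2` along the diagonal and the time condition `hr` are
incompatible. The nonlinear terms nearly cancel, because the slopes differ by `4 d s` and `4 d t` only. -/
lemma contact_absurd {G d r s t C C1 C2 A A1 A2 B B1 B2 : ℝ} (hd : 0 < d)
    (hr0 : 0 < r) (hr1 : r ≤ 1)
    (hA : |A| ≤ G) (hB : |B| ≤ G) (hA1 : |A1| ≤ G) (hB1 : |B1| ≤ G) (hC1 : |C1| ≤ G)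
    (hs : A1 - C1 = 4 * d * s) (ht : B1 - C1 = 4 * d * t)
    (hD : C - A / 2 - B / 2 < 0) (h2 : 0 ≤ C2 - A2 / 2 - B2 / 2 + 4 * d)
    (hr : r * (C2 - C * C1 ^ 2) - r * (A2 - A * A1 ^ 2) / 2 - r * (B2 - B * B1 ^ 2) / 2
      + (5 + 8 * G ^ 2) * d * (1 + s ^ 2 + t ^ 2) ≤ 0) : False := by
  have hG : 0 ≤ G := (abs_nonneg _).trans hA
  have key : ∀ P P1 u : ℝ, |P| ≤ G → |P1| ≤ G → P1 - C1 = 4 * d * u →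
      P * (C1 ^ 2 - P1 ^ 2) ≤ 8 * G ^ 2 * d * |u| := by
    intro P P1 u hP hP1 hu
    have h1 : |P * (C1 ^ 2 - P1 ^ 2)| = |P| * (|C1 + P1| * |P1 - C1|) := by
      rw [← abs_mul, ← abs_mul, ← abs_neg]
      congr 1
      ring
    have h2 : |C1 + P1| ≤ 2 * G := (abs_add_le _ _).trans (by linarith)
    have h3 : |P1 - C1| = 4 * d * |u| := by
      rw [hu, abs_mul, abs_of_pos (by linarith)]
    refine (le_abs_self _).trans ?_
    rw [h1, h3]
    calc |P| * (|C1 + P1| * (4 * d * |u|)) ≤ G * (2 * G * (4 * d * |u|)) := by gcongr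
      _ = 8 * G ^ 2 * d * |u| := by ring
  have kA := key A A1 s hA hA1 hs
  have kB := key B B1 t hB hB1 ht
  have hX : C * C1 ^ 2 - A * A1 ^ 2 / 2 - B * B1 ^ 2 / 2 ≤ 4 * G ^ 2 * d * (|s| + |t|) := by
    nlinarith [mul_nonneg (sq_nonneg C1) (sub_nonneg.2 hD.le)]
  have hs' : |s| ≤ (1 + s ^ 2) / 2 := by nlinarith [sq_abs s, sq_nonneg (|s| - 1)]
  have ht' : |t| ≤ (1 + t ^ 2) / 2 := by nlinarith [sq_abs t, sq_nonneg (|t| - 1)]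
  have hst : 4 * G ^ 2 * d * (|s| + |t|) ≤ 4 * G ^ 2 * d * (1 + s ^ 2 + t ^ 2) := by
    refine mul_le_mul_of_nonneg_left ?_ (by positivity)
    linarith [sq_nonneg s, sq_nonneg t]
  set Q := 1 + s ^ 2 + t ^ 2 with hQ
  have hQ1 : 1 ≤ Q := by nlinarith [sq_nonneg s, sq_nonneg t]
  have hlow : -(4 * d) - 4 * G ^ 2 * d * Q ≤
      (C2 - A2 / 2 - B2 / 2) - (C * C1 ^ 2 - A * A1 ^ 2 / 2 - B * B1 ^ 2 / 2) := by linarith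
  have hpos : 0 ≤ 4 * d + 4 * G ^ 2 * d * Q := by positivity
  set T := (C2 - A2 / 2 - B2 / 2) - (C * C1 ^ 2 - A * A1 ^ 2 / 2 - B * B1 ^ 2 / 2) with hT
  set P := 4 * d + 4 * G ^ 2 * d * Q with hP
  have hmul : -P ≤ r * T := by
    have h3 : r * (-P) ≤ r * T := mul_le_mul_of_nonneg_left (by rw [hP]; linarith) hr0.le
    have h4 : r * P ≤ 1 * P := mul_le_mul_of_nonneg_right hr1 hpos
    linarith
  have hdQ : d ≤ d * Q := le_mul_of_one_le_right hd.le hQ1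
  have hGQ : 0 ≤ G ^ 2 * d * Q := by positivity
  have hr' : r * T + (5 * (d * Q) + 8 * (G ^ 2 * d * Q)) ≤ 0 := by
    rw [hT]
    refine le_of_eq_of_le ?_ hr
    ring
  have hP' : P = 4 * d + 4 * (G ^ 2 * d * Q) := by rw [hP]; ring
  linarith

/-- Borell's maximum principle: midpoint domination is preserved by the flow. -/
lemma flow_comparison {A A1 A2 B B1 B2 C C1 C2 : ℝ → ℝ → ℝ} {G : ℝ}
    (hA : Flow A A1 A2 G) (hB : Flow B B1 B2 G) (hC : Flow C C1 C2 G)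
    (h0 : ∀ s t, A 0 s + B 0 t ≤ 2 * C 0 ((s + t) / 2)) (s t : ℝ) :
    A 1 s + B 1 t ≤ 2 * C 1 ((s + t) / 2) := by
  have hG : 0 ≤ G := (abs_nonneg _).trans (hA.b0 0 0)
  -- the growth rate of the penalization has to beat the errors it introduces in the equation
  set κ : ℝ := 5 + 8 * G ^ 2 with hκ
  have hκ0 : 0 ≤ κ := by positivity
  let F : ℝ → ℝ × ℝ × ℝ → ℝ := fun ε p => C p.1 ((p.2.1 + p.2.2) / 2) - A p.1 p.2.1 / 2
    - B p.1 p.2.2 / 2 + ε * Real.exp (κ * p.1) * (1 + p.2.1 ^ 2 + p.2.2 ^ 2)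
  have main : ∀ ε > 0, 0 ≤ F ε (1, s, t) := by
    intro ε hε
    by_contra! hneg
    have hFc : Continuous (F ε) := by
      have h1 : Continuous fun p : ℝ × ℝ × ℝ => C p.1 ((p.2.1 + p.2.2) / 2) :=
        hC.cont.comp (g := fun p : ℝ × ℝ => C p.1 p.2)
          (f := fun p : ℝ × ℝ × ℝ => (p.1, (p.2.1 + p.2.2) / 2)) (by fun_prop)
      have h2 : Continuous fun p : ℝ × ℝ × ℝ => A p.1 p.2.1 :=
        hA.cont.comp (g := fun p : ℝ × ℝ => A p.1 p.2)
          (f := fun p : ℝ × ℝ × ℝ => (p.1, p.2.1)) (by fun_prop)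
      have h3 : Continuous fun p : ℝ × ℝ × ℝ => B p.1 p.2.2 :=
        hB.cont.comp (g := fun p : ℝ × ℝ => B p.1 p.2)
          (f := fun p : ℝ × ℝ × ℝ => (p.1, p.2.2)) (by fun_prop)
      exact ((h1.sub (h2.div_const 2)).sub (h3.div_const 2)).add (by fun_prop)
    -- outside a large box the penalization beats the bounded part
    have hfar : ∀ p : ℝ × ℝ × ℝ, 0 ≤ p.1 → 2 * G / ε ≤ p.2.1 ^ 2 + p.2.2 ^ 2 → 0 ≤ F ε p := by
      rintro ⟨r, x, y⟩ hr hxy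
      simp only at hr hxy
      have e1 : 1 ≤ Real.exp (κ * r) := Real.one_le_exp (by positivity)
      have e2 : 2 * G ≤ ε * (x ^ 2 + y ^ 2) := by
        rw [div_le_iff₀ hε] at hxy
        linarith
      have e3 : ε * (x ^ 2 + y ^ 2) ≤ ε * Real.exp (κ * r) * (1 + x ^ 2 + y ^ 2) := by
        have : ε * 1 ≤ ε * Real.exp (κ * r) := by gcongr
        calc ε * (x ^ 2 + y ^ 2) ≤ ε * 1 * (1 + x ^ 2 + y ^ 2) := by nlinarith
          _ ≤ _ := by gcongr
      have := abs_le.1 (hC.b0 r ((x + y) / 2))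
      have := abs_le.1 (hA.b0 r x)
      have := abs_le.1 (hB.b0 r y)
      simp only [F]
      linarith
    set R : ℝ := 2 * G / ε + 1 + |s| + |t| with hR
    have hR1 : 1 ≤ R := by
      have : 0 ≤ 2 * G / ε := by positivity
      linarith [abs_nonneg s, abs_nonneg t]
    have hbig : ∀ x : ℝ, R ≤ |x| → 2 * G / ε ≤ x ^ 2 := by
      intro x hx
      rw [← sq_abs]
      nlinarith [abs_nonneg s, abs_nonneg t]
    have hK : IsCompact (Icc (0 : ℝ) 1 ×ˢ Icc (-R) R ×ˢ Icc (-R) R) :=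
      isCompact_Icc.prod (isCompact_Icc.prod isCompact_Icc)
    have hmem : ((1 : ℝ), s, t) ∈ Icc (0 : ℝ) 1 ×ˢ Icc (-R) R ×ˢ Icc (-R) R := by
      have : 0 ≤ 2 * G / ε := by positivity
      refine ⟨⟨zero_le_one, le_rfl⟩, abs_le.1 ?_, abs_le.1 ?_⟩ <;>
      · simp only
        linarith [abs_nonneg s, abs_nonneg t]
    obtain ⟨⟨r, x, y⟩, hp, hmin⟩ := hK.exists_isMinOn ⟨_, hmem⟩ hFc.continuousOn
    have hFneg : F ε (r, x, y) < 0 := (hmin hmem).trans_lt hneg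
    have hr0 : 0 ≤ r := hp.1.1
    have hr1 : r ≤ 1 := hp.1.2
    have hglob : ∀ r' x' y', 0 ≤ r' → r' ≤ 1 → F ε (r, x, y) ≤ F ε (r', x', y') := by
      intro r' x' y' h1 h2
      by_cases hx : |x'| ≤ R
      · by_cases hy : |y'| ≤ R
        · exact hmin (⟨⟨h1, h2⟩, abs_le.1 hx, abs_le.1 hy⟩ :
            (r', x', y') ∈ Icc (0 : ℝ) 1 ×ˢ Icc (-R) R ×ˢ Icc (-R) R)
        · refine hFneg.le.trans (hfar _ h1 ?_)
          have := hbig y' (not_le.1 hy).le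
          simp only
          nlinarith [sq_nonneg x']
      · refine hFneg.le.trans (hfar _ h1 ?_)
        have := hbig x' (not_le.1 hx).le
        simp only
        nlinarith [sq_nonneg y']
    have hrpos : 0 < r := by
      refine lt_of_le_of_ne hr0 fun h => ?_
      subst h
      have h1 := h0 x y
      have h2 : 0 ≤ ε * Real.exp (κ * 0) * (1 + x ^ 2 + y ^ 2) := by positivity
      simp only [F] at hFneg
      linarith
    set d : ℝ := ε * Real.exp (κ * r) with hd
    have hd0 : 0 < d := by positivity
    -- first-order conditions in `x` and `y`
    have hmid : ∀ c x : ℝ, HasDerivAt (fun x : ℝ => (x + c) / 2) (1 / 2) x := fun c x =>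
      ((hasDerivAt_id x).add_const c).div_const 2
    have hx : HasDerivAt (fun x' => F ε (r, x', y))
        (C1 r ((x + y) / 2) * (1 / 2) - A1 r x / 2 + d * (2 * x)) x := by
      have e1 := (hC.d1 r ((x + y) / 2)).comp x (hmid y x)
      have e2 := (hA.d1 r x).div_const 2
      have e3 : HasDerivAt (fun x' : ℝ => d * (1 + x' ^ 2 + y ^ 2)) (d * (2 * x)) x := by
        have := (((hasDerivAt_pow 2 x).const_add 1).add_const (y ^ 2)).const_mul d
        simpa using this
      exact ((e1.sub e2).sub_const (B r y / 2)).add e3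
    have hy : HasDerivAt (fun y' => F ε (r, x, y'))
        (C1 r ((x + y) / 2) * (1 / 2) - B1 r y / 2 + d * (2 * y)) y := by
      have e1 : HasDerivAt (fun y' => C r ((x + y') / 2)) (C1 r ((x + y) / 2) * (1 / 2)) y := by
        have := (hC.d1 r ((x + y) / 2)).comp_of_eq y (hmid x y) (by ring)
        refine this.congr_of_eventuallyEq (Eventually.of_forall fun z => ?_)
        simp [add_comm]
      have e2 := (hB.d1 r y).div_const 2
      have e3 : HasDerivAt (fun y' : ℝ => d * (1 + x ^ 2 + y' ^ 2)) (d * (2 * y)) y := by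
        have := ((hasDerivAt_pow 2 y).const_add (1 + x ^ 2)).const_mul d
        simpa using this
      exact ((e1.sub_const (A r x / 2)).sub e2).add e3
    have hx0 := IsLocalMin.hasDerivAt_eq_zero
      (Eventually.of_forall fun x' => hglob r x' y hr0 hr1) hx
    have hy0 := IsLocalMin.hasDerivAt_eq_zero
      (Eventually.of_forall fun y' => hglob r x y' hr0 hr1) hy
    -- second-order condition along the diagonal direction
    have hdiag := second_deriv_nonneg
      (h := fun z => F ε (r, x + z, y + z))
      (h' := fun z => C1 r ((x + y) / 2 + z) - A1 r (x + z) / 2 - B1 r (y + z) / 2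
        + d * (2 * (x + z) + 2 * (y + z)))
      (c := C2 r ((x + y) / 2) - A2 r x / 2 - B2 r y / 2 + d * 4)
      (by
        intro z
        have e1 : HasDerivAt (fun z => C r ((x + z + (y + z)) / 2))
            (C1 r ((x + y) / 2 + z)) z := by
          have := (hC.d1 r ((x + y) / 2 + z)).comp_const_add ((x + y) / 2) z
          refine this.congr_of_eventuallyEq (Eventually.of_forall fun z => ?_)
          simp only
          congr 1
          ring
        have e2 := ((hA.d1 r (x + z)).comp_const_add x z).div_const 2
        have e3 := ((hB.d1 r (y + z)).comp_const_add y z).div_const 2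
        have e4 : HasDerivAt (fun z : ℝ => d * (1 + (x + z) ^ 2 + (y + z) ^ 2))
            (d * (2 * (x + z) + 2 * (y + z))) z := by
          have f1 := ((hasDerivAt_id z).const_add x).pow 2
          have f2 := ((hasDerivAt_id z).const_add y).pow 2
          have := ((f1.const_add 1).add f2).const_mul d
          simpa using this
        exact ((e1.sub e2).sub e3).add e4)
      (by
        have e1 := (hC.d2 r ((x + y) / 2 + 0)).comp_const_add ((x + y) / 2) 0
        have e2 := ((hA.d2 r (x + 0)).comp_const_add x 0).div_const 2
        have e3 := ((hB.d2 r (y + 0)).comp_const_add y 0).div_const 2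
        have e4 : HasDerivAt (fun z : ℝ => d * (2 * (x + z) + 2 * (y + z))) (d * 4) 0 := by
          have f1 := ((hasDerivAt_id (0 : ℝ)).const_add x).const_mul 2
          have f2 := ((hasDerivAt_id (0 : ℝ)).const_add y).const_mul 2
          refine ((f1.add f2).const_mul d).congr_deriv ?_
          norm_num
        refine (((e1.sub e2).sub e3).add e4).congr_deriv ?_
        simp only [add_zero])
      (by
        intro z
        have := hglob r (x + z) (y + z) hr0 hr1
        simpa using this)
    -- the time derivative at the first contact
    have htime : HasDerivAt (fun r' => F ε (r', x, y))
        (r * (C2 r ((x + y) / 2) - C r ((x + y) / 2) * C1 r ((x + y) / 2) ^ 2)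
          - r * (A2 r x - A r x * A1 r x ^ 2) / 2 - r * (B2 r y - B r y * B1 r y ^ 2) / 2
          + κ * d * (1 + x ^ 2 + y ^ 2)) r := by
      have e1 := hC.dr r ((x + y) / 2)
      have e2 := (hA.dr r x).div_const 2
      have e3 := (hB.dr r y).div_const 2
      have e4 : HasDerivAt (fun r' : ℝ => ε * Real.exp (κ * r') * (1 + x ^ 2 + y ^ 2))
          (κ * d * (1 + x ^ 2 + y ^ 2)) r := by
        have := ((((hasDerivAt_id r).const_mul κ).exp).const_mul ε).mul_const (1 + x ^ 2 + y ^ 2)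
        refine this.congr_deriv ?_
        simp only [id, hd, mul_one]
        ring
      exact ((e1.sub e2).sub e3).add e4
    have htime0 := deriv_nonpos_of_left_min hrpos htime
      fun r' h1 h2 => hglob r' x y h1 (h2.trans hr1)
    have hDneg : C r ((x + y) / 2) - A r x / 2 - B r y / 2 < 0 := by
      have h2 : 0 ≤ d * (1 + x ^ 2 + y ^ 2) := by positivity
      simp only [F] at hFneg
      linarith
    exact contact_absurd (G := G) hd0 hrpos hr1 (hA.b0 r x) (hB.b0 r y) (hA.b1 r x) (hB.b1 r y)
      (hC.b1 r ((x + y) / 2)) (by linarith) (by linarith) hDneg (by linarith) htime0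
  have hlim : Tendsto (fun ε => F ε (1, s, t)) (𝓝[>] 0)
      (𝓝 (F 0 (1, s, t))) := by
    have : Continuous fun ε => F ε (1, s, t) := by
      simp only [F]
      fun_prop
    exact (this.tendsto 0).mono_left nhdsWithin_le_nhds
  have hfin := ge_of_tendsto hlim (by
    filter_upwards [self_mem_nhdsWithin] with ε hε using main ε hε)
  simp only [F] at hfin
  linarith

lemma phi_le_one (x : ℝ) : phi x ≤ 1 := by
  rw [phi_eq]
  have h1 : (√(2 * π))⁻¹ ≤ 1 := by
    refine inv_le_one_of_one_le₀ ?_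
    rw [Real.one_le_sqrt]
    linarith [Real.pi_gt_three]
  have h2 : Real.exp (-x ^ 2 / 2) ≤ 1 := Real.exp_le_one_iff.2 (by nlinarith [sq_nonneg x])
  have h3 : 0 ≤ (√(2 * π))⁻¹ := by positivity
  nlinarith [Real.exp_pos (-x ^ 2 / 2)]

/-- `Phi ∘ a` inherits two bounded derivatives; in the bound, `M ^ 3` accounts for `a a' ^ 2`. -/
lemma Phi_comp_C2b {a a1 a2 : ℝ → ℝ} {M : ℝ} (h : C2b a a1 a2 M) :
    C2b (fun x => Phi (a x)) (fun x => phi (a x) * a1 x)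
      (fun x => phi (a x) * (a2 x - a x * a1 x ^ 2)) (1 + M + M ^ 3) := by
  have hM := h.M_nonneg
  have hc := h.c0
  have hc1 := h.c1
  have hc2 := h.c2
  have hphi := continuous_phi
  refine ⟨fun x => (hasDerivAt_Phi _).comp x (h.d1 x), fun x => ?_, by fun_prop, fun x => ?_,
    fun x => ?_, fun x => ?_⟩
  · refine (((hasDerivAt_phi (a x)).comp x (h.d1 x)).mul (h.d2 x)).congr_deriv ?_
    simp only [Function.comp]
    ring
  · rw [abs_of_pos (Phi_pos _)]
    nlinarith [Phi_lt_one (a x), pow_nonneg hM 3]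
  · rw [abs_mul, abs_of_pos (phi_pos _)]
    nlinarith [phi_le_one (a x), phi_pos (a x), h.b1 x, abs_nonneg (a1 x), pow_nonneg hM 3]
  · rw [abs_mul, abs_of_pos (phi_pos _)]
    have h1 : |a2 x - a x * a1 x ^ 2| ≤ M + M ^ 3 := by
      refine (abs_sub _ _).trans ?_
      rw [abs_mul, abs_pow]
      have : |a x| * |a1 x| ^ 2 ≤ M * M ^ 2 := by
        gcongr
        · exact h.b0 x
        · exact h.b1 x
      linarith [h.b2 x, (by ring : M * M ^ 2 = M ^ 3)]
    nlinarith [phi_le_one (a x), phi_pos (a x), abs_nonneg (a2 x - a x * a1 x ^ 2)]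

/-- The flow `A r x = Psi (heat (Phi ∘ a) r x)` joins `a`, at `r = 0`, to the number
`Psi (∫ Phi ∘ a)`, at `r = 1` and `x = 0`. -/
lemma exists_flow {a a1 a2 : ℝ → ℝ} {M : ℝ} (h : C2b a a1 a2 M) :
    ∃ A A1 A2 : ℝ → ℝ → ℝ, ∃ G, Flow A A1 A2 G ∧ (∀ x, A 0 x = a x) ∧
      A 1 0 = Psi (∫ z, Phi (a z) ∂gam) := by
  have hw := Phi_comp_C2b h
  set w := fun x => Phi (a x) with hw_def
  set w1 := fun x => phi (a x) * a1 x
  set w2 := fun x => phi (a x) * (a2 x - a x * a1 x ^ 2)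
  set N := 1 + M + M ^ 3
  have hl : ∀ r x, Phi (-M) ≤ heat w r x := le_heat hw.c0 hw.b0 fun x =>
    Phi_strictMono.monotone (abs_le.1 (h.b0 x)).1
  have hu : ∀ r x, heat w r x ≤ Phi M := heat_le hw.c0 hw.b0 fun x =>
    Phi_strictMono.monotone (abs_le.1 (h.b0 x)).2
  have hp : ∀ r x, 0 < heat w r x := fun r x => (Phi_pos _).trans_le (hl r x)
  have hp1 : ∀ r x, heat w r x < 1 := fun r x => (hu r x).trans_lt (Phi_lt_one _)
  have hb : ∀ r x, |Psi (heat w r x)| ≤ M := fun r x => abs_le.2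
    ⟨by simpa [Psi_Phi] using Psi_le_Psi (Phi_pos _) (hl r x) (hp1 r x),
     by simpa [Psi_Phi] using Psi_le_Psi (hp r x) (hu r x) (Phi_lt_one _)⟩
  -- a positive lower bound for the density on `[-M, M]`
  have hphi : ∀ y, |y| ≤ M → phi M ≤ phi y := by
    intro y hy
    rw [phi_eq, phi_eq]
    have : y ^ 2 ≤ M ^ 2 := by
      rw [← sq_abs y]
      gcongr
    gcongr
  set A : ℝ → ℝ → ℝ := fun r x => Psi (heat w r x)
  set A1 : ℝ → ℝ → ℝ := fun r x => heat w1 r x * (phi (A r x))⁻¹ with hA1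
  set A2 : ℝ → ℝ → ℝ := fun r x => heat w2 r x * (phi (A r x))⁻¹ + A r x * A1 r x ^ 2 with hA2
  have hd1 : ∀ r x, HasDerivAt (A r) (A1 r x) x := fun r x => by
    refine ((hasDerivAt_Psi (hp r x) (hp1 r x)).comp x
      (hasDerivAt_heat hw.d1 hw.c1 hw.b0 hw.b1 r x)).congr_deriv ?_
    rw [mul_comm]
  refine ⟨A, A1, A2, M + N * (phi M)⁻¹, ⟨?_, fun r x => ?_, fun r x => ?_, hd1, fun r x => ?_,
    fun r x => ?_⟩, fun x => ?_, ?_⟩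
  · rw [continuous_iff_continuousAt]
    intro p
    exact ContinuousAt.comp (g := Psi) (f := fun p : ℝ × ℝ => heat w p.1 p.2)
      (continuousAt_Psi (hp _ _) (hp1 _ _)) (continuous_heat hw.c0 hw.b0).continuousAt
  · have := hb r x
    have h1 : 0 ≤ N * (phi M)⁻¹ := mul_nonneg hw.M_nonneg (inv_nonneg.2 (phi_pos M).le)
    linarith
  · have h1 := abs_heat_le hw.b1 r x
    have h2 : (phi (A r x))⁻¹ ≤ (phi M)⁻¹ := inv_anti₀ (phi_pos M) (hphi _ (hb r x))
    rw [hA1, abs_mul, abs_of_pos (inv_pos.2 (phi_pos (A r x)))]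
    have : |heat w1 r x| * (phi (A r x))⁻¹ ≤ N * (phi M)⁻¹ :=
      mul_le_mul h1 h2 (inv_nonneg.2 (phi_pos _).le) hw.M_nonneg
    linarith [h.M_nonneg]
  · have e1 := hasDerivAt_heat hw.d2 hw.c2 hw.b1 hw.b2 r x
    have e2 := ((hasDerivAt_phi (A r x)).comp x (hd1 r x)).inv (phi_pos (A r x)).ne'
    refine (e1.mul e2).congr_deriv ?_
    have := (phi_pos (A r x)).ne'
    simp only [hA2, hA1, Function.comp, Pi.inv_apply]
    generalize phi (A r x) = q at this ⊢
    field_simp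
  · refine ((hasDerivAt_Psi (hp r x) (hp1 r x)).comp r
      (hasDerivAt_heat_time hw r x)).congr_deriv ?_
    simp only [hA2]
    ring
  · simp [A, heat_zero, w, Psi_Phi]
  · simp [A, heat, w]

/-! ### The functional Ehrhard inequality on the line -/

lemma ehrhard_C2b {a a1 a2 b b1 b2 c c1 c2 : ℝ → ℝ} {M : ℝ} (ha : C2b a a1 a2 M)
    (hb : C2b b b1 b2 M) (hc : C2b c c1 c2 M) (h : ∀ s t, a s + b t ≤ 2 * c ((s + t) / 2)) :
    Psi (∫ z, Phi (a z) ∂gam) + Psi (∫ z, Phi (b z) ∂gam) ≤ 2 * Psi (∫ z, Phi (c z) ∂gam) := by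
  obtain ⟨A, A1, A2, G, hA, hA0, hA1⟩ := exists_flow ha
  obtain ⟨B, B1, B2, G', hB, hB0, hB1⟩ := exists_flow hb
  obtain ⟨C, C1, C2, G'', hC, hC0, hC1⟩ := exists_flow hc
  have := flow_comparison (hA.mono (le_max_left G (max G' G'')))
    (hB.mono ((le_max_left G' G'').trans (le_max_right G _)))
    (hC.mono ((le_max_right G' G'').trans (le_max_right G _)))
    (by simpa only [hA0, hB0, hC0] using h) 0 0
  simpa [hA1, hB1, hC1] using this

/-- The forward average of `f` over a window of length `e`. -/
noncomputable def avg (e : ℝ) (f : ℝ → ℝ) (x : ℝ) : ℝ := e⁻¹ * ∫ u in (0 : ℝ)..e, f (x + u)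

lemma hasDerivAt_avg {e : ℝ} {f : ℝ → ℝ} (hf : Continuous f) (x : ℝ) :
    HasDerivAt (avg e f) (e⁻¹ * (f (x + e) - f x)) x := by
  have h : avg e f = fun x => e⁻¹ * ((∫ u in (0 : ℝ)..(x + e), f u) - ∫ u in (0 : ℝ)..x, f u) := by
    funext x
    rw [avg, intervalIntegral.integral_comp_add_left (f := f) (d := x), add_zero,
      intervalIntegral.integral_interval_sub_left (hf.intervalIntegrable _ _)
        (hf.intervalIntegrable _ _)]
  rw [h]
  have h1 : HasDerivAt (fun x => ∫ u in (0 : ℝ)..(x + e), f u) (f (x + e)) x :=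
    ((hf.integral_hasStrictDerivAt 0 (x + e)).hasDerivAt).comp_add_const x e
  exact (h1.sub (hf.integral_hasStrictDerivAt 0 x).hasDerivAt).const_mul _

lemma continuous_avg {e : ℝ} {f : ℝ → ℝ} (hf : Continuous f) : Continuous (avg e f) :=
  continuous_iff_continuousAt.2 fun x => (hasDerivAt_avg hf x).continuousAt

lemma abs_avg_le {e M : ℝ} (he : 0 < e) {f : ℝ → ℝ} (hM : ∀ x, |f x| ≤ M) (x : ℝ) :
    |avg e f x| ≤ M := by
  have := intervalIntegral.norm_integral_le_of_norm_le_const (a := (0 : ℝ)) (b := e) (C := M)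
    (f := fun u => f (x + u)) fun u _ => hM _
  rw [Real.norm_eq_abs, sub_zero, abs_of_pos he] at this
  rw [avg, abs_mul, abs_of_pos (inv_pos.2 he)]
  calc e⁻¹ * |∫ u in (0 : ℝ)..e, f (x + u)| ≤ e⁻¹ * (M * e) := by gcongr
    _ = M := by field_simp

lemma avg_le_avg {e : ℝ} (he : 0 < e) {f g : ℝ → ℝ} (hf : Continuous f) (hg : Continuous g)
    {x y : ℝ} (h : ∀ u, f (x + u) ≤ g (y + u)) : avg e f x ≤ avg e g y := by
  unfold avg
  gcongr
  exact intervalIntegral.integral_mono_on he.le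
    ((by fun_prop : Continuous fun u => f (x + u)).intervalIntegrable _ _)
    ((by fun_prop : Continuous fun u => g (y + u)).intervalIntegrable _ _) fun u _ => h u

lemma avg_close {e δ : ℝ} (he : 0 < e) {f : ℝ → ℝ} (hf : Continuous f) {x : ℝ} {v : ℝ}
    (h : ∀ u ∈ Icc 0 e, |f (x + u) - v| ≤ δ) : |avg e f x - v| ≤ δ := by
  have h1 := intervalIntegral.norm_integral_le_of_norm_le_const (a := (0 : ℝ)) (b := e) (C := δ)
    (f := fun u => f (x + u) - v) fun u hu => by
      rw [uIoc_of_le he.le] at hu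
      exact h u ⟨hu.1.le, hu.2⟩
  rw [intervalIntegral.integral_sub
    ((by fun_prop : Continuous fun u => f (x + u)).intervalIntegrable _ _)
    (continuous_const.intervalIntegrable _ _), Real.norm_eq_abs, sub_zero, abs_of_pos he,
    intervalIntegral.integral_const, sub_zero, smul_eq_mul] at h1
  have : avg e f x - v = e⁻¹ * ((∫ u in (0 : ℝ)..e, f (x + u)) - e * v) := by
    rw [avg]
    field_simp
  rw [this, abs_mul, abs_of_pos (inv_pos.2 he)]
  calc _ ≤ e⁻¹ * (δ * e) := by gcongr
    _ = δ := by field_simp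

/-- Averaging twice makes a bounded continuous function `C2b`. -/
noncomputable def smooth (e : ℝ) (f : ℝ → ℝ) : ℝ → ℝ := avg e (avg e f)

lemma smooth_C2b {e M : ℝ} (he : 0 < e) {f : ℝ → ℝ} (hf : Continuous f) (hM : ∀ x, |f x| ≤ M) :
    C2b (smooth e f) (fun x => e⁻¹ * (avg e f (x + e) - avg e f x))
      (fun x => e⁻¹ * (e⁻¹ * (f (x + e + e) - f (x + e)) - e⁻¹ * (f (x + e) - f x)))
      (M * (1 + e⁻¹ * 2 + e⁻¹ * (e⁻¹ * 4))) := by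
  have hM0 : 0 ≤ M := (abs_nonneg _).trans (hM 0)
  have hi : 0 < e⁻¹ := inv_pos.2 he
  have h1 := abs_avg_le he hM
  refine ⟨fun x => hasDerivAt_avg (continuous_avg hf) x, fun x => ?_, by fun_prop, fun x => ?_,
    fun x => ?_, fun x => ?_⟩
  · exact (((hasDerivAt_avg hf (x + e)).comp_add_const x e).sub (hasDerivAt_avg hf x)).const_mul _
  · refine (abs_avg_le he h1 x).trans (le_mul_of_one_le_right hM0 ?_)
    nlinarith [mul_pos hi hi]
  · rw [abs_mul, abs_of_pos hi]
    have : |avg e f (x + e) - avg e f x| ≤ 2 * M :=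
      (abs_sub _ _).trans (by linarith [h1 x, h1 (x + e)])
    have h2 : e⁻¹ * |avg e f (x + e) - avg e f x| ≤ e⁻¹ * (2 * M) := by gcongr
    have h3 : 0 ≤ M * (e⁻¹ * (e⁻¹ * 4)) := by positivity
    linarith
  · have : |e⁻¹ * (f (x + e + e) - f (x + e)) - e⁻¹ * (f (x + e) - f x)| ≤ e⁻¹ * (4 * M) := by
      rw [← mul_sub, abs_mul, abs_of_pos hi]
      gcongr
      have := abs_le.1 (hM (x + e + e))
      have := abs_le.1 (hM (x + e))
      have := abs_le.1 (hM x)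
      rw [abs_le]
      constructor <;> linarith
    rw [abs_mul, abs_of_pos hi]
    have h2 := mul_le_mul_of_nonneg_left this hi.le
    have h3 : 0 ≤ M * (e⁻¹ * 2) := by positivity
    linarith

lemma tendsto_smooth {f : ℝ → ℝ} (hf : Continuous f) (x : ℝ) :
    Tendsto (fun e => smooth e f x) (𝓝[>] 0) (𝓝 (f x)) := by
  rw [Metric.tendsto_nhds]
  intro δ hδ
  obtain ⟨r, hr, hr'⟩ := Metric.continuousAt_iff.1 (hf.continuousAt (x := x)) (δ / 2)
    (half_pos hδ)
  filter_upwards [Ioo_mem_nhdsGT (half_pos hr)] with e he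
  rw [Real.dist_eq]
  refine lt_of_le_of_lt (avg_close he.1 (continuous_avg hf) fun u hu => ?_) (half_lt_self hδ)
  refine avg_close he.1 hf fun u' hu' => ?_
  rw [← Real.dist_eq]
  refine (hr' ?_).le
  rw [Real.dist_eq, abs_lt]
  constructor <;> linarith [hu.1, hu.2, hu'.1, hu'.2, he.1, he.2]

lemma integral_Phi_mem {X : Type*} [MeasurableSpace X] {μ : Measure X} [IsProbabilityMeasure μ]
    {f : X → ℝ} {M : ℝ} (hf : AEStronglyMeasurable f μ) (hM : ∀ x, |f x| ≤ M) :
    Phi (-M) ≤ ∫ x, Phi (f x) ∂μ ∧ ∫ x, Phi (f x) ∂μ ≤ Phi M := by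
  have hi : Integrable (fun x => Phi (f x)) μ :=
    integrable_of_bdd (M := 1) (continuous_Phi.comp_aestronglyMeasurable hf) fun x => by
      rw [abs_of_pos (Phi_pos _)]
      exact (Phi_lt_one _).le
  constructor
  · have := integral_mono (μ := μ) (integrable_const (Phi (-M))) hi
      fun x => Phi_strictMono.monotone (abs_le.1 (hM x)).1
    simpa using this
  · have := integral_mono (μ := μ) hi (integrable_const (Phi M))
      fun x => Phi_strictMono.monotone (abs_le.1 (hM x)).2
    simpa using this

lemma integral_Phi_pos {X : Type*} [MeasurableSpace X] {μ : Measure X} [IsProbabilityMeasure μ]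
    {f : X → ℝ} {M : ℝ} (hf : AEStronglyMeasurable f μ) (hM : ∀ x, |f x| ≤ M) :
    0 < ∫ x, Phi (f x) ∂μ := (Phi_pos _).trans_le (integral_Phi_mem hf hM).1

lemma integral_Phi_lt_one {X : Type*} [MeasurableSpace X] {μ : Measure X} [IsProbabilityMeasure μ]
    {f : X → ℝ} {M : ℝ} (hf : AEStronglyMeasurable f μ) (hM : ∀ x, |f x| ≤ M) :
    ∫ x, Phi (f x) ∂μ < 1 := (integral_Phi_mem hf hM).2.trans_lt (Phi_lt_one _)

/-- Both sides of the inequality for smooth functions pass to the limit of vanishing windows. -/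
lemma tendsto_Psi_smooth {f : ℝ → ℝ} {M : ℝ} (hf : Continuous f) (hM : ∀ x, |f x| ≤ M) :
    Tendsto (fun e => Psi (∫ z, Phi (smooth e f z) ∂gam)) (𝓝[>] 0)
      (𝓝 (Psi (∫ z, Phi (f z) ∂gam))) := by
  refine (continuousAt_Psi (integral_Phi_pos hf.aestronglyMeasurable hM)
    (integral_Phi_lt_one hf.aestronglyMeasurable hM)).tendsto.comp ?_
  refine tendsto_integral_filter_of_dominated_convergence (fun _ => 1) ?_ ?_
    (integrable_const 1) (Eventually.of_forall fun z => ?_)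
  · exact Eventually.of_forall fun e => (continuous_Phi.comp
      (continuous_avg (continuous_avg hf))).aestronglyMeasurable
  · refine Eventually.of_forall fun e => Eventually.of_forall fun z => ?_
    rw [Real.norm_eq_abs, abs_of_pos (Phi_pos _)]
    exact (Phi_lt_one _).le
  · exact (continuous_Phi.tendsto _).comp (tendsto_smooth hf z)

lemma smooth_mid {e : ℝ} (he : 0 < e) {a b c : ℝ → ℝ} (ha : Continuous a) (hb : Continuous b)
    (hc : Continuous c) (h : ∀ s t, a s + b t ≤ 2 * c ((s + t) / 2)) (s t : ℝ) :
    smooth e a s + smooth e b t ≤ 2 * smooth e c ((s + t) / 2) := by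
  have key : ∀ a b c : ℝ → ℝ, Continuous a → Continuous b → Continuous c →
      (∀ s t, a s + b t ≤ 2 * c ((s + t) / 2)) →
      ∀ s t, avg e a s + avg e b t ≤ 2 * avg e c ((s + t) / 2) := by
    intro a b c ha hb hc h s t
    have h1 : avg e a s + avg e b t = avg e (fun u => a (s + u) + b (t + u)) 0 := by
      simp only [avg, zero_add]
      rw [intervalIntegral.integral_add, mul_add]
      · exact (by fun_prop : Continuous fun u => a (s + u)).intervalIntegrable _ _
      · exact (by fun_prop : Continuous fun u => b (t + u)).intervalIntegrable _ _
    have h2 : 2 * avg e c ((s + t) / 2) = avg e (fun u => 2 * c ((s + t) / 2 + u)) 0 := by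
      simp only [avg, zero_add]
      rw [intervalIntegral.integral_const_mul]
      ring
    rw [h1, h2]
    refine avg_le_avg he (by fun_prop) (by fun_prop) fun u => ?_
    have := h (s + (0 + u)) (t + (0 + u))
    refine this.trans (le_of_eq ?_)
    congr 2
    ring
  exact key _ _ _ (continuous_avg ha) (continuous_avg hb) (continuous_avg hc)
    (key _ _ _ ha hb hc h) s t

/-- The functional Ehrhard inequality on the line, for bounded continuous functions. -/
lemma ehrhard_line {a b c : ℝ → ℝ} {M : ℝ} (ha : Continuous a) (hb : Continuous b)
    (hc : Continuous c) (hMa : ∀ x, |a x| ≤ M) (hMb : ∀ x, |b x| ≤ M) (hMc : ∀ x, |c x| ≤ M)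
    (h : ∀ s t, a s + b t ≤ 2 * c ((s + t) / 2)) :
    Psi (∫ z, Phi (a z) ∂gam) + Psi (∫ z, Phi (b z) ∂gam) ≤ 2 * Psi (∫ z, Phi (c z) ∂gam) := by
  refine le_of_tendsto_of_tendsto ((tendsto_Psi_smooth ha hMa).add (tendsto_Psi_smooth hb hMb))
    ((tendsto_Psi_smooth hc hMc).const_mul 2) ?_
  filter_upwards [self_mem_nhdsWithin] with e he
  exact ehrhard_C2b (smooth_C2b he ha hMa) (smooth_C2b he hb hMb) (smooth_C2b he hc hMc)
    (smooth_mid he ha hb hc h)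

/-! ### Tensorization -/

/-- The functional Ehrhard inequality at the midpoint, as a property of a measure: if
`a x + b y ≤ 2 c ((x + y) / 2)` then the same inequality holds between the numbers
`Psi (∫ Phi ∘ a)`, `Psi (∫ Phi ∘ b)`, `Psi (∫ Phi ∘ c)`. -/
def Ehr {E : Type*} [AddCommGroup E] [Module ℝ E] [TopologicalSpace E] [MeasurableSpace E]
    (μ : Measure E) : Prop :=
  ∀ (a b c : E → ℝ) (M : ℝ), Continuous a → Continuous b → Continuous c →
    (∀ x, |a x| ≤ M) → (∀ x, |b x| ≤ M) → (∀ x, |c x| ≤ M) →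
    (∀ x y, a x + b y ≤ 2 * c ((1 / 2 : ℝ) • (x + y))) →
    Psi (∫ x, Phi (a x) ∂μ) + Psi (∫ x, Phi (b x) ∂μ) ≤ 2 * Psi (∫ x, Phi (c x) ∂μ)

lemma ehr_gam : Ehr gam := fun a b c M ha hb hc hMa hMb hMc h =>
  ehrhard_line ha hb hc hMa hMb hMc fun s t => by
    have := h s t
    rwa [smul_eq_mul, one_div, inv_mul_eq_div] at this

/-- Partial integration keeps functions continuous, so that it stays in the class of admissible
functions of the functional inequality. -/
lemma continuous_partial {E F : Type*} [TopologicalSpace E] [MeasurableSpace E]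
    [TopologicalSpace F] {μ : Measure E} [IsProbabilityMeasure μ] [FirstCountableTopology F]
    [OpensMeasurableSpace E] {a : E × F → ℝ} {M : ℝ} (ha : Continuous a) (hM : ∀ p, |a p| ≤ M) :
    Continuous fun y => Psi (∫ x, Phi (a (x, y)) ∂μ) := by
  have hP := continuous_Phi
  have h1 : Continuous fun y => ∫ x, Phi (a (x, y)) ∂μ := by
    refine continuous_of_dominated (bound := fun _ => 1) (fun y => ?_)
      (fun y => Eventually.of_forall fun x => ?_) (integrable_const _)
      (Eventually.of_forall fun x => by fun_prop)
    · exact (by fun_prop : Continuous fun x => Phi (a (x, y))).aestronglyMeasurable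
    · rw [Real.norm_eq_abs, abs_of_pos (Phi_pos _)]
      exact (Phi_lt_one _).le
  rw [continuous_iff_continuousAt]
  intro y
  have hm : AEStronglyMeasurable (fun x => a (x, y)) μ :=
    (by fun_prop : Continuous fun x => a (x, y)).aestronglyMeasurable
  exact ContinuousAt.comp (g := Psi) (continuousAt_Psi (integral_Phi_pos hm fun _ => hM _)
    (integral_Phi_lt_one hm fun _ => hM _)) h1.continuousAt

section

variable {E F : Type*} [AddCommGroup E] [Module ℝ E] [TopologicalSpace E] [MeasurableSpace E]
  [AddCommGroup F] [Module ℝ F] [TopologicalSpace F] [MeasurableSpace F]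

lemma Ehr.map {μ : Measure E} {ν : Measure F} (h : Ehr μ) (f : E →ₗ[ℝ] F) (hf : Continuous f)
    (hm : MeasurePreserving f μ ν) [OpensMeasurableSpace F] : Ehr ν := by
  intro a b c M ha hb hc hMa hMb hMc hmid
  have hP := continuous_Phi
  have e : ∀ g : F → ℝ, Continuous g → ∫ y, Phi (g y) ∂ν = ∫ x, Phi (g (f x)) ∂μ := by
    intro g hg
    rw [← hm.map_eq, integral_map hm.measurable.aemeasurable]
    exact (by fun_prop : Continuous fun y => Phi (g y)).aestronglyMeasurable
  rw [e a ha, e b hb, e c hc]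
  refine h _ _ _ M (ha.comp hf) (hb.comp hf) (hc.comp hf) (fun _ => hMa _) (fun _ => hMb _)
    (fun _ => hMc _) fun x y => ?_
  simpa using hmid (f x) (f y)

/-- Tensorization: the inequality on the fibers produces an admissible triple on the base. -/
lemma Ehr.prod {μ : Measure E} {ν : Measure F} [IsProbabilityMeasure μ] [IsProbabilityMeasure ν]
    [FirstCountableTopology F] [OpensMeasurableSpace E] [OpensMeasurableSpace (E × F)]
    (hμ : Ehr μ) (hν : Ehr ν) : Ehr (μ.prod ν) := by
  intro a b c M ha hb hc hMa hMb hMc h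
  have hP := continuous_Phi
  have sec : ∀ g : E × F → ℝ, Continuous g → ∀ y, AEStronglyMeasurable (fun x => g (x, y)) μ :=
    fun g hg y => (by fun_prop : Continuous fun x => g (x, y)).aestronglyMeasurable
  have e : ∀ g : E × F → ℝ, Continuous g → (∀ p, |g p| ≤ M) → ∫ p, Phi (g p) ∂μ.prod ν =
      ∫ y, Phi (Psi (∫ x, Phi (g (x, y)) ∂μ)) ∂ν := by
    intro g hg hM
    rw [integral_prod_symm]
    · congr 1
      funext y
      rw [Phi_Psi (integral_Phi_pos (sec g hg y) fun _ => hM _)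
        (integral_Phi_lt_one (sec g hg y) fun _ => hM _)]
    · refine integrable_of_bdd (M := 1)
        (by fun_prop : Continuous fun p => Phi (g p)).aestronglyMeasurable fun p => ?_
      rw [abs_of_pos (Phi_pos _)]
      exact (Phi_lt_one _).le
  have bd : ∀ g : E × F → ℝ, Continuous g → (∀ p, |g p| ≤ M) → ∀ y,
      |Psi (∫ x, Phi (g (x, y)) ∂μ)| ≤ M := by
    intro g hg hM y
    have h1 := integral_Phi_mem (sec g hg y) fun x => hM (x, y)
    have h0 := integral_Phi_pos (sec g hg y) fun x => hM (x, y)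
    have h2 := integral_Phi_lt_one (sec g hg y) fun x => hM (x, y)
    rw [abs_le]
    constructor <;> rw [← Phi_strictMono.le_iff_le, Phi_Psi h0 h2]
    exacts [h1.1, h1.2]
  rw [e a ha hMa, e b hb hMb, e c hc hMc]
  refine hν _ _ _ M (continuous_partial ha hMa) (continuous_partial hb hMb)
    (continuous_partial hc hMc) (bd a ha hMa) (bd b hb hMb) (bd c hc hMc) fun y y' => ?_
  refine hμ _ _ _ M (by fun_prop) (by fun_prop) (by fun_prop) (fun _ => hMa _) (fun _ => hMb _)
    (fun _ => hMc _) fun x x' => ?_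
  exact h (x, y) (x', y')

end

/-- The standard Gaussian measure in coordinates. -/
noncomputable abbrev gamPi (n : ℕ) : Measure (Fin n → ℝ) := Measure.pi fun _ => gam

/-- `(x, y) ↦ Fin.cons x y`, as a linear map. -/
def consL (n : ℕ) : ℝ × (Fin n → ℝ) →ₗ[ℝ] (Fin (n + 1) → ℝ) where
  toFun p := Fin.cons p.1 p.2
  map_add' p q := by
    funext i
    refine Fin.cases ?_ (fun j => ?_) i <;> simp
  map_smul' r p := by
    funext i
    refine Fin.cases ?_ (fun j => ?_) i <;> simp

lemma continuous_consL (n : ℕ) : Continuous (consL n) := by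
  refine continuous_pi fun i => ?_
  refine Fin.cases ?_ (fun j => ?_) i
  · simpa [consL] using continuous_fst
  · have : Continuous fun p : ℝ × (Fin n → ℝ) => p.2 j := by fun_prop
    simpa [consL] using this

lemma measurePreserving_consL (n : ℕ) :
    MeasurePreserving (consL n) (gam.prod (gamPi n)) (gamPi (n + 1)) := by
  have h := (measurePreserving_piFinSuccAbove (fun _ : Fin (n + 1) => gam) 0).symm
  convert h using 1
  funext p
  simp [consL, MeasurableEquiv.piFinSuccAbove, Fin.insertNthEquiv]

lemma ehr_gamPi (n : ℕ) : Ehr (gamPi n) := by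
  induction n with
  | zero =>
    intro a b c M ha hb hc hMa hMb hMc h
    have e : ∀ g : (Fin 0 → ℝ) → ℝ, Psi (∫ x, Phi (g x) ∂gamPi 0) = g 0 := by
      intro g
      have : ∀ x, g x = g 0 := fun x => congrArg g (Subsingleton.elim _ _)
      simp [this, Psi_Phi]
    rw [e, e, e]
    refine (h 0 0).trans_eq ?_
    simp
  | succ n ih => exact (ehr_gam.prod ih).map _ (continuous_consL n) (measurePreserving_consL n)

/-! ### Sets of complementary measure -/

lemma mem_cthickening_iff_infDist {E : Type*} [PseudoMetricSpace E] {C : Set E}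
    (hC : C.Nonempty) {δ : ℝ} (hδ : 0 ≤ δ) {x : E} :
    x ∈ Metric.cthickening δ C ↔ Metric.infDist x C ≤ δ := by
  rw [Metric.mem_cthickening_iff, Metric.infDist,
    ENNReal.le_ofReal_iff_toReal_le (Metric.infEDist_ne_top hC) hδ]

lemma tendsto_real_cthickening {E : Type*} [PseudoMetricSpace E] [MeasurableSpace E]
    [BorelSpace E] {μ : Measure E} [IsProbabilityMeasure μ] {C : Set E} (hC : IsClosed C) :
    Tendsto (fun δ => μ.real (Metric.cthickening δ C)) (𝓝[>] 0) (𝓝 (μ.real C)) := by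
  have h := tendsto_measure_cthickening_of_isClosed (μ := μ) (s := C)
    ⟨1, one_pos, measure_ne_top _ _⟩ hC
  exact ((ENNReal.tendsto_toReal (measure_ne_top _ _)).comp h).mono_left nhdsWithin_le_nhds

section

variable {E : Type*} [NormedAddCommGroup E] [NormedSpace ℝ E]

lemma infDist_mid {A B C : Set E} (hA : A.Nonempty) (hB : B.Nonempty)
    (h : ∀ x ∈ A, ∀ y ∈ B, (1 / 2 : ℝ) • (x + y) ∈ C) (x y : E) :
    2 * Metric.infDist ((1 / 2 : ℝ) • (x + y)) C ≤ Metric.infDist x A + Metric.infDist y B := by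
  refine le_of_forall_pos_lt_add fun ε hε => ?_
  obtain ⟨x', hx', hxx⟩ := (Metric.infDist_lt_iff hA).1
    (show Metric.infDist x A < Metric.infDist x A + ε / 2 by linarith)
  obtain ⟨y', hy', hyy⟩ := (Metric.infDist_lt_iff hB).1
    (show Metric.infDist y B < Metric.infDist y B + ε / 2 by linarith)
  have h1 := Metric.infDist_le_dist_of_mem (x := (1 / 2 : ℝ) • (x + y)) (h x' hx' y' hy')
  rw [dist_smul₀, Real.norm_eq_abs, abs_of_pos (by norm_num)] at h1
  have h2 := dist_add_add_le x y x' y'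
  linarith

variable [MeasurableSpace E] [BorelSpace E] {μ : Measure E} [IsProbabilityMeasure μ]

/-- Ehrhard's inequality for sets of total mass more than `1`. The functions `ρ - k * infDist x S`,
truncated below at `-3ρ` for `S = A, B` and at `-ρ` for `S = C`, are admissible in the functional
form; composed with `Phi`, they approach the indicators of the sets as `ρ` and `k` grow. -/
lemma half_le_of_one_lt (hμ : Ehr μ) {A B C : Set E} (hA : MeasurableSet A) (hB : MeasurableSet B)
    (hC : IsClosed C) (h : ∀ x ∈ A, ∀ y ∈ B, (1 / 2 : ℝ) • (x + y) ∈ C)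
    (hsum : 1 < μ.real A + μ.real B) : 1 / 2 ≤ μ.real C := by
  have hAn : A.Nonempty := by
    rw [nonempty_iff_ne_empty]
    rintro rfl
    have := measureReal_le_one (μ := μ) (s := B)
    simp at hsum
    linarith
  have hBn : B.Nonempty := by
    rw [nonempty_iff_ne_empty]
    rintro rfl
    have := measureReal_le_one (μ := μ) (s := A)
    simp at hsum
    linarith
  have hCn : C.Nonempty := ⟨_, h _ hAn.some_mem _ hBn.some_mem⟩
  have hP := continuous_Phi
  have hint : ∀ f : E → ℝ, Continuous f → Integrable (fun x => Phi (f x)) μ := fun f hf =>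
    integrable_of_bdd (M := 1) (by fun_prop : Continuous fun x => Phi (f x)).aestronglyMeasurable
      fun x => by
        rw [abs_of_pos (Phi_pos _)]
        exact (Phi_lt_one _).le
  -- `δ` is the width of the transition zone and `ρ` the height of the truncation
  have step : ∀ δ > 0, ∀ ρ > 0, 1 < Phi ρ * (μ.real A + μ.real B) →
      1 / 2 ≤ μ.real (Metric.cthickening δ C) + Phi (-ρ) := by
    intro δ hδ ρ hρ hbig
    -- with this slope the function attached to `C` falls from `ρ` to `-ρ` at distance `δ`
    set k := 2 * ρ / δ with hk
    have hk0 : 0 < k := by positivity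
    have hcont : ∀ (S : Set E) (m : ℝ), Continuous fun x => max (ρ - k * Metric.infDist x S) m :=
      fun S m => (continuous_const.sub
        (continuous_const.mul (Metric.continuous_infDist_pt S))).max continuous_const
    have hbd : ∀ (S : Set E) (m : ℝ), -(3 * ρ) ≤ m → m ≤ 0 → ∀ x,
        |max (ρ - k * Metric.infDist x S) m| ≤ 3 * ρ := by
      intro S m hm hm0 x
      have : 0 ≤ k * Metric.infDist x S := mul_nonneg hk0.le Metric.infDist_nonneg
      rw [abs_le]
      exact ⟨hm.trans (le_max_right _ _), max_le (by linarith) (by linarith)⟩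
    have hlow : ∀ S : Set E, MeasurableSet S →
        Phi ρ * μ.real S ≤ ∫ x, Phi (max (ρ - k * Metric.infDist x S) (-(3 * ρ))) ∂μ := by
      intro S hS
      have h1 : ∫ x, S.indicator (fun _ => Phi ρ) x ∂μ = Phi ρ * μ.real S := by
        rw [integral_indicator_const _ hS, smul_eq_mul, mul_comm]
      rw [← h1]
      refine integral_mono ((integrable_const _).indicator hS) (hint _ (hcont S _)) fun x => ?_
      by_cases hx : x ∈ S
      · simp only [indicator_of_mem hx, Metric.infDist_zero_of_mem hx, mul_zero, sub_zero]
        exact Phi_strictMono.monotone (le_max_left _ _)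
      · simp only [indicator_of_notMem hx]
        exact (Phi_pos _).le
    have hE := hμ _ _ _ (3 * ρ) (hcont A (-(3 * ρ))) (hcont B (-(3 * ρ))) (hcont C (-ρ))
      (hbd A _ le_rfl (by linarith)) (hbd B _ le_rfl (by linarith))
      (hbd C _ (by linarith) (by linarith)) (fun x y => by
        have h1 := mul_le_mul_of_nonneg_left (infDist_mid hAn hBn h x y) hk0.le
        have h2 := mul_nonneg hk0.le (Metric.infDist_nonneg (x := x) (s := A))
        have h3 := mul_nonneg hk0.le (Metric.infDist_nonneg (x := y) (s := B))
        have h4 := le_max_left (ρ - k * Metric.infDist ((1 / 2 : ℝ) • (x + y)) C) (-ρ)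
        have h5 := le_max_right (ρ - k * Metric.infDist ((1 / 2 : ℝ) • (x + y)) C) (-ρ)
        rcases max_cases (ρ - k * Metric.infDist x A) (-(3 * ρ)) with h6 | h6 <;>
        rcases max_cases (ρ - k * Metric.infDist y B) (-(3 * ρ)) with h7 | h7 <;> linarith)
    set pa := ∫ x, Phi (max (ρ - k * Metric.infDist x A) (-(3 * ρ))) ∂μ
    set pb := ∫ x, Phi (max (ρ - k * Metric.infDist x B) (-(3 * ρ))) ∂μ
    set pc := ∫ x, Phi (max (ρ - k * Metric.infDist x C) (-ρ)) ∂μ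
    have hsum' : 1 < pa + pb := by linarith [hlow A hA, hlow B hB]
    have ha1 : pa < 1 := integral_Phi_lt_one (hcont A _).aestronglyMeasurable
      (hbd A _ le_rfl (by linarith))
    have hb0 : 0 < pb := integral_Phi_pos (hcont B _).aestronglyMeasurable
      (hbd B _ le_rfl (by linarith))
    have hb1 : pb < 1 := integral_Phi_lt_one (hcont B _).aestronglyMeasurable
      (hbd B _ le_rfl (by linarith))
    have hc0 : 0 < pc := integral_Phi_pos (hcont C _).aestronglyMeasurable
      (hbd C _ (by linarith) (by linarith))
    have hc1 : pc < 1 := integral_Phi_lt_one (hcont C _).aestronglyMeasurable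
      (hbd C _ (by linarith) (by linarith))
    have hPsi : -Psi pb ≤ Psi pa := by
      have : Psi (1 - pb) = -Psi pb := by
        rw [← Psi_Phi (-Psi pb), Phi_neg, Phi_Psi hb0 hb1]
      rw [← this]
      exact Psi_le_Psi (by linarith) (by linarith) ha1
    have hpc : 1 / 2 ≤ pc := by
      rw [← Phi_zero, ← Phi_Psi hc0 hc1]
      exact Phi_strictMono.monotone (by linarith)
    have hup : pc ≤ μ.real (Metric.cthickening δ C) + Phi (-ρ) := by
      have hm : MeasurableSet (Metric.cthickening δ C) := Metric.isClosed_cthickening.measurableSet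
      have h1 : ∫ x, ((Metric.cthickening δ C).indicator (fun _ => (1 : ℝ)) x + Phi (-ρ)) ∂μ =
          μ.real (Metric.cthickening δ C) + Phi (-ρ) := by
        rw [integral_add ((integrable_const _).indicator hm) (integrable_const _),
          integral_indicator_const _ hm]
        simp
      rw [← h1]
      refine integral_mono (hint _ (hcont C _)) (((integrable_const _).indicator hm).add
        (integrable_const _)) fun x => ?_
      by_cases hx : x ∈ Metric.cthickening δ C
      · simp only [indicator_of_mem hx]
        linarith [Phi_lt_one (max (ρ - k * Metric.infDist x C) (-ρ)), Phi_pos (-ρ)]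
      · simp only [indicator_of_notMem hx, zero_add]
        rw [mem_cthickening_iff_infDist hCn hδ.le, not_le] at hx
        have : 2 * ρ ≤ k * Metric.infDist x C := by
          calc 2 * ρ = k * δ := by rw [hk]; field_simp
            _ ≤ _ := mul_le_mul_of_nonneg_left hx.le hk0.le
        rw [max_eq_right (by linarith)]
    linarith
  have step2 : ∀ δ > 0, 1 / 2 ≤ μ.real (Metric.cthickening δ C) := by
    intro δ hδ
    have h1 : Tendsto (fun ρ => Phi ρ * (μ.real A + μ.real B)) atTop
        (𝓝 (1 * (μ.real A + μ.real B))) := tendsto_Phi_atTop.mul_const _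
    have h2 : Tendsto (fun ρ => μ.real (Metric.cthickening δ C) + Phi (-ρ)) atTop
        (𝓝 (μ.real (Metric.cthickening δ C) + 0)) :=
      (tendsto_Phi_atBot.comp tendsto_neg_atTop_atBot).const_add _
    rw [add_zero] at h2
    refine ge_of_tendsto h2 ?_
    filter_upwards [h1.eventually_const_lt (show 1 < 1 * (μ.real A + μ.real B) by linarith),
      eventually_gt_atTop 0] with ρ h3 h4
    exact step δ hδ ρ h4 h3
  refine ge_of_tendsto (tendsto_real_cthickening hC) ?_
  filter_upwards [self_mem_nhdsWithin] with δ hδ using step2 δ hδ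

/-- A closed set of intermediate measure gains measure when it is fattened. -/
lemma lt_real_cthickening [μ.IsOpenPosMeasure] {A : Set E} (hA : IsClosed A)
    (h0 : 0 < μ.real A) (h1 : μ.real A < 1) {ε : ℝ} (hε : 0 < ε) :
    μ.real A < μ.real (Metric.cthickening ε A) := by
  have hne : A.Nonempty := by
    rw [nonempty_iff_ne_empty]
    rintro rfl
    simp at h0
  have huniv : A ≠ univ := by
    rintro rfl
    simp at h1
  obtain ⟨x, hx⟩ := nonempty_frontier_iff.2 ⟨hne, huniv⟩
  have hxA : x ∈ A := hA.frontier_subset hx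
  have hxc : x ∈ closure Aᶜ := frontier_subset_closure (by rwa [frontier_compl])
  have hopen : IsOpen (Metric.ball x ε ∩ Aᶜ) := Metric.isOpen_ball.inter hA.isOpen_compl
  have hnon : (Metric.ball x ε ∩ Aᶜ).Nonempty :=
    mem_closure_iff.1 hxc _ Metric.isOpen_ball (Metric.mem_ball_self hε)
  have hpos : 0 < μ.real (Metric.ball x ε ∩ Aᶜ) :=
    ENNReal.toReal_pos (hopen.measure_pos μ hnon).ne' (measure_ne_top _ _)
  have hdisj : Disjoint A (Metric.ball x ε ∩ Aᶜ) :=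
    disjoint_left.2 fun y hy hy' => hy'.2 hy
  have hsub : A ∪ (Metric.ball x ε ∩ Aᶜ) ⊆ Metric.cthickening ε A := by
    refine union_subset (Metric.self_subset_cthickening A) fun y hy => ?_
    exact Metric.mem_cthickening_of_dist_le y x ε A hxA (Metric.mem_ball.1 hy.1).le
  have := measureReal_mono (μ := μ) hsub
  rw [measureReal_union hdisj hopen.measurableSet] at this
  linarith

/-- The previous inequality at the boundary value `1` of the total mass, reached by fattening `A`
and `C`. The sets `A` and `B` must have positive measure: the empty set and the whole space violate
the conclusion. -/
lemma half_le_of_one_le [μ.IsOpenPosMeasure] (hμ : Ehr μ) {A B C : Set E} (hA : IsClosed A)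
    (hB : IsClosed B) (hC : IsClosed C) (h : ∀ x ∈ A, ∀ y ∈ B, (1 / 2 : ℝ) • (x + y) ∈ C)
    (hA0 : 0 < μ.real A) (hB0 : 0 < μ.real B) (hsum : 1 ≤ μ.real A + μ.real B) :
    1 / 2 ≤ μ.real C := by
  rcases (measureReal_le_one (μ := μ) (s := A)).eq_or_lt with h1 | h1
  · exact half_le_of_one_lt hμ hA.measurableSet hB.measurableSet hC h (by linarith)
  have hAn : A.Nonempty := by
    rw [nonempty_iff_ne_empty]
    rintro rfl
    simp at hA0
  have hBn : B.Nonempty := by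
    rw [nonempty_iff_ne_empty]
    rintro rfl
    simp at hB0
  have hCn : C.Nonempty := ⟨_, h _ hAn.some_mem _ hBn.some_mem⟩
  refine ge_of_tendsto (tendsto_real_cthickening hC) ?_
  filter_upwards [self_mem_nhdsWithin] with δ hδ
  rw [mem_Ioi] at hδ
  refine half_le_of_one_lt hμ (Metric.isClosed_cthickening (δ := δ) (E := A)).measurableSet
    hB.measurableSet Metric.isClosed_cthickening (fun x hx y hy => ?_)
    (hsum.trans_lt (by linarith [lt_real_cthickening hA hA0 h1 hδ]))
  rw [mem_cthickening_iff_infDist hAn hδ.le] at hx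
  rw [mem_cthickening_iff_infDist hCn hδ.le]
  have := infDist_mid hAn hBn h x y
  rw [Metric.infDist_zero_of_mem hy] at this
  linarith

end

instance : Measure.IsOpenPosMeasure gam :=
  (gaussianReal_absolutelyContinuous' 0 one_ne_zero).isOpenPosMeasure

/-! ### Heavy fibers -/

/-- Closed under midpoints. For closed sets this is convexity; it is the form in which convexity
is inherited by the sets of base points with heavy fibers. -/
def MidClosed {E : Type*} [AddCommGroup E] [Module ℝ E] (V : Set E) : Prop :=
  ∀ x ∈ V, ∀ y ∈ V, (1 / 2 : ℝ) • (x + y) ∈ V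

/-- The horizontal section of `V` at height `y`. -/
def fiber {F : Type*} (V : Set (ℝ × F)) (y : F) : Set ℝ := {x | (x, y) ∈ V}

/-- Pairing `t` with `1 - t` bounds the integral by `1 / 2`; the inequality is strict because `g` is
below `1 / 2` on the whole interval `[s, 1 - s]`. -/
lemma half_of_layers {g : ℝ → ℝ} (hg : Antitone g)
    (hsym : ∀ t ∈ Ioo (0 : ℝ) 1, g t + g (1 - t) ≤ 1)
    {s : ℝ} (hs0 : 0 < s) (hs1 : s < 1 / 2) (hs : g s < 1 / 2) :
    ∫ t in (0 : ℝ)..1, g t < 1 / 2 := by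
  have hi : ∀ a b, IntervalIntegrable g volume a b := fun a b => hg.intervalIntegrable
  have hg' : Monotone fun t => g (1 - t) := fun a b hab => hg (by linarith)
  have hi' : ∀ a b, IntervalIntegrable (fun t => g (1 - t)) volume a b :=
    fun a b => hg'.intervalIntegrable
  have hsplit : ∫ t in (0 : ℝ)..1, g t =
      (∫ t in (0 : ℝ)..s, (g t + g (1 - t))) + ∫ t in s..(1 - s), g t := by
    rw [intervalIntegral.integral_add (hi _ _) (hi' _ _),
      intervalIntegral.integral_comp_sub_left (fun t => g t) 1, sub_zero,
      ← intervalIntegral.integral_add_adjacent_intervals (hi 0 s) (hi s 1),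
      ← intervalIntegral.integral_add_adjacent_intervals (hi s (1 - s)) (hi (1 - s) 1)]
    ring
  have h1 : ∫ t in (0 : ℝ)..s, (g t + g (1 - t)) ≤ ∫ _ in (0 : ℝ)..s, (1 : ℝ) :=
    intervalIntegral.integral_mono_on_of_le_Ioo hs0.le ((hi _ _).add (hi' _ _))
      (continuous_const.intervalIntegrable _ _) fun t ht => hsym t ⟨ht.1, by linarith [ht.2]⟩
  have h2 : ∫ t in s..(1 - s), g t ≤ ∫ _ in s..(1 - s), g s :=
    intervalIntegral.integral_mono_on (by linarith) (hi _ _)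
      (continuous_const.intervalIntegrable _ _) fun t ht => hg ht.1
  simp only [intervalIntegral.integral_const, smul_eq_mul, mul_one, sub_zero] at h1 h2
  rw [hsplit]
  nlinarith

lemma isClosed_fiber {F : Type*} [TopologicalSpace F] {V : Set (ℝ × F)}
    (hV : IsClosed V) (y : F) : IsClosed (fiber V y) :=
  hV.preimage (by fun_prop)

/-- Upper semicontinuity of the fiber measure of a closed set. -/
lemma isClosed_heavy {F : Type*} [NormedAddCommGroup F] {V : Set (ℝ × F)}
    (hV : IsClosed V) (p : ℝ) :
    IsClosed {y | p ≤ gam.real (fiber V y)} := by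
  refine IsSeqClosed.isClosed fun u y hu huy => ?_
  set S : ℕ → Set ℝ := fun m => ⋃ k, fiber V (u (m + k)) with hS
  have hmeas : ∀ m, MeasurableSet (S m) := fun m =>
    MeasurableSet.iUnion fun k => (isClosed_fiber hV _).measurableSet
  have hanti : Antitone S := by
    intro m m' hmm
    refine iUnion_subset fun k => ?_
    refine subset_iUnion_of_subset (m' - m + k) ?_
    rw [show m + (m' - m + k) = m' + k by omega]
  have hsub : ⋂ m, S m ⊆ fiber V y := by
    intro x hx
    have hfreq : ∃ᶠ k in atTop, (x, u k) ∈ V := by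
      rw [frequently_atTop]
      intro m
      obtain ⟨k, hk⟩ := mem_iUnion.1 (mem_iInter.1 hx m)
      exact ⟨m + k, by omega, hk⟩
    exact hV.mem_of_frequently_of_tendsto hfreq (tendsto_const_nhds.prodMk_nhds huy)
  have hlim := tendsto_measure_iInter_atTop (μ := gam) (fun m => (hmeas m).nullMeasurableSet)
    hanti ⟨0, measure_ne_top _ _⟩
  have hlim' : Tendsto (fun m => gam.real (S m)) atTop (𝓝 (gam.real (⋂ m, S m))) :=
    (ENNReal.tendsto_toReal (measure_ne_top _ _)).comp hlim
  have : p ≤ gam.real (⋂ m, S m) := ge_of_tendsto hlim' <| Eventually.of_forall fun m =>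
    (hu m).trans (measureReal_mono (subset_iUnion_of_subset 0 subset_rfl))
  exact this.trans (measureReal_mono hsub)

section

variable {F : Type*} [NormedAddCommGroup F] [NormedSpace ℝ F]

lemma fiber_mid {V : Set (ℝ × F)} (hV : MidClosed V) (y y' : F) :
    ∀ x ∈ fiber V y, ∀ x' ∈ fiber V y',
      (1 / 2 : ℝ) • (x + x') ∈ fiber V ((1 / 2 : ℝ) • (y + y')) :=
  fun _ hx _ hz => hV _ hx _ hz

/-- Fibers of measures at least `p` and `1 - p` have a midpoint fiber of measure at least `1 / 2`.
With `p = 1 / 2`, the set of base points with heavy fibers is midpoint-convex. -/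
lemma heavy_mid {V : Set (ℝ × F)} (hV : IsClosed V) (hm : MidClosed V) {p : ℝ} (hp0 : 0 < p)
    (hp1 : p < 1) {y y' : F} (hy : p ≤ gam.real (fiber V y))
    (hy' : 1 - p ≤ gam.real (fiber V y')) :
    1 / 2 ≤ gam.real (fiber V ((1 / 2 : ℝ) • (y + y'))) :=
  half_le_of_one_le ehr_gam (isClosed_fiber hV _) (isClosed_fiber hV _) (isClosed_fiber hV _)
    (fiber_mid hm y y') (by linarith) (by linarith) (by linarith)

variable [MeasurableSpace F] [BorelSpace F] [SecondCountableTopology F]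
  {ν : Measure F} [IsProbabilityMeasure ν]

/-- If `V` has measure at least `1 / 2`, then so has the set of base points whose fibers have
measure at least `1 / 2`. Otherwise the level sets `{q ≥ t}` and `{q ≥ 1 - t}` of the fiber measure
`q` have total mass at most `1`, and the layer-cake formula gives `∫ q < 1 / 2`. -/
lemma half_le_heavy (hν : Ehr ν) {V : Set (ℝ × F)} (hV : IsClosed V) (hm : MidClosed V)
    (h : 1 / 2 ≤ (gam.prod ν).real V) :
    1 / 2 ≤ ν.real {y | 1 / 2 ≤ gam.real (fiber V y)} := by
  by_contra! hlt
  set q : F → ℝ := fun y => gam.real (fiber V y) with hq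
  set g : ℝ → ℝ := fun t => ν.real {y | t ≤ q y} with hg
  have hclosed : ∀ t, IsClosed {y | t ≤ q y} := isClosed_heavy hV
  have hqm : Measurable q := (measurable_measure_prodMk_right hV.measurableSet).ennreal_toReal
  have hq0 : ∀ y, 0 ≤ q y := fun y => measureReal_nonneg
  have hq1 : ∀ y, q y ≤ 1 := fun y => measureReal_le_one
  have hqi : Integrable q ν := integrable_of_bdd (M := 1) hqm.aestronglyMeasurable fun y => by
    rw [abs_of_nonneg (hq0 y)]
    exact hq1 y
  have hanti : Antitone g := fun s t hst => measureReal_mono fun y hy => hst.trans hy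
  have hsym : ∀ t ∈ Ioo (0 : ℝ) 1, g t + g (1 - t) ≤ 1 := by
    intro t ht
    by_contra! hgt
    refine hlt.not_ge (half_le_of_one_lt hν (hclosed t).measurableSet
      (hclosed (1 - t)).measurableSet (hclosed (1 / 2)) (fun y hy z hz => ?_) hgt)
    exact heavy_mid hV hm ht.1 ht.2 hy hz
  -- continuity from above: the level sets decrease to the set of heavy base points
  obtain ⟨s, hs0, hs1, hs⟩ : ∃ s, 0 < s ∧ s < 1 / 2 ∧ g s < 1 / 2 := by
    set S : ℕ → Set F := fun m => {y | 1 / 2 - 1 / ((m : ℝ) + 3) ≤ q y} with hS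
    have hSanti : Antitone S := by
      intro m m' hmm y (hy : _ ≤ q y)
      refine le_trans (b := 1 / 2 - 1 / ((m' : ℝ) + 3)) ?_ hy
      have : (m : ℝ) ≤ m' := by exact_mod_cast hmm
      gcongr
    have hSI : ⋂ m, S m = {y | 1 / 2 ≤ q y} := by
      ext y
      rw [mem_iInter]
      constructor
      · intro hy
        have hl : Tendsto (fun m : ℕ => (1 / 2 : ℝ) - 1 / ((m : ℝ) + 3)) atTop (𝓝 (1 / 2 - 0)) := by
          refine tendsto_const_nhds.sub ?_
          have := (tendsto_one_div_add_atTop_nhds_zero_nat (𝕜 := ℝ)).comp (tendsto_add_atTop_nat 2)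
          refine this.congr fun m => ?_
          simp only [Function.comp]
          push_cast
          ring
        rw [sub_zero] at hl
        exact le_of_tendsto hl (Eventually.of_forall hy)
      · intro (hy : 1 / 2 ≤ q y) m
        refine le_trans (b := 1 / 2) ?_ hy
        have : 0 < 1 / ((m : ℝ) + 3) := by positivity
        linarith
    have hlim := tendsto_measure_iInter_atTop (μ := ν)
      (fun m => (hclosed _).measurableSet.nullMeasurableSet) hSanti ⟨0, measure_ne_top _ _⟩
    rw [hSI] at hlim
    have hlim' : Tendsto (fun m => ν.real (S m)) atTop (𝓝 (ν.real {y | 1 / 2 ≤ q y})) :=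
      (ENNReal.tendsto_toReal (measure_ne_top _ _)).comp hlim
    obtain ⟨m, hm⟩ := (hlim'.eventually_lt_const hlt).exists
    refine ⟨_, ?_, ?_, hm⟩
    · have : (1 : ℝ) / (m + 3) ≤ 1 / 3 := by
        gcongr
        linarith [(Nat.cast_nonneg m : (0 : ℝ) ≤ m)]
      linarith
    · have : 0 < 1 / ((m : ℝ) + 3) := by positivity
      linarith
  have hlayer : ∫ y, q y ∂ν = ∫ t in (0 : ℝ)..1, g t := by
    rw [intervalIntegral.integral_of_le zero_le_one]
    exact hqi.integral_eq_integral_Ioc_meas_le (Eventually.of_forall hq0) (Eventually.of_forall hq1)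
  have hfub : (gam.prod ν).real V = ∫ y, q y ∂ν := by
    rw [measureReal_def, Measure.prod_apply_symm hV.measurableSet, integral_eq_lintegral_of_nonneg_ae
      (Eventually.of_forall hq0) hqm.aestronglyMeasurable]
    congr 1
    refine lintegral_congr fun y => ?_
    rw [hq, ofReal_measureReal]
    rfl
  have := half_of_layers hanti hsym hs0 hs1 hs
  linarith

end

/-! ### Lattices in triangular coordinates -/

lemma gam_real_Icc {u v : ℝ} (h : u ≤ v) : gam.real (Icc u v) = Phi v - Phi u := by
  have := nullSingletonClass_gaussianReal (μ := 0) one_ne_zero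
  have h1 : gam.real (Icc u v) = gam.real (Ioc u v) :=
    measureReal_congr Ioc_ae_eq_Icc.symm
  have h2 : Iic v = Iic u ∪ Ioc u v := (Iic_union_Ioc_eq_Iic h).symm
  have h3 : gam.real (Iic v) = gam.real (Iic u) + gam.real (Ioc u v) := by
    rw [h2]
    exact measureReal_union (by
      rw [disjoint_left]
      intro x hx hx'
      exact absurd hx (not_le.2 hx'.1)) measurableSet_Ioc
  simp only [h1, Phi, cdf_eq_real]
  linarith

/-- Among intervals of length `θ`, the centered one has the largest Gaussian measure. -/
lemma Phi_add_sub_le {θ : ℝ} (hθ : 0 < θ) (u : ℝ) :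
    Phi (u + θ) - Phi u ≤ Phi (θ / 2) - Phi (-(θ / 2)) := by
  have hd : ∀ u, HasDerivAt (fun u => Phi (u + θ) - Phi u) (phi (u + θ) - phi u) u := fun u =>
    ((hasDerivAt_Phi (u + θ)).comp_add_const u θ).sub (hasDerivAt_Phi u)
  have hanti : AntitoneOn (fun u => Phi (u + θ) - Phi u) (Ici (-(θ / 2))) := by
    refine antitoneOn_of_deriv_nonpos (convex_Ici _)
      (fun x _ => (hd x).continuousAt.continuousWithinAt)
      (fun x _ => (hd x).differentiableAt.differentiableWithinAt) fun x hx => ?_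
    rw [interior_Ici, mem_Ioi] at hx
    rw [(hd x).deriv, phi_eq, phi_eq, sub_nonpos]
    refine mul_le_mul_of_nonneg_left (Real.exp_le_exp.2 ?_) (by positivity)
    nlinarith
  have key : ∀ u, -(θ / 2) ≤ u → Phi (u + θ) - Phi u ≤ Phi (θ / 2) - Phi (-(θ / 2)) := by
    intro u hu
    have := hanti (mem_Ici.2 le_rfl) (mem_Ici.2 hu) hu
    simp only at this
    rwa [show -(θ / 2) + θ = θ / 2 by ring] at this
  rcases le_total (-(θ / 2)) u with hu | hu
  · exact key u hu
  · have h1 := key (-θ - u) (by linarith)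
    rw [show -θ - u + θ = -u by ring, show -θ - u = -(u + θ) by ring, Phi_neg, Phi_neg] at h1
    linarith

/-- A closed midpoint-convex set of reals is order connected. -/
lemma MidClosed.ordConnected {S : Set ℝ} (hS : IsClosed S) (hm : MidClosed S) : S.OrdConnected := by
  refine ordConnected_iff.2 fun x hx y hy _ z hz => ?_
  by_contra hzS
  obtain ⟨u, ⟨huS, hu⟩, hu'⟩ := (isCompact_Icc.inter_left hS).exists_isGreatest
    (s := S ∩ Icc x z) ⟨x, hx, le_rfl, hz.1⟩
  obtain ⟨v, ⟨hvS, hv⟩, hv'⟩ := (isCompact_Icc.inter_left hS).exists_isLeast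
    (s := S ∩ Icc z y) ⟨y, hy, hz.2, le_rfl⟩
  have huz : u < z := lt_of_le_of_ne hu.2 fun h => hzS (h ▸ huS)
  have hzv : z < v := lt_of_le_of_ne hv.1 fun h => hzS (h ▸ hvS)
  have hw := hm u huS v hvS
  rw [smul_eq_mul] at hw
  rcases le_total (1 / 2 * (u + v)) z with h | h
  · have := hu' ⟨hw, by linarith [hu.1], h⟩
    linarith
  · have := hv' ⟨hw, h, by linarith [hv.2]⟩
    linarith

/-- The case of dimension one: a closed interval missing an arithmetic progression of step at most
`θ` is strictly shorter than `θ`, hence of measure less than `1 / 2`. -/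
lemma exists_int_of_half {θ : ℝ} (hθ : 0 < θ) (h2 : gam.real (Icc (-(θ / 2)) (θ / 2)) = 1 / 2)
    {S : Set ℝ} (hS : IsClosed S) (hm : MidClosed S) (hhalf : 1 / 2 ≤ gam.real S) {c : ℝ}
    (hc0 : c ≠ 0) (hc : |c| ≤ θ) (x : ℝ) : ∃ k : ℤ, x + k * c ∈ S := by
  wlog hpos : 0 < c generalizing c
  · obtain ⟨k, hk⟩ := this (c := -c) (neg_ne_zero.2 hc0) (by rwa [abs_neg])
      (by
        rcases lt_or_gt_of_ne hc0 with h | h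
        · linarith
        · exact absurd h hpos)
    refine ⟨-k, ?_⟩
    push_cast
    rwa [neg_mul, ← mul_neg]
  rw [abs_of_pos hpos] at hc
  by_contra! hno
  have hne : S.Nonempty := by
    rw [nonempty_iff_ne_empty]
    rintro rfl
    simp at hhalf
    linarith
  obtain ⟨p, hp⟩ := hne
  set k := ⌊(p - x) / c⌋ with hk
  have h3 : (k : ℝ) * c ≤ p - x := (le_div_iff₀ hpos).1 (Int.floor_le _)
  have h4 : p - x < (k + 1 : ℝ) * c := (div_lt_iff₀ hpos).1 (Int.lt_floor_add_one _)
  have hoc := MidClosed.ordConnected hS hm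
  have hsub : S ⊆ Ioo (x + k * c) (x + (k + 1) * c) := by
    intro y hy
    constructor
    · by_contra! h
      exact hno k (hoc.out hy hp ⟨h, by linarith⟩)
    · by_contra! h
      refine hno (k + 1) (hoc.out hp hy ⟨?_, ?_⟩) <;> push_cast <;> linarith
  have hcomp : IsCompact S := by
    rw [← inter_eq_left.2 (hsub.trans Ioo_subset_Icc_self)]
    exact isCompact_Icc.inter_left hS
  obtain ⟨u, hu, hu'⟩ := hcomp.exists_isLeast ⟨p, hp⟩
  obtain ⟨v, hv, hv'⟩ := hcomp.exists_isGreatest ⟨p, hp⟩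
  have huv : v < u + θ := by
    have := (hsub hu).1
    have := (hsub hv).2
    nlinarith
  have h5 : gam.real S ≤ gam.real (Icc u v) := measureReal_mono fun y hy => ⟨hu' hy, hv' hy⟩
  rw [gam_real_Icc (hu' hv)] at h5
  rw [gam_real_Icc (by linarith)] at h2
  have h6 := Phi_strictMono huv
  have h7 := Phi_add_sub_le hθ u
  linarith

/-- The theorem in triangular coordinates, by induction on the dimension: since `b 0` has no
component on the base, an integer combination of the tails of `b 1, …, b n` reaches a base point
with a heavy fiber, and then `b 0` moves along that fiber. -/
lemma exists_int_triangular {θ : ℝ} (hθ : 0 < θ)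
    (h2 : gam.real (Icc (-(θ / 2)) (θ / 2)) = 1 / 2) (n : ℕ) :
    ∀ (V : Set (Fin n → ℝ)), IsClosed V → MidClosed V → 1 / 2 ≤ (gamPi n).real V →
      ∀ b : Fin n → Fin n → ℝ, (∀ i j, i < j → b i j = 0) → (∀ i, b i i ≠ 0) →
      (∀ i, |b i i| ≤ θ) → ∀ a : Fin n → ℝ, ∃ k : Fin n → ℤ, a + ∑ i, (k i : ℝ) • b i ∈ V := by
  induction n with
  | zero =>
    intro V _ _ hhalf b _ _ _ a
    have hne : V.Nonempty := by
      rw [nonempty_iff_ne_empty]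
      rintro rfl
      simp at hhalf
      linarith
    obtain ⟨v, hv⟩ := hne
    refine ⟨0, ?_⟩
    rwa [Subsingleton.elim (a + _) v]
  | succ n ih =>
    intro V hV hm hhalf b htri hdiag hbθ a
    set V' := consL n ⁻¹' V with hV'
    have hV'c : IsClosed V' := hV.preimage (continuous_consL n)
    have hV'm : MidClosed V' := by
      intro x hx y hy
      have := hm _ hx _ hy
      rw [← map_add, ← map_smul] at this
      exact this
    have hV'h : 1 / 2 ≤ (gam.prod (gamPi n)).real V' := by
      rwa [(measurePreserving_consL n).measureReal_preimage hV.measurableSet.nullMeasurableSet]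
    set W := {y | 1 / 2 ≤ gam.real (fiber V' y)} with hW
    have hWm : MidClosed W := fun y hy y' hy' => heavy_mid hV'c hV'm (p := 1 / 2) (by norm_num)
      (by norm_num) hy (by norm_num; simpa [hW] using hy')
    obtain ⟨k, hk⟩ := ih W (isClosed_heavy hV'c _) hWm (half_le_heavy (ehr_gamPi n) hV'c hV'm hV'h)
      (fun i j => b i.succ j.succ) (fun i j hij => htri _ _ (Fin.succ_lt_succ_iff.2 hij))
      (fun i => hdiag _) (fun i => hbθ _) (fun j => a j.succ)
    set y := (fun j : Fin n => a j.succ) + ∑ i, (k i : ℝ) • fun j : Fin n => b i.succ j.succ with hy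
    have hfm : MidClosed (fiber V' y) := by
      have h3 := fiber_mid hV'm y y
      have h4 : (1 / 2 : ℝ) • (y + y) = y := by
        rw [← two_smul ℝ y, smul_smul]
        norm_num
      rwa [h4] at h3
    obtain ⟨k0, hk0⟩ := exists_int_of_half hθ h2 (isClosed_fiber hV'c y) hfm hk (hdiag 0) (hbθ 0)
      (a 0 + ∑ i : Fin n, (k i : ℝ) * b i.succ 0)
    refine ⟨Fin.cons k0 k, ?_⟩
    have hmem : consL n (a 0 + ∑ i : Fin n, (k i : ℝ) * b i.succ 0 + k0 * b 0 0, y) ∈ V := hk0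
    convert hmem using 1
    funext j
    rw [Fin.sum_univ_succ]
    refine Fin.cases ?_ (fun j => ?_) j
    · simp [consL, Finset.sum_apply]
      ring
    · simp [consL, hy, Finset.sum_apply, htri 0 j.succ (Fin.succ_pos j)]

/-! ### From the Euclidean Gaussian measure to Gram-Schmidt coordinates -/

lemma two_pi_rpow_neg_half : (2 * π) ^ (-(1 : ℝ) / 2) = (√(2 * π))⁻¹ := by
  rw [neg_div, Real.rpow_neg (by positivity), Real.sqrt_eq_rpow]

lemma gaussian1_eq_gam : gaussian1 = gam := by
  rw [gaussian1, gam, gaussianReal_of_var_ne_zero 0 one_ne_zero]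
  congr 1
  funext x
  rw [two_pi_rpow_neg_half, ← phi_eq]
  rfl

lemma density_eq_prod {n : ℕ} (x : EuclideanSpace ℝ (Fin n)) :
    (2 * π) ^ (-(n : ℝ) / 2) * Real.exp (-‖x‖ ^ 2 / 2) = ∏ i, phi (x i) := by
  simp only [phi_eq, Finset.prod_mul_distrib, Finset.prod_const, Finset.card_univ,
    Fintype.card_fin, ← Real.exp_sum]
  congr 1
  · rw [← two_pi_rpow_neg_half, ← Real.rpow_natCast, ← Real.rpow_mul (by positivity)]
    congr 1
    ring
  · rw [EuclideanSpace.real_norm_sq_eq, ← Finset.sum_div, Finset.sum_neg_distrib]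

lemma setLIntegral_prod_phi {n : ℕ} (s : Fin n → Set ℝ) (hs : ∀ i, MeasurableSet (s i)) :
    ∫⁻ y in univ.pi s, ENNReal.ofReal (∏ i, phi (y i)) = ∏ i, gam (s i) := by
  have h1 : ∀ y : Fin n → ℝ, (univ.pi s).indicator (fun y => ENNReal.ofReal (∏ i, phi (y i))) y =
      ENNReal.ofReal (∏ i, (s i).indicator phi (y i)) := by
    intro y
    by_cases hy : y ∈ univ.pi s
    · rw [indicator_of_mem hy]
      congr 1
      exact Finset.prod_congr rfl fun i _ => (indicator_of_mem (hy i (mem_univ i)) _).symm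
    · rw [indicator_of_notMem hy]
      simp only [Set.mem_pi, mem_univ, true_implies, not_forall] at hy
      obtain ⟨i, hi⟩ := hy
      rw [Finset.prod_eq_zero (Finset.mem_univ i) (indicator_of_notMem hi _), ENNReal.ofReal_zero]
  have h2 : ∀ i, Integrable ((s i).indicator phi) := fun i => integrable_phi.indicator (hs i)
  rw [← lintegral_indicator (MeasurableSet.univ_pi hs), lintegral_congr h1, volume_pi,
    ← ofReal_integral_eq_lintegral_ofReal (Integrable.fintype_prod h2)
      (ae_of_all _ fun y => Finset.prod_nonneg fun i _ =>
        indicator_nonneg (fun x _ => (phi_pos x).le) _),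
    integral_fintype_prod_eq_prod, ENNReal.ofReal_prod_of_nonneg fun i _ =>
      integral_nonneg fun x => indicator_nonneg (fun x _ => (phi_pos x).le) _]
  refine Finset.prod_congr rfl fun i _ => ?_
  rw [integral_indicator (hs i), gaussianReal_apply_eq_integral 0 one_ne_zero]
  rfl

lemma map_ofLp_stdGaussian (n : ℕ) :
    (_root_.stdGaussian n).map (WithLp.ofLp : EuclideanSpace ℝ (Fin n) → Fin n → ℝ) = gamPi n := by
  symm
  have hmp := PiLp.volume_preserving_ofLp (Fin n)
  refine Measure.pi_eq fun s hs => ?_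
  have hms := MeasurableSet.univ_pi hs
  rw [Measure.map_apply hmp.measurable hms, _root_.stdGaussian,
    withDensity_apply _ (hmp.measurable hms)]
  simp only [density_eq_prod]
  have hm : Measurable fun y : Fin n → ℝ => ENNReal.ofReal (∏ i, phi (y i)) :=
    (continuous_finsetProd _ fun i _ =>
      continuous_phi.comp (continuous_apply i)).measurable.ennreal_ofReal
  rw [← setLIntegral_prod_phi s hs, ← hmp.setLIntegral_comp_preimage hms hm]

/-- In any orthonormal basis, the coordinates of the standard Gaussian measure are independent
standard Gaussians. -/
lemma stdGaussian_eq_map {n : ℕ} (e : OrthonormalBasis (Fin n) ℝ (EuclideanSpace ℝ (Fin n))) :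
    _root_.stdGaussian n = (gamPi n).map fun x => ∑ i, x i • e i := by
  rw [← stdGaussian_eq_map_pi_orthonormalBasis, ← map_pi_eq_stdGaussian]
  change _ = (gamPi n).map _
  rw [← map_ofLp_stdGaussian, Measure.map_map (PiLp.volume_preserving_toLp (Fin n)).measurable
      (PiLp.volume_preserving_ofLp (Fin n)).measurable]
  exact Measure.map_id.symm

end LatticeEhrhard

theorem stmt_2 (n : ℕ) (θ : ℝ) (hθpos : 0 < θ)
    (hθ : gaussian1 (Set.Icc (-(θ / 2)) (θ / 2)) = 1 / 2)
    (V : Set (EuclideanSpace ℝ (Fin n))) (hVclosed : IsClosed V) (hVconv : Convex ℝ V)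
    (hV : stdGaussian n V ≥ 1 / 2)
    (b : Fin n → EuclideanSpace ℝ (Fin n)) (hb : LinearIndependent ℝ b)
    (hbθ : ∀ i, ‖b i‖ ≤ θ) (a : EuclideanSpace ℝ (Fin n)) :
    ∃ l ∈ AddSubgroup.closure (Set.range b), a + l ∈ V := by
  classical
  have hcard : Module.finrank ℝ (EuclideanSpace ℝ (Fin n)) = Fintype.card (Fin n) := by simp
  set e := InnerProductSpace.gramSchmidtOrthonormalBasis hcard b with he
  set T : (Fin n → ℝ) → EuclideanSpace ℝ (Fin n) := fun x => ∑ i, x i • e i with hT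
  have hTc : Continuous T := by fun_prop
  have hTrepr : ∀ v, T (fun j => inner ℝ (e j) v) = v := fun v => e.sum_repr' v
  have hTadd : ∀ x y, T (x + y) = T x + T y := fun x y => by
    simp [hT, add_smul, Finset.sum_add_distrib]
  have hTsmul : ∀ (c : ℝ) x, T (c • x) = c • T x := fun c x => by
    simp [hT, mul_smul, Finset.smul_sum]
  have h2 : LatticeEhrhard.gam.real (Set.Icc (-(θ / 2)) (θ / 2)) = 1 / 2 := by
    rw [measureReal_def, ← LatticeEhrhard.gaussian1_eq_gam, hθ]
    simp
  have hWm : LatticeEhrhard.MidClosed (T ⁻¹' V) := by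
    intro x hx y hy
    rw [Set.mem_preimage, hTsmul, hTadd, smul_add]
    exact hVconv hx hy (by norm_num) (by norm_num) (by norm_num)
  have hWh : 1 / 2 ≤ (LatticeEhrhard.gamPi n).real (T ⁻¹' V) := by
    rw [LatticeEhrhard.stdGaussian_eq_map e, Measure.map_apply hTc.measurable
      hVclosed.measurableSet] at hV
    have := ENNReal.toReal_mono (measure_ne_top _ _) hV
    simpa [measureReal_def] using this
  have hdet : ∏ i, inner ℝ (e i) (b i) ≠ 0 := by
    rw [← InnerProductSpace.gramSchmidtOrthonormalBasis_det hcard b]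
    exact ((e.toBasis.is_basis_iff_det).1
      ⟨hb, hb.span_eq_top_of_card_eq_finrank' hcard.symm⟩).ne_zero
  obtain ⟨k, hk⟩ := LatticeEhrhard.exists_int_triangular hθpos h2 n (T ⁻¹' V)
    (hVclosed.preimage hTc) hWm hWh (fun i j => inner ℝ (e j) (b i))
    (fun i j hij => InnerProductSpace.gramSchmidtOrthonormalBasis_inv_triangular hcard b hij)
    (fun i => Finset.prod_ne_zero_iff.1 hdet i (Finset.mem_univ i))
    (fun i => by
      have := abs_real_inner_le_norm (e i) (b i)
      rw [e.orthonormal.1 i, one_mul] at this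
      exact this.trans (hbθ i))
    (fun j => inner ℝ (e j) a)
  refine ⟨∑ i, k i • b i, sum_mem fun i _ =>
    zsmul_mem (AddSubgroup.subset_closure (Set.mem_range_self i)) _, ?_⟩
  have hsum : (fun j => inner ℝ (e j) a) + ∑ i, (k i : ℝ) • (fun j => inner ℝ (e j) (b i)) =
      fun j => inner ℝ (e j) (a + ∑ i, k i • b i) := by
    funext j
    simp [inner_add_right, inner_sum, ← Int.cast_smul_eq_zsmul ℝ, inner_smul_right]
  rw [hsum, Set.mem_preimage, hTrepr] at hk
  exact hk
end
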